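/- arXiv:1512.08708 — 5 statements merged into one kernel-verified Lean document; each statement's English description precedes it below -/
import Mathlib

section
/- For every finite abelian group G, there exists a natural number n ≥ 1 and an intermediate field K of the cyclotomic extension ℚ(ζₙ)/ℚ (where ζₙ is a primitive n-th root of unity) such that K/ℚ is a finite Galois extension and Gal(K/ℚ) is isomorphic to G. In particular, every finite abelian group occurs as a Galois group over ℚ. -/
theorem aux_cyclic_hom {C G : Type} [Group C] [IsCyclic C] [Finite C] [CommGroup G] (g : G)
    (h : orderOf g ∣ Nat.card C) : ∃ (f : C →* G) (c : C), f c = g := by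
  obtain ⟨c, hc⟩ := IsCyclic.exists_generator (α := C)
  have h' : orderOf g ∣ orderOf c := by rwa [orderOf_eq_card_of_forall_mem_zpowers hc]
  exact ⟨monoidHomOfForallMemZpowers hc h', c, monoidHomOfForallMemZpowers_apply_gen hc h'⟩

theorem aux_surj (G : Type) [CommGroup G] [Finite G] :
    ∃ (n : ℕ+) (f : (ZMod n)ˣ →* G), Function.Surjective f := by
  classical
  have : Fintype G := Fintype.ofFinite G
  have hinf : {p : ℕ | p.Prime ∧ p ≡ 1 [MOD Nat.card G]}.Infinite :=
    Nat.infinite_setOfPred_prime_modEq_one Nat.card_pos.ne'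
  let e : G → {p : ℕ | p.Prime ∧ p ≡ 1 [MOD Nat.card G]} :=
    fun g => hinf.natEmbedding _ ((Fintype.equivFin G g : Fin _) : ℕ)
  have he : Function.Injective e := fun a b hab => by
    have := (hinf.natEmbedding _).injective hab
    exact (Fintype.equivFin G).injective (Fin.ext this)
  let p : G → ℕ := fun g => (e g).1
  have hp : ∀ g, (p g).Prime := fun g => (e g).2.1
  have hm : ∀ g, p g ≡ 1 [MOD Nat.card G] := fun g => (e g).2.2
  have hcop : Pairwise (Function.onFun Nat.Coprime p) := fun a b hab =>
    (Nat.coprime_primes (hp a) (hp b)).2 fun h => hab (he (Subtype.ext h))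
  have key : ∀ g, ∃ (f : (ZMod (p g))ˣ →* G) (c : (ZMod (p g))ˣ), f c = g := fun g => by
    have : Fact (p g).Prime := ⟨hp g⟩
    apply aux_cyclic_hom
    rw [Nat.card_eq_fintype_card, ZMod.card_units]
    exact (orderOf_dvd_natCard g).trans ((Nat.modEq_iff_dvd' (hp g).one_le).1 (hm g).symm)
  choose f c hfc using key
  let F : (∀ g, (ZMod (p g))ˣ) →* G :=
    { toFun := fun x => ∏ g, f g (x g)
      map_one' := by simp
      map_mul' := fun x y => by simp [Finset.prod_mul_distrib] }
  let E : (ZMod (∏ g, p g))ˣ ≃* ∀ g, (ZMod (p g))ˣ :=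
    (Units.mapEquiv (ZMod.prodEquivPi p hcop).toMulEquiv).trans MulEquiv.piUnits
  refine ⟨⟨∏ g, p g, Finset.prod_pos fun g _ => (hp g).pos⟩, F.comp E.toMonoidHom, ?_⟩
  intro g
  refine ⟨E.symm (Pi.mulSingle g (c g)), ?_⟩
  change F (E (E.symm _)) = g
  rw [E.apply_symm_apply]
  change ∏ i, f i ((Pi.mulSingle g (c g) : ∀ g, (ZMod (p g))ˣ) i) = g
  rw [Finset.prod_eq_single g]
  · simp [hfc]
  · intro b _ hb
    simp [Pi.mulSingle_eq_of_ne hb]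
  · simp

/-- **Kronecker–Weber.** Every finite abelian group `G` occurs as the Galois group of a
subfield of a cyclotomic field `ℚ(ζₙ)`: there are `n ≥ 1` and an intermediate field `K`
of `ℚ(ζₙ)/ℚ` such that `K/ℚ` is finite Galois with `Gal(K/ℚ) ≃ G`. -/
theorem finite_abelian_group_occurs_as_galoisGroup_over_rat
    (G : Type) [CommGroup G] [Finite G] :
    ∃ (n : ℕ+) (K : IntermediateField ℚ (CyclotomicField n ℚ)),
      FiniteDimensional ℚ K ∧ IsGalois ℚ K ∧
        Nonempty ((K ≃ₐ[ℚ] K) ≃* G) := by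
  obtain ⟨n, f, hf⟩ := aux_surj G
  have : NeZero (n : ℕ) := ⟨n.ne_zero⟩
  have : NeZero ((n : ℕ) : ℚ) := ⟨by exact_mod_cast n.ne_zero⟩
  have : IsCyclotomicExtension {(n : ℕ)} ℚ (CyclotomicField n ℚ) :=
    CyclotomicField.isCyclotomicExtension n ℚ
  have : FiniteDimensional ℚ (CyclotomicField n ℚ) :=
    IsCyclotomicExtension.finiteDimensional {(n : ℕ)} ℚ _
  have : IsGalois ℚ (CyclotomicField n ℚ) := IsCyclotomicExtension.isGalois {(n : ℕ)} ℚ _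
  let φ : (CyclotomicField n ℚ ≃ₐ[ℚ] CyclotomicField n ℚ) →* G :=
    f.comp (IsCyclotomicExtension.Rat.galEquivZMod n (CyclotomicField n ℚ)).toMonoidHom
  have hφ : Function.Surjective φ :=
    hf.comp (IsCyclotomicExtension.Rat.galEquivZMod n (CyclotomicField n ℚ)).surjective
  refine ⟨n, IntermediateField.fixedField φ.ker, inferInstance, IsGalois.of_fixedField_normal_subgroup φ.ker, ⟨?_⟩⟩
  exact (IsGalois.normalAutEquivQuotient φ.ker).symm.trans
    (QuotientGroup.quotientKerEquivOfSurjective φ hφ)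
end

section
/- For every natural number n ≥ 1, the symmetric group Sₙ occurs as a Galois group over ℚ; that is, there exists a finite Galois extension M/ℚ with Gal(M/ℚ) isomorphic to the symmetric group on n letters. -/
open Polynomial NumberField

theorem iSup_inertia (K : Type) [Field K] [NumberField K] [IsGalois ℚ K] :
    ⨆ m : MaximalSpectrum (𝓞 K), m.asIdeal.inertia Gal(K/ℚ) = ⊤ := by
  set H : Subgroup Gal(K/ℚ) := ⨆ m : MaximalSpectrum (𝓞 K), m.asIdeal.inertia Gal(K/ℚ) with hH
  let E : IntermediateField ℚ K := FixedPoints.intermediateField H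
  have hE : Module.finrank ℚ E = 1 := by
    by_contra hne
    obtain ⟨P, hP, hun⟩ := NumberField.exists_not_isUnramifiedAt_int (K := E) (𝒪 := 𝓞 E) hne
    apply hun
    obtain ⟨Q, hQ, hQP⟩ := Ideal.exists_maximal_ideal_liesOver_of_isIntegral (S := 𝓞 K) P
    have hHE : IsGaloisGroup H E K := IsGaloisGroup.subgroup _ ℚ K H
    have hHO : IsGaloisGroup H (𝓞 E) (𝓞 K) :=
      IsGaloisGroup.of_isFractionRing H (𝓞 E) (𝓞 K) E K
    have hP0 : P ≠ ⊥ := Ideal.IsMaximal.ne_bot_of_isIntegral_int P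
    have hQ0 : Q ≠ ⊥ := Ideal.IsMaximal.ne_bot_of_isIntegral_int Q
    have : Finite (𝓞 E ⧸ P) := Ring.HasFiniteQuotients.finiteQuotient hP0
    let p := P.under ℤ
    have : p.IsMaximal := Ideal.IsMaximal.under ℤ P
    have hp0 : p ≠ ⊥ := fun h => hP0 (Ideal.eq_bot_of_comap_eq_bot h)
    have : Finite (ℤ ⧸ p) := Ring.HasFiniteQuotients.finiteQuotient hp0
    have : Q.LiesOver p := Ideal.LiesOver.trans Q P p
    have h1 := Ideal.card_inertia_eq_ramificationIdxIn (G := Gal(K/ℚ)) p Q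
    have h2 := Ideal.card_inertia_eq_ramificationIdxIn (G := H) P Q
    rw [Ideal.ramificationIdxIn_eq_ramificationIdx p Q Gal(K/ℚ)] at h1
    rw [Ideal.ramificationIdxIn_eq_ramificationIdx P Q H] at h2
    have hle : Q.inertia Gal(K/ℚ) ≤ H := le_iSup (fun m : MaximalSpectrum (𝓞 K) =>
      m.asIdeal.inertia Gal(K/ℚ)) ⟨Q, hQ⟩
    have h3 : Nat.card (Q.inertia Gal(K/ℚ)) = Nat.card (Q.inertia H) := by
      rw [← Nat.card_congr (Subgroup.subgroupOfEquivOfLe hle).toEquiv]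
      rfl
    have h4 := Ideal.ramificationIdx_tower (R := ℤ) P Q
    have h5 : 0 < Q.ramificationIdx (𝓞 E) := Ideal.ramificationIdx_pos _ _
    rw [← Ideal.ramificationIdx_eq_one_iff]
    rw [← h1, h3, h2] at h4
    nlinarith
  have hb : E = ⊥ := IntermediateField.finrank_eq_one_iff.mp hE
  have := IsGaloisGroup.finrank_fixedPoints_eq_card_subgroup Gal(K/ℚ) ℚ K H
  change Module.finrank E K = _ at this
  apply Subgroup.eq_top_of_card_eq
  rw [← this, hb, IntermediateField.finrank_bot', IsGaloisGroup.card_eq_finrank Gal(K/ℚ) ℚ K]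

/-- At most one collision. -/
theorem morse {k : Type*} [Field k] (n : ℕ) (hn : 2 ≤ n)
    (h : ((X ^ n - X - 1 : ℤ[X]).map (algebraMap ℤ k)).Splits) :
    n ≤ ((X ^ n - X - 1 : ℤ[X]).rootSet k).ncard + 1 := by
  classical
  set g : k[X] := (X ^ n - X - 1 : ℤ[X]).map (algebraMap ℤ k) with hg
  have hg' : g = X ^ n - X - 1 := by simp [hg]
  have hdeg : g.natDegree = n := by
    have : g = X ^ n - (X + C 1) := by rw [hg', C_1]; ring
    rw [this, natDegree_sub_eq_left_of_natDegree_lt] <;> rw [natDegree_X_pow]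
    rw [natDegree_X_add_C]; omega
  have hg0 : g ≠ 0 := by rintro h0; rw [h0] at hdeg; simp at hdeg; omega
  have hd : derivative g = C (n : k) * X ^ (n - 1) - 1 := by simp [hg', derivative_X_pow]
  have hdd : derivative (derivative g) = C ((n : k) * ((n : k) - 1)) * X ^ (n - 2) := by
    rw [hd]
    obtain ⟨m, rfl⟩ : ∃ m, n = m + 2 := ⟨n - 2, by omega⟩
    simp [show (C 2 : k[X]) = 2 from rfl]
    ring
  -- properties of a double root
  have key : ∀ a : k, 1 < g.rootMultiplicity a →
      (1 - (n : k)) ≠ 0 ∧ a = n / (1 - n) ∧ g.rootMultiplicity a ≤ 2 := by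
    intro a ha
    obtain ⟨r0, r1⟩ := (one_lt_rootMultiplicity_iff_isRoot hg0).mp ha
    rw [IsRoot, hg'] at r0
    rw [IsRoot, hd] at r1
    simp at r0 r1
    obtain ⟨m, rfl⟩ : ∃ m, n = m + 2 := ⟨n - 2, by omega⟩
    simp only [show m + 2 - 1 = m + 1 by omega, show m + 2 - 2 = m by omega] at *
    generalize hN : ((m + 2 : ℕ) : k) = N at *
    have e : a * (1 - N) = N := by
      linear_combination N * r0 - a * r1
    have hN1 : 1 - N ≠ 0 := by
      intro h0
      rw [h0, mul_zero] at e
      rw [← e] at h0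
      simp at h0
    refine ⟨hN1, by rw [eq_div_iff hN1, e], ?_⟩
    by_contra hlt
    have hr := isRoot_iterate_derivative_of_lt_rootMultiplicity (p := g) (t := a) (n := 2) (by omega)
    simp only [Function.iterate_succ, Function.iterate_zero, Function.comp, id, hdd] at hr
    rw [IsRoot] at hr
    simp at hr
    have hNa : N * a ^ (m + 1) = 1 := by linear_combination r1
    have hN0 : N ≠ 0 := by rintro h0; simp [h0] at hNa
    have ha0 : a ≠ 0 := by rintro h0; simp [h0] at hNa
    rcases hr with (h1 | h1) | h1
    · exact hN0 h1
    · exact hN1 (by linear_combination -h1)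
    · exact ha0 h1.1
  have hle : g.roots ≤ g.roots.dedup + {(n : k) / (1 - n)} := by
    rw [Multiset.le_iff_count]
    intro a
    rw [Multiset.count_add, count_roots]
    by_cases h1 : 1 < g.rootMultiplicity a
    · obtain ⟨_, ha, h2⟩ := key a h1
      have hm : a ∈ g.roots := by rw [← Multiset.count_pos, count_roots]; omega
      rw [Multiset.count_dedup, if_pos hm, ← ha, Multiset.count_singleton_self]
      omega
    · by_cases hm : a ∈ g.roots
      · rw [Multiset.count_dedup, if_pos hm]; omega
      · have := Multiset.count_eq_zero.mpr hm
        rw [count_roots] at this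
        omega
  have hc := Multiset.card_le_card hle
  rw [← h.natDegree_eq_card_roots, hdeg, Multiset.card_add, Multiset.card_singleton] at hc
  rw [rootSet, Set.ncard_coe_finset]
  exact hc

theorem selmer_galois (n : ℕ) (hn : 2 ≤ n) (K : Type) [Field K] [NumberField K]
    [hK : IsSplittingField ℚ K (X ^ n - X - 1 : ℚ[X])] :
    IsGalois ℚ K ∧ Nonempty ((K ≃ₐ[ℚ] K) ≃* Equiv.Perm (Fin n)) := by
  classical
  set f : ℤ[X] := X ^ n - X - 1 with hf
  set q : ℚ[X] := X ^ n - X - 1 with hq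
  have hfq : f.map (algebraMap ℤ ℚ) = q := by simp [hf, hq]
  have hqirr : Irreducible q := X_pow_sub_X_sub_one_irreducible_rat (by omega)
  have hfX : f = X ^ n - (X + C 1) := by rw [hf, C_1]; ring
  have hlt : (X + C 1 : ℤ[X]).degree < n := by
    rw [degree_X_add_C]; exact_mod_cast (by omega : 1 < n)
  have hmonic : f.Monic := by
    rw [hfX]; exact monic_X_pow_sub hlt
  have hdeg : f.natDegree = n := by
    rw [hfX, natDegree_sub_eq_left_of_natDegree_lt] <;> rw [natDegree_X_pow]
    rw [natDegree_X_add_C]; omega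
  have hqmonic : q.Monic := hfq ▸ hmonic.map _
  have hgal : IsGalois ℚ K := IsGalois.of_separable_splitting_field (p := q) hqirr.separable
  have hKS : (f.map (algebraMap ℤ K)).Splits := by
    rw [IsScalarTower.algebraMap_eq ℤ ℚ K, ← map_map, hfq]
    exact IsSplittingField.splits K q
  have hmem (x : K) : x ∈ q.rootSet K ↔ aeval x f = 0 := by
    rw [mem_rootSet_of_ne hqirr.ne_zero, ← hfq, aeval_map_algebraMap]
  have hS : (f.map (algebraMap ℤ (𝓞 K))).Splits := by
    apply Splits.of_splits_map_of_injective (i := algebraMap (𝓞 K) K)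
    · exact FaithfulSMul.algebraMap_injective _ _
    · rwa [map_map, ← IsScalarTower.algebraMap_eq]
    · intro a ha
      rw [map_map, ← IsScalarTower.algebraMap_eq] at ha
      have h1 := (mem_roots'.mp ha).2
      refine ⟨⟨a, f, hmonic, ?_⟩, rfl⟩
      rwa [IsRoot, eval_map] at h1
  have hmemS (x : 𝓞 K) : x ∈ f.rootSet (𝓞 K) ↔ aeval (x : K) f = 0 := by
    rw [mem_rootSet_of_ne hmonic.ne_zero]
    change _ ↔ aeval (algebraMap (𝓞 K) K x) f = 0
    rw [aeval_algebraMap_apply, FaithfulSMul.algebraMap_eq_zero_iff]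
  have hcard : (f.rootSet (𝓞 K)).ncard = n := by
    have hinj : Function.Injective (algebraMap (𝓞 K) K) := FaithfulSMul.algebraMap_injective _ _
    have himg := hS.image_rootSet_of_map_ne_zero (IsScalarTower.toAlgHom ℤ (𝓞 K) K)
      (hmonic.map _).ne_zero
    have hr : f.rootSet K = q.rootSet K := by
      ext x; rw [hmem, mem_rootSet_of_ne hmonic.ne_zero]
    rw [← Set.ncard_image_of_injective _ hinj]
    change (IsScalarTower.toAlgHom ℤ (𝓞 K) K '' _).ncard = n
    rw [himg, hr, ← Nat.card_coe_set_eq, Nat.card_eq_fintype_card,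
      card_rootSet_eq_natDegree hqirr.separable (IsSplittingField.splits K q), ← hfq,
      hmonic.natDegree_map, hdeg]
  have htrans : MulAction.IsPretransitive Gal(K/ℚ) (f.rootSet (𝓞 K)) := by
    refine ⟨fun x y => ?_⟩
    have hm (x : f.rootSet (𝓞 K)) : minpoly ℚ (x.1 : K) = q := by
      refine (minpoly.eq_of_irreducible_of_monic hqirr ?_ hqmonic).symm
      rw [← hfq, aeval_map_algebraMap]
      exact (hmemS _).mp x.2
    obtain ⟨g, hg⟩ := (Normal.minpoly_eq_iff_mem_orbit K).mp ((hm y).trans (hm x).symm)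
    exact ⟨g, Subtype.ext (RingOfIntegers.ext hg)⟩
  have hmorse : ∀ m : MaximalSpectrum (𝓞 K),
      (f.rootSet (𝓞 K)).ncard ≤ (f.rootSet (𝓞 K ⧸ m.asIdeal)).ncard + 1 := by
    intro m
    rw [hcard]
    let _ : Field (𝓞 K ⧸ m.asIdeal) := Ideal.Quotient.field m.asIdeal
    apply morse n hn
    exact hS.of_algHom (Ideal.Quotient.mkₐ ℤ m.asIdeal)
  have hsurj := hS.surjective_toPermHom_of_iSup_inertia_eq_top hmorse (iSup_inertia K)
  have hinj : Function.Injective (MulAction.toPermHom Gal(K/ℚ) (f.rootSet (𝓞 K))) := by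
    rw [injective_iff_map_eq_one]
    intro g hg
    have h1 : (g : K →ₐ[ℚ] K) = AlgHom.id ℚ K := by
      apply AlgHom.ext_of_adjoin_eq_top (IsSplittingField.adjoin_rootSet K q)
      intro x hx
      have hx' := (hmem x).mp hx
      let y : 𝓞 K := ⟨x, f, hmonic, hx'⟩
      have h2 := DFunLike.congr_fun hg ⟨y, (hmemS y).mpr hx'⟩
      exact congrArg (fun z : f.rootSet (𝓞 K) => ((z : 𝓞 K) : K)) h2
    ext x
    exact DFunLike.congr_fun h1 x
  have e2 : f.rootSet (𝓞 K) ≃ Fin n := Finite.equivFinOfCardEq (by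
    rw [Nat.card_coe_set_eq, hcard])
  exact ⟨hgal,
    ⟨(MulEquiv.ofBijective _ ⟨hinj, hsurj⟩).trans e2.permCongrHom⟩⟩

/-- **Hilbert.** For every natural number `n ≥ 1`, the symmetric group `Sₙ` occurs as a
Galois group over `ℚ`: there is a finite Galois extension `M/ℚ` with
`Gal(M/ℚ) ≃ Sₙ`. -/
theorem symmetricGroup_occurs_as_galoisGroup_over_rat (n : ℕ) (hn : 1 ≤ n) :
    ∃ (M : Type) (_ : Field M) (_ : Algebra ℚ M),
      FiniteDimensional ℚ M ∧ IsGalois ℚ M ∧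
        Nonempty ((M ≃ₐ[ℚ] M) ≃* Equiv.Perm (Fin n)) := by
  rcases hn.eq_or_lt with rfl | hn
  · exact ⟨ℚ, inferInstance, inferInstance, inferInstance, inferInstance,
      ⟨{ toFun := fun _ => 1, invFun := fun _ => 1, left_inv := fun _ => Subsingleton.elim _ _,
         right_inv := fun _ => Subsingleton.elim _ _, map_mul' := fun _ _ => rfl }⟩⟩
  · let q : ℚ[X] := X ^ n - X - 1
    have : NumberField q.SplittingField := ⟨⟩
    exact ⟨q.SplittingField, inferInstance, inferInstance, inferInstance,
      selmer_galois n hn q.SplittingField (hK := by convert! IsSplittingField.splittingField q)⟩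
end

section
/- For every natural number n ≥ 1, the alternating group Aₙ occurs as a Galois group over ℚ; that is, there exists a finite Galois extension M/ℚ with Gal(M/ℚ) isomorphic to the alternating group on n letters. -/
open Polynomial NumberField
open scoped Pointwise
set_option linter.unusedSectionVars false

namespace AltGal

variable {L : Type} [Field L] [NumberField L]

/-- A monic integer polynomial that splits in `L` without multiple roots is the product of
its linear factors, indexed by its root set. -/
lemma map_eq_prod {F : ℤ[X]} (hm : F.Monic) (hs : (F.map (algebraMap ℤ L)).Splits)
    (hder : ∀ x : L, aeval x F = 0 → aeval x (derivative F) ≠ 0) :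
    F.map (algebraMap ℤ L) = ∏ x : F.rootSet L, (X - C (x : L)) := by
  classical
  have hm' : (F.map (algebraMap ℤ L)).Monic := hm.map _
  have hnd : (F.aroots L).Nodup := by
    rw [Multiset.nodup_iff_count_le_one]
    intro x
    rw [aroots_def, count_roots]
    by_contra! h
    rw [one_lt_rootMultiplicity_iff_isRoot hm'.ne_zero] at h
    apply hder x
    · have := h.1
      rwa [IsRoot, eval_map_algebraMap] at this
    · have := h.2
      rwa [derivative_map, IsRoot, eval_map_algebraMap] at this
  have h1 := hs.eq_prod_roots
  rw [hm'.leadingCoeff, C_1, one_mul] at h1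
  rw [h1]
  have h2 : ∏ x : F.rootSet L, (X - C (x : L)) = ∏ x ∈ (F.aroots L).toFinset, (X - C x) := by
    refine Finset.prod_bij (fun x _ => (x : L)) ?_ ?_ ?_ ?_
    · intro x _
      have h := x.2
      generalize (x : L) = z at h
      rw [rootSet_def] at h
      exact h
    · intro a _ b _ h
      exact Subtype.ext h
    · intro b hb
      refine ⟨⟨b, ?_⟩, Finset.mem_univ _, rfl⟩
      rw [rootSet_def]
      exact hb
    · intros; rfl
  rw [h2, Finset.prod, Multiset.toFinset_val, hnd.dedup]

lemma card_rootSet {F : ℤ[X]}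
    (hF : F.map (algebraMap ℤ L) = ∏ x : F.rootSet L, (X - C (x : L))) (hm : F.Monic) :
    Fintype.card (F.rootSet L) = F.natDegree := by
  have := congrArg natDegree hF
  rw [hm.natDegree_map, natDegree_prod_of_monic _ _ (fun i _ => monic_X_sub_C _)] at this
  simpa using this.symm

lemma aeval_eq_prod {F : ℤ[X]}
    (hF : F.map (algebraMap ℤ L) = ∏ x : F.rootSet L, (X - C (x : L))) (y : L) :
    aeval y F = ∏ x : F.rootSet L, (y - x) := by
  rw [← eval_map_algebraMap, hF, eval_prod]
  simp

lemma aeval_derivative_eq_prod {F : ℤ[X]} [DecidableEq (F.rootSet L)]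
    (hF : F.map (algebraMap ℤ L) = ∏ x : F.rootSet L, (X - C (x : L))) (y : F.rootSet L) :
    aeval (y : L) (derivative F) = ∏ x ∈ Finset.univ.erase y, ((y : L) - x) := by
  rw [← eval_map_algebraMap, ← derivative_map, hF, derivative_prod_finset, eval_finsetSum]
  rw [Finset.sum_eq_single y]
  · simp [eval_prod]
  · intro b _ hb
    rw [eval_mul, eval_prod]
    rw [Finset.prod_eq_zero (i := y)]
    · simp
    · simp [hb.symm]
    · simp
  · simp

/-- If the discriminant is a square then Galois acts by even permutations. -/
lemma sign_eq_one {F : ℤ[X]} [DecidableEq (F.rootSet L)]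
    (hF : F.map (algebraMap ℤ L) = ∏ x : F.rootSet L, (X - C (x : L)))
    {n : ℕ} (hn : Fintype.card (F.rootSet L) = n)
    (q : ℚ)
    (hq : (-1) ^ (n * (n - 1) / 2) * ∏ x : F.rootSet L, aeval (x : L) (derivative F)
      = (algebraMap ℚ L q) ^ 2)
    (σ : Gal(L/ℚ)) :
    Equiv.Perm.sign (MulAction.toPerm σ : Equiv.Perm (F.rootSet L)) = 1 := by
  classical
  let e : Fin n ≃ F.rootSet L := (Fintype.equivFinOfCardEq hn).symm
  let v : Fin n → L := fun i => (e i : L)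
  let d : L := ∏ i, ∏ j ∈ Finset.Ioi i, (v i - v j)
  have hv : Function.Injective v := fun a b h => e.injective (Subtype.ext h)
  have hd0 : d ≠ 0 := by
    refine Finset.prod_ne_zero_iff.2 fun i _ => Finset.prod_ne_zero_iff.2 fun j hj => ?_
    rw [sub_ne_zero]
    intro h
    exact (Finset.mem_Ioi.1 hj).ne (hv h)
  have hdsq : d ^ 2 = (algebraMap ℚ L q) ^ 2 := by
    rw [← hq]
    have h1 : ∏ x : F.rootSet L, aeval (x : L) (derivative F)
        = ∏ i, ∏ j ∈ Finset.univ.erase i, (v i - v j) := by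
      rw [← e.prod_comp]
      refine Finset.prod_congr rfl fun i _ => ?_
      rw [aeval_derivative_eq_prod hF]
      refine Finset.prod_bij' (fun x _ => e.symm x) (fun j _ => e j) ?_ ?_ ?_ ?_ ?_ <;>
        simp [v, Equiv.symm_apply_eq]
    have h2 : ∏ i, ∏ j ∈ Finset.univ.erase i, (v i - v j)
        = ∏ i, ∏ j ∈ Finset.Ioi i, ((v j - v i) * (v i - v j)) := by
      have := Finset.prod_prod_Ioi_mul_eq_prod_prod_off_diag (fun i j : Fin n => v i - v j)
      rw [this]
      rw [Finset.prod_sigma', Finset.prod_sigma']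
      refine Finset.prod_bij' (fun i _ => ⟨i.2, i.1⟩) (fun i _ => ⟨i.2, i.1⟩) ?_ ?_ ?_ ?_ ?_ <;>
        simp [eq_comm]
    have h3 : ∀ i j, (v j - v i) * (v i - v j) = (-1) * (v i - v j) ^ 2 := by
      intros; ring
    rw [h1, h2]
    simp only [h3, Finset.prod_mul_distrib, Finset.prod_const, Finset.prod_pow_eq_pow_sum, Finset.prod_pow]
    have h4 : ∑ i : Fin n, (Finset.Ioi i).card = n * (n - 1) / 2 := by
      simp only [Fin.card_Ioi]
      rw [← Finset.sum_range_id_mul_two, Nat.mul_div_cancel _ (by norm_num),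
        Finset.sum_range (fun i => i), ← Equiv.sum_comp Fin.revPerm]
      refine Finset.sum_congr rfl fun i _ => ?_
      simp; omega
    rw [h4, ← mul_assoc, ← mul_pow]
    simp [d]
  have hfix : σ d = d := by
    rcases sq_eq_sq_iff_eq_or_eq_neg.1 hdsq with h | h <;> rw [h] <;> simp
  let τ : Equiv.Perm (Fin n) := (e.trans (MulAction.toPerm σ)).trans e.symm
  have hτ : ∀ i, σ (v i) = v (τ i) := by
    intro i
    simp [v, τ, rootSet.coe_smul]
  have hsgn : Equiv.Perm.sign τ
      = Equiv.Perm.sign (MulAction.toPerm σ : Equiv.Perm (F.rootSet L)) := by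
    have : τ = e.symm.permCongr (MulAction.toPerm σ) := by
      ext i; simp [τ]
    rw [this, Equiv.Perm.sign_permCongr]
  have h5 : σ d = Equiv.Perm.sign τ * d := by
    have := Equiv.Perm.prod_Ioi_comp_eq_sign_mul_prod τ (R := L) (f := fun i j => v i - v j)
      (by intros; ring)
    rw [← this]
    simp [d, map_prod, hτ]
  rw [← hsgn]
  rcases Int.units_eq_one_or (Equiv.Perm.sign τ) with h | h
  · exact h
  · rw [h, hfix] at h5
    exfalso
    apply hd0
    simp at h5
    linear_combination (1/2 : L) * h5

end AltGal

namespace AltGal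
variable {L : Type} [Field L] [NumberField L]

lemma notMem_sq_of_inertia [IsGalois ℚ L] {r : ℕ} (hr : r.Prime) (P : Ideal (𝓞 L)) [P.IsPrime]
    [P.LiesOver (Ideal.span {(r : ℤ)})] 
    (hI : ∀ σ ∈ P.inertia Gal(L/ℚ), σ = 1) : (r : 𝓞 L) ∉ P ^ 2 := by
  have hp0 : Ideal.span {(r : ℤ)} ≠ ⊥ := by simp [hr.ne_zero]
  have : (Ideal.span {(r : ℤ)}).IsPrime := by
    rw [Ideal.span_singleton_prime (by exact_mod_cast hr.ne_zero)]
    exact Nat.prime_iff_prime_int.1 hr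
  have : (Ideal.span {(r : ℤ)}).IsMaximal := Ideal.IsPrime.isMaximal this hp0
  have : Finite (ℤ ⧸ (Ideal.span {(r : ℤ)})) := Ring.HasFiniteQuotients.finiteQuotient hp0
  have : Finite (Ideal.span {(r : ℤ)}).ResidueField :=
    Finite.of_surjective _ (Ideal.bijective_algebraMap_quotient_residueField _).2
  have h1 := Ideal.card_inertia_eq_ramificationIdxIn (G := Gal(L/ℚ)) (Ideal.span {(r : ℤ)}) P
  rw [Ideal.ramificationIdxIn_eq_ramificationIdx (Ideal.span {(r : ℤ)}) P Gal(L/ℚ)] at h1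
  have h2 : Nat.card (P.inertia Gal(L/ℚ)) = 1 := by
    rw [Nat.card_eq_one_iff_unique]
    refine ⟨⟨fun a b => Subtype.ext ?_⟩, ⟨1⟩⟩
    rw [hI a a.2, hI b b.2]
  rw [h2] at h1
  intro h
  have h3 : Ideal.ramificationIdx' (Ideal.span {(r : ℤ)}) P ≠ 1 := by
    rw [Ideal.ramificationIdx'_ne_one_iff]
    · rw [Ideal.map_span, Ideal.span_le]
      simpa using h
    · rw [Ideal.map_le_iff_le_comap]
      exact (Ideal.over_def P (Ideal.span {(r : ℤ)})).le
  apply h3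
  rw [Ideal.ramificationIdx'_eq_ramificationIdx _ _ hp0, ← h1]


lemma eval_derivative_prod {ι K : Type} [CommRing K] [Fintype ι] [DecidableEq ι] (a : ι → K) (i : ι) :
    eval (a i) (derivative (∏ j, (X - C (a j)))) = ∏ j ∈ Finset.univ.erase i, (a i - a j) := by
  rw [derivative_prod_finset, eval_finsetSum]
  rw [Finset.sum_eq_single i]
  · simp [eval_prod]
  · intro b _ hb
    rw [eval_mul, eval_prod]
    rw [Finset.prod_eq_zero (i := i)]
    · simp
    · simp [hb.symm]
    · simp
  · simp

/-- The local analysis modulo a prime: a polynomial over a domain which is a product of linear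
factors and satisfies the differential identity. -/
lemma local_analysis {ι K : Type} [CommRing K] [IsDomain K] [Fintype ι] [DecidableEq ι]
    (a : ι → K) (A B : K[X]) (κ γ : K) (k : ℕ)
    (hid : A * derivative (∏ j, (X - C (a j))) - B * (∏ j, (X - C (a j)))
      = C κ * X ^ k * (X - C γ) ^ 2)
    (hκ : κ ≠ 0) (hγ : γ ≠ 0) (h0 : ∀ i, a i ≠ 0) :
    (∀ i j, i ≠ j → a i = a j → a i = γ) ∧
    ∀ T : Finset ι, (∀ i ∈ T, a i = γ) → T.card ≤ 3 := by
  refine ⟨fun i j hij h => ?_, fun T hT => ?_⟩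
  · have h1 := congrArg (eval (a i)) hid
    simp only [eval_sub, eval_mul, eval_derivative_prod, eval_prod, eval_C, eval_X, eval_pow] at h1
    rw [Finset.prod_eq_zero (i := j) (by simpa using hij.symm) (by rw [h, sub_self]),
      Finset.prod_eq_zero (i := i) (Finset.mem_univ _) (sub_self _)] at h1
    simp only [mul_zero, sub_zero] at h1
    have := h1.symm
    simp only [mul_eq_zero, pow_eq_zero_iff', hκ, h0 i, sub_eq_zero] at this
    simpa using this
  · by_contra! h
    have h1 : (X - C γ) ^ 4 ∣ ∏ j, (X - C (a j)) := by
      refine (pow_dvd_pow _ h).trans ?_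
      have : (X - C γ) ^ T.card = ∏ j ∈ T, (X - C (a j)) := by
        rw [Finset.prod_congr rfl (fun j hj => by rw [hT j hj]), Finset.prod_const]
      rw [this]
      exact Finset.prod_dvd_prod_of_subset _ _ _ (Finset.subset_univ _)
    have h2 : (X - C γ) ^ (4 - 1) ∣ derivative (∏ j, (X - C (a j))) :=
      pow_sub_one_dvd_derivative_of_pow_dvd h1
    rw [show 4 - 1 = 3 from rfl] at h2
    have h3 : (X - C γ) ^ 2 * (X - C γ) ∣ (X - C γ) ^ 2 * (C κ * X ^ k) := by
      have h4 : (X - C γ) ^ 3 ∣ ∏ j, (X - C (a j)) := (pow_dvd_pow _ (by norm_num)).trans h1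
      have h5 : (X - C γ) ^ 3 ∣ A * derivative (∏ j, (X - C (a j))) - B * (∏ j, (X - C (a j))) :=
        dvd_sub (h2.mul_left _) (h4.mul_left _)
      rw [hid, pow_succ (X - C γ) 2, mul_comm (C κ * X ^ k)] at h5
      exact h5
    rw [mul_dvd_mul_iff_left (pow_ne_zero _ (X_sub_C_ne_zero γ)), dvd_iff_isRoot] at h3
    simp [hκ, hγ] at h3

lemma exists_threeCycle [IsGalois ℚ L] {F : ℤ[X]} [DecidableEq (F.rootSet L)]
    (hF : F.map (algebraMap ℤ L) = ∏ x : F.rootSet L, (X - C (x : L))) (hm : F.Monic)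
    (heven : ∀ σ : Gal(L/ℚ), Equiv.Perm.sign (MulAction.toPerm σ : Equiv.Perm (F.rootSet L)) = 1)
    (hfaith : ∀ σ : Gal(L/ℚ), (∀ x : F.rootSet L, σ • x = x) → σ = 1)
    (A B : ℤ[X]) (κ γ : ℤ) (k : ℕ)
    (hid : A * derivative F - B * F = C κ * X ^ k * (X - C γ) ^ 2)
    {r : ℕ} (hr : r.Prime) (hκ : ¬ (r : ℤ) ∣ κ) (hγ : ¬ (r : ℤ) ∣ γ) (h0 : ¬ (r : ℤ) ∣ F.eval 0)
    (hA : ¬ (r : ℤ) ∣ A.eval γ) (h1 : (r : ℤ) ∣ F.eval γ) (h2 : ¬ (r : ℤ) ^ 2 ∣ F.eval γ) :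
    ∃ σ : Gal(L/ℚ), (MulAction.toPerm σ : Equiv.Perm (F.rootSet L)).IsThreeCycle := by
  have hp0 : Ideal.span {(r : ℤ)} ≠ ⊥ := by simp [hr.ne_zero]
  have : (Ideal.span {(r : ℤ)}).IsPrime := by
    rw [Ideal.span_singleton_prime (by exact_mod_cast hr.ne_zero)]
    exact Nat.prime_iff_prime_int.1 hr
  have : (Ideal.span {(r : ℤ)}).IsMaximal := Ideal.IsPrime.isMaximal this hp0
  obtain ⟨P, hP, hPo⟩ := Ideal.exists_maximal_ideal_liesOver_of_isIntegral
    (S := 𝓞 L) (Ideal.span {(r : ℤ)})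
  have hmem : ∀ z : ℤ, (z : 𝓞 L) ∈ P ↔ (r : ℤ) ∣ z := by
    intro z
    rw [← Ideal.mem_span_singleton, Ideal.over_def P (Ideal.span {(r : ℤ)})]
    simp
  have hintegral : ∀ x : F.rootSet L, IsIntegral ℤ (x : L) := by
    intro x
    exact ⟨F, hm, by have := (mem_rootSet.1 x.2).2; simpa [aeval_def] using this⟩
  let ρ : F.rootSet L → 𝓞 L := fun x => ⟨x, hintegral x⟩
  have hρ : ∀ x, ((ρ x : 𝓞 L) : L) = x := fun x => rfl
  have hFR : F.map (algebraMap ℤ (𝓞 L)) = ∏ x, (X - C (ρ x)) := by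
    apply map_injective (algebraMap (𝓞 L) L) RingOfIntegers.coe_injective
    rw [Polynomial.map_map, ← IsScalarTower.algebraMap_eq, hF, Polynomial.map_prod]
    refine Finset.prod_congr rfl fun x _ => ?_
    rw [Polynomial.map_sub, map_X, map_C]
    rfl
  let π : 𝓞 L →+* (𝓞 L ⧸ P) := Ideal.Quotient.mk P
  let a : F.rootSet L → (𝓞 L ⧸ P) := fun x => π (ρ x)
  have hFk : F.map (Int.castRingHom (𝓞 L ⧸ P)) = ∏ x, (X - C (a x)) := by
    have := congrArg (Polynomial.map π) hFR
    rw [Polynomial.map_map, Polynomial.map_prod] at this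
    rw [Subsingleton.elim (Int.castRingHom (𝓞 L ⧸ P)) (π.comp (algebraMap ℤ (𝓞 L))), this]
    refine Finset.prod_congr rfl fun x _ => ?_
    rw [Polynomial.map_sub, map_X, map_C]
  have hcast : ∀ z : ℤ, ((z : ℤ) : 𝓞 L ⧸ P) = 0 ↔ (r : ℤ) ∣ z := by
    intro z
    rw [← hmem, ← Ideal.Quotient.eq_zero_iff_mem]
    simp
  have heval : ∀ (z : ℤ) (g : ℤ[X]), eval (z : 𝓞 L ⧸ P) (g.map (Int.castRingHom _))
      = ((g.eval z : ℤ) : 𝓞 L ⧸ P) := by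
    intro z g
    rw [eval_intCast_map]
    simp
  have hidk := congrArg (Polynomial.map (Int.castRingHom (𝓞 L ⧸ P))) hid
  simp only [Polynomial.map_sub, Polynomial.map_mul, Polynomial.map_pow, map_X, map_C,
    ← derivative_map, hFk] at hidk
  have hκ' : (Int.castRingHom (𝓞 L ⧸ P)) κ ≠ 0 := fun h => hκ ((hcast _).1 h)
  have hγ' : (Int.castRingHom (𝓞 L ⧸ P)) γ ≠ 0 := fun h => hγ ((hcast _).1 h)
  have ha0 : ∀ i, a i ≠ 0 := by
    intro i hi
    apply h0
    rw [← hcast, ← heval, hFk, eval_prod]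
    apply Finset.prod_eq_zero (Finset.mem_univ i)
    simp [hi]
  obtain ⟨c1, c2⟩ := local_analysis a _ _ _ _ k hidk hκ' hγ' ha0
  -- two roots are congruent to γ
  have hx : ∃ x, (γ : 𝓞 L ⧸ P) = a x := by
    have := (hcast _).2 h1
    rw [← heval, hFk, eval_prod, Finset.prod_eq_zero_iff] at this
    obtain ⟨x, _, hx⟩ := this
    exact ⟨x, by simpa [sub_eq_zero] using hx⟩
  obtain ⟨x, hx⟩ := hx
  have hy : ∃ y, y ≠ x ∧ (γ : 𝓞 L ⧸ P) = a y := by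
    have e1 := congrArg (eval (γ : 𝓞 L ⧸ P)) hidk
    rw [← hFk] at e1
    simp only [eval_sub, eval_mul, heval, (hcast _).2 h1, eval_pow, eval_X, eval_C] at e1
    rw [hFk] at e1
    simp only [mul_zero, sub_zero, eq_intCast, sub_self, ne_eq, OfNat.ofNat_ne_zero,
      not_false_eq_true, zero_pow, mul_eq_zero] at e1
    rcases e1 with e1 | e1
    · exact absurd ((hcast _).1 e1) hA
    · rw [hx, eval_derivative_prod, Finset.prod_eq_zero_iff] at e1
      obtain ⟨y, hy, hy2⟩ := e1
      exact ⟨y, (Finset.mem_erase.1 hy).1, by rw [hx]; exact sub_eq_zero.1 hy2⟩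
  obtain ⟨y, hyx, hy⟩ := hy
  have hsq : ((F.eval γ : ℤ) : 𝓞 L) ∈ P ^ 2 := by
    have : ((F.eval γ : ℤ) : 𝓞 L) = ∏ z, ((γ : 𝓞 L) - ρ z) := by
      have := congrArg (eval (γ : 𝓞 L)) hFR
      rw [eval_prod] at this
      simp only [eval_sub, eval_X, eval_C] at this
      rw [← this]
      simp only [algebraMap_int_eq, eval_intCast_map]
      simp
    rw [this, ← Finset.mul_prod_erase _ _ (Finset.mem_univ x),
      ← Finset.mul_prod_erase _ _ (Finset.mem_erase.2 ⟨hyx, Finset.mem_univ y⟩), ← mul_assoc, pow_two]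
    refine Ideal.mul_mem_right _ _ (Ideal.mul_mem_mul ?_ ?_)
    · rw [← Ideal.Quotient.eq_zero_iff_mem, map_sub, sub_eq_zero]
      simpa using hx
    · rw [← Ideal.Quotient.eq_zero_iff_mem, map_sub, sub_eq_zero]
      simpa using hy
  have hrsq : (r : 𝓞 L) ∈ P ^ 2 := by
    obtain ⟨u, hu⟩ := h1
    have hru : ¬ (r : ℤ) ∣ u := fun ⟨w, hw⟩ => h2 ⟨w, by rw [hu, hw]; ring⟩
    have hco : IsCoprime (r : ℤ) u :=
      (Nat.prime_iff_prime_int.1 hr).coprime_iff_not_dvd.2 hru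
    obtain ⟨w, z, hwz⟩ := hco
    have hrP : (r : 𝓞 L) ∈ P := by
      have := (hmem r).2 dvd_rfl
      simpa using this
    have : (r : 𝓞 L) = w * (r * r) + z * ((F.eval γ : ℤ) : 𝓞 L) := by
      rw [hu]
      have := congrArg (fun t : ℤ => ((t * r : ℤ) : 𝓞 L)) hwz
      push_cast at this ⊢
      linear_combination -this
    rw [this]
    refine Ideal.add_mem _ (Ideal.mul_mem_left _ _ ?_) (Ideal.mul_mem_left _ _ hsq)
    rw [pow_two]
    exact Ideal.mul_mem_mul hrP hrP
  have hI : ∃ σ ∈ P.inertia Gal(L/ℚ), σ ≠ 1 := by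
    by_contra! h
    exact notMem_sq_of_inertia hr P h hrsq
  obtain ⟨σ, hσ, hσ1⟩ := hI
  refine ⟨σ, card_support_eq_three_iff.1 ?_⟩
  have hle := c2 (MulAction.toPerm σ : Equiv.Perm (F.rootSet L)).support (by
    intro i hi
    rw [Equiv.Perm.mem_support, MulAction.toPerm_apply] at hi
    refine c1 i (σ • i) hi.symm ?_
    have h3 : σ • ρ i - ρ i ∈ P := hσ (ρ i)
    rw [← Ideal.Quotient.eq_zero_iff_mem, map_sub, sub_eq_zero] at h3
    have h4 : σ • ρ i = ρ (σ • i) := by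
      apply RingOfIntegers.coe_injective
      rfl
    rw [h4] at h3
    exact h3.symm)
  have hne : (MulAction.toPerm σ : Equiv.Perm (F.rootSet L)) ≠ 1 := by
    intro h
    apply hσ1
    apply hfaith
    intro x
    exact congrArg (fun f : Equiv.Perm (F.rootSet L) => f x) h
  have hlt := Equiv.Perm.one_lt_card_support_of_ne_one hne
  have hne2 : (MulAction.toPerm σ : Equiv.Perm (F.rootSet L)).support.card ≠ 2 := by
    intro h
    have := (Equiv.Perm.card_support_eq_two.1 h).sign_eq
    rw [heven σ] at this
    exact absurd this (by decide)
  omega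

end AltGal

namespace AltGal
variable {L : Type} [Field L] [NumberField L]

section padic
variable {p : ℕ} [Fact p.Prime]

lemma norm_algEquiv (σ : PadicAlgCl p ≃ₐ[ℚ_[p]] PadicAlgCl p) (z : PadicAlgCl p) :
    ‖σ z‖ = ‖z‖ :=
  (spectralNorm_eq_of_equiv σ z).symm

lemma exists_restrict [IsGalois ℚ L] (ι : L →ₐ[ℚ] PadicAlgCl p)
    (σ : PadicAlgCl p ≃ₐ[ℚ_[p]] PadicAlgCl p) :
    ∃ g : Gal(L/ℚ), ∀ x : L, ι (g x) = σ (ι x) := by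
  let : Algebra L (PadicAlgCl p) := ι.toRingHom.toAlgebra
  have : IsScalarTower ℚ L (PadicAlgCl p) := IsScalarTower.of_algebraMap_eq' (ι.comp_algebraMap).symm
  refine ⟨(σ.restrictScalars ℚ).restrictNormal L, fun x => ?_⟩
  exact AlgEquiv.restrictNormal_commutes (σ.restrictScalars ℚ) L x

lemma norm_of_fixed (z : PadicAlgCl p) (hz : z ≠ 0)
    (h : ∀ σ : PadicAlgCl p ≃ₐ[ℚ_[p]] PadicAlgCl p, σ z = z) :
    ∃ k : ℤ, ‖z‖ = (p : ℝ) ^ k := by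
  have h1 : z ∈ (⊥ : IntermediateField ℚ_[p] (PadicAlgCl p)) := by
    rw [InfiniteGalois.mem_bot_iff_fixed]
    exact h
  obtain ⟨y, rfl⟩ := IntermediateField.mem_bot.1 h1
  have hy : y ≠ 0 := fun h => hz (by rw [h, map_zero])
  refine ⟨-y.valuation, ?_⟩
  rw [← Padic.norm_eq_zpow_neg_valuation hy]
  exact PadicAlgCl.norm_extends p y

/-- The divisibility coming from the value group of `ℚ_p`. -/
lemma dvd_of_stable [IsGalois ℚ L] (ι : L →ₐ[ℚ] PadicAlgCl p) (S : Finset L) (m : ℕ)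
    (hnorm : ∀ x ∈ S, ‖ι x‖ ^ m * (p : ℝ) ^ 2 = 1)
    (hst : ∀ (σ : PadicAlgCl p ≃ₐ[ℚ_[p]] PadicAlgCl p) (g : Gal(L/ℚ)),
      (∀ x, ι (g x) = σ (ι x)) → ∀ x ∈ S, g x ∈ S) :
    m ∣ 2 * S.card := by
  classical
  have hp : (1 : ℝ) < p := by exact_mod_cast (Fact.out : p.Prime).one_lt
  rcases S.eq_empty_or_nonempty with rfl | ⟨x0, hx0⟩
  · simp
  rcases Nat.eq_zero_or_pos m with rfl | hm
  · have := hnorm x0 hx0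
    simp only [pow_zero, one_mul] at this
    nlinarith
  let z : PadicAlgCl p := ∏ x ∈ S, ι x
  have hz : z ≠ 0 := by
    refine Finset.prod_ne_zero_iff.2 fun x hx h => ?_
    have := hnorm x hx
    rw [h, norm_zero, zero_pow hm.ne'] at this
    simp at this
  have hfix : ∀ σ : PadicAlgCl p ≃ₐ[ℚ_[p]] PadicAlgCl p, σ z = z := by
    intro σ
    obtain ⟨g, hg⟩ := exists_restrict ι σ
    have h1 : S.image g = S := by
      apply Finset.eq_of_subset_of_card_le
      · intro y hy
        obtain ⟨x, hx, rfl⟩ := Finset.mem_image.1 hy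
        exact hst σ g hg x hx
      · rw [Finset.card_image_of_injective _ g.injective]
    calc σ z = ∏ x ∈ S, ι (g x) := by simp [z, map_prod, hg]
      _ = ∏ x ∈ S.image g, ι x := by
        rw [Finset.prod_image (fun a _ b _ h => g.injective h)]
      _ = z := by rw [h1]
  obtain ⟨k, hk⟩ := norm_of_fixed z hz hfix
  have h1 : ‖z‖ ^ m * (p : ℝ) ^ (2 * S.card) = 1 := by
    have : ‖z‖ = ∏ x ∈ S, ‖ι x‖ := norm_prod _ _
    rw [this, ← Finset.prod_pow, pow_mul, ← Finset.prod_const, ← Finset.prod_mul_distrib]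
    exact Finset.prod_eq_one hnorm
  rw [hk, ← zpow_natCast, ← zpow_natCast, ← zpow_mul, ← zpow_add₀ (by positivity),
    zpow_eq_one_iff_right₀ (by positivity) hp.ne'] at h1
  have : (m : ℤ) ∣ ((2 * S.card : ℕ) : ℤ) := ⟨-k, by linarith⟩
  exact_mod_cast this

end padic
end AltGal

namespace AltGal
variable {L : Type} [Field L] [NumberField L]

section blocks

lemma eq_univ_of_ncard {X : Type} [Finite X] {B : Set X} (h : B.ncard = Nat.card X) :
    B = Set.univ :=
  Set.eq_of_subset_of_ncard_le (Set.subset_univ _) (by rw [Set.ncard_univ, h])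

variable {p : ℕ} [Fact p.Prime]

/-- Counting roots by their norms: exactly one root is a unit. -/
lemma exists_unit_root {X : Type} [Fintype X] (w : X → ℝ) {m : ℕ} 
    (hn : Fintype.card X = m + 1) 
    (H1 : ∀ x, w x ^ m * (p : ℝ) ^ 2 = 1 ∨ w x = 1) (H2 : (∏ x, w x) * (p : ℝ) ^ 2 = 1) :
    ∃ y, w y = 1 ∧ ∀ x, x ≠ y → w x ^ m * (p : ℝ) ^ 2 = 1 := by
  classical
  have hp : (1 : ℝ) < p := by exact_mod_cast (Fact.out : p.Prime).one_lt
  let U : Finset X := Finset.univ.filter fun x => w x = 1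
  have hU : ∀ x, x ∈ U ↔ w x = 1 := by simp [U]
  have h1 : (∏ x, w x ^ m) * ((p : ℝ) ^ 2) ^ (Uᶜ.card) = 1 := by
    rw [← Finset.prod_mul_prod_compl U, mul_assoc, ← Finset.prod_const, ← Finset.prod_mul_distrib]
    rw [Finset.prod_eq_one, Finset.prod_eq_one, one_mul]
    · intro x hx
      rw [Finset.mem_compl, hU] at hx
      exact (H1 x).resolve_right hx
    · intro x hx
      rw [(hU x).1 hx, one_pow]
  have h2 : (∏ x, w x ^ m) * ((p : ℝ) ^ 2) ^ m = 1 := by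
    rw [Finset.prod_pow, ← mul_pow, H2, one_pow]
  have h3 : Uᶜ.card = m := by
    have h0 : (∏ x, w x ^ m) ≠ 0 := left_ne_zero_of_mul_eq_one h2
    have h4 := mul_left_cancel₀ h0 (h1.trans h2.symm)
    exact pow_right_injective₀ (by positivity) (by nlinarith) h4
  have h4 : U.card = 1 := by
    have := Finset.card_add_card_compl U
    omega
  obtain ⟨y, hy⟩ := Finset.card_eq_one.1 h4
  refine ⟨y, (hU y).1 (by simp [hy]), fun x hx => (H1 x).resolve_right fun h => hx ?_⟩
  have := (hU x).2 h
  rw [hy] at this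
  simpa using this

lemma block_dvd [IsGalois ℚ L] {F : ℤ[X]} (ι : L →ₐ[ℚ] PadicAlgCl p) {m : ℕ}
    (hn : Fintype.card (F.rootSet L) = m + 1)
    (H1 : ∀ x : F.rootSet L, ‖ι x‖ ^ m * (p : ℝ) ^ 2 = 1 ∨ ‖ι x‖ = 1)
    (H2 : (∏ x : F.rootSet L, ‖ι x‖) * (p : ℝ) ^ 2 = 1) :
    ∃ y : F.rootSet L, ∀ B : Set (F.rootSet L), y ∈ B → MulAction.IsBlock Gal(L/ℚ) B →
      m ∣ 2 * (B.ncard - 1) := by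
  classical
  have hp : (1 : ℝ) < p := by exact_mod_cast (Fact.out : p.Prime).one_lt
  obtain ⟨y, hy1, hy⟩ := exists_unit_root (p := p) (fun x : F.rootSet L => ‖ι x‖) hn H1 H2
  refine ⟨y, fun B hyB hB => ?_⟩
  let S : Finset L := ((B \ {y}).toFinset).image (fun x : F.rootSet L => (x : L))
  have hS : S.card = B.ncard - 1 := by
    rw [Finset.card_image_of_injective _ Subtype.val_injective, ← Set.ncard_eq_toFinset_card',
      Set.ncard_sdiff_singleton_of_mem hyB]
  rw [← hS]
  apply dvd_of_stable ι S m
  · intro x hx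
    obtain ⟨z, hz, rfl⟩ := Finset.mem_image.1 hx
    rw [Set.mem_toFinset] at hz
    exact hy z hz.2
  · intro σ g hg x hx
    obtain ⟨z, hz, rfl⟩ := Finset.mem_image.1 hx
    rw [Set.mem_toFinset] at hz
    have hgy : g • y = y := by
      by_contra h
      have h1 := hy _ h
      rw [rootSet.coe_smul, AlgEquiv.smul_def, hg, norm_algEquiv, hy1] at h1
      rw [one_pow, one_mul] at h1
      nlinarith
    have hgB : g • B = B := hB.smul_eq_of_mem hyB (by rwa [hgy])
    refine Finset.mem_image.2 ⟨g • z, ?_, rfl⟩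
    rw [Set.mem_toFinset]
    refine ⟨?_, ?_⟩
    · rw [← hgB]
      exact Set.smul_mem_smul_set hz.1
    · intro h
      apply hz.2
      have h' : g • z = y := h
      rw [← hgy] at h'
      exact smul_left_cancel g h'

lemma pretransitive_of_norm [IsGalois ℚ L] {F : ℤ[X]} (ι : L →ₐ[ℚ] PadicAlgCl p) {n : ℕ}
    (hn : Fintype.card (F.rootSet L) = n) (hodd : Odd n)
    (H1 : ∀ x : F.rootSet L, ‖ι x‖ ^ n * (p : ℝ) ^ 2 = 1) :
    MulAction.IsPretransitive Gal(L/ℚ) (F.rootSet L) := by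
  classical
  have : Nonempty (F.rootSet L) := Fintype.card_pos_iff.1 (by rw [hn]; exact hodd.pos)
  obtain ⟨y⟩ := this
  rw [MulAction.isPretransitive_iff_orbit_eq_univ y]
  let B : Set (F.rootSet L) := MulAction.orbit Gal(L/ℚ) y
  let S : Finset L := (B.toFinset).image (fun x : F.rootSet L => (x : L))
  have hS : S.card = B.ncard := by
    rw [Finset.card_image_of_injective _ Subtype.val_injective, ← Set.ncard_eq_toFinset_card']
  have h := dvd_of_stable ι S n (by
    intro x hx
    obtain ⟨z, hz, rfl⟩ := Finset.mem_image.1 hx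
    exact H1 z) (by
    intro σ g hg x hx
    obtain ⟨z, hz, rfl⟩ := Finset.mem_image.1 hx
    rw [Set.mem_toFinset] at hz
    refine Finset.mem_image.2 ⟨g • z, ?_, rfl⟩
    rw [Set.mem_toFinset]
    exact MulAction.mem_orbit_of_mem_orbit g hz)
  rw [hS] at h
  have h2 : n ∣ B.ncard := (Nat.Coprime.dvd_mul_left (by simpa using hodd.coprime_two_right)).1 h
  have h3 : 0 < B.ncard := (Set.ncard_pos (Set.toFinite _)).2 ⟨y, MulAction.mem_orbit_self y⟩
  have h4 := Nat.le_of_dvd h3 h2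
  apply eq_univ_of_ncard
  have h5 := Set.ncard_le_card B
  rw [Nat.card_eq_fintype_card, hn] at h5 ⊢
  exact le_antisymm h5 h4

lemma primitive_even [IsGalois ℚ L] {F : ℤ[X]} (ι : L →ₐ[ℚ] PadicAlgCl p) {m : ℕ}
    (hm : F.Monic)
    (hn : Fintype.card (F.rootSet L) = m + 1) (hodd : Odd m)
    (H1 : ∀ x : F.rootSet L, ‖ι x‖ ^ m * (p : ℝ) ^ 2 = 1 ∨ ‖ι x‖ = 1)
    (H2 : (∏ x : F.rootSet L, ‖ι x‖) * (p : ℝ) ^ 2 = 1)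
    (H3 : ∀ z : ℤ, F.eval z ≠ 0) :
    MulAction.IsPreprimitive Gal(L/ℚ) (F.rootSet L) := by
  obtain ⟨y, hy⟩ := block_dvd ι hn H1 H2
  apply MulAction.IsPreprimitive.of_isTrivialBlock_of_notMem_fixedPoints (a := y)
  · intro h
    have h1 : (y : L) ∈ (⊥ : IntermediateField ℚ L) := by
      rw [IsGalois.mem_bot_iff_fixed]
      intro g
      exact congrArg Subtype.val (h g)
    obtain ⟨q, hq⟩ := IntermediateField.mem_bot.1 h1
    have hy0 := (mem_rootSet.1 y.2).2
    have h2 : aeval q F = 0 := by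
      rw [← hq, aeval_algebraMap_apply] at hy0
      exact (map_eq_zero _).1 hy0
    have hintegral : IsIntegral ℤ q := ⟨F, hm, by simpa [aeval_def] using h2⟩
    obtain ⟨z, rfl⟩ := IsIntegrallyClosed.isIntegral_iff.1 hintegral
    rw [aeval_algebraMap_apply] at h2
    apply H3 z
    simpa using h2
  · intro B hyB hB
    have h := hy B hyB hB
    have h2 : m ∣ B.ncard - 1 :=
      (Nat.Coprime.dvd_mul_left (by simpa using hodd.coprime_two_right)).1 h
    have h3 : 0 < B.ncard := (Set.ncard_pos (Set.toFinite _)).2 ⟨y, hyB⟩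
    have h5 := Set.ncard_le_card B
    rw [Nat.card_eq_fintype_card, hn] at h5
    rcases Nat.eq_zero_or_pos (B.ncard - 1) with h6 | h6
    · left
      rw [← Set.ncard_le_one_iff_subsingleton]
      omega
    · right
      have h4 := Nat.le_of_dvd h6 h2
      apply eq_univ_of_ncard
      rw [Nat.card_eq_fintype_card, hn]
      omega

lemma primitive_odd [IsGalois ℚ L] {F : ℤ[X]} (ι : L →ₐ[ℚ] PadicAlgCl p) {m : ℕ}
    (hn : Fintype.card (F.rootSet L) = m + 1)
    (H1 : ∀ x : F.rootSet L, ‖ι x‖ ^ m * (p : ℝ) ^ 2 = 1 ∨ ‖ι x‖ = 1)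
    (H2 : (∏ x : F.rootSet L, ‖ι x‖) * (p : ℝ) ^ 2 = 1)
    [MulAction.IsPretransitive Gal(L/ℚ) (F.rootSet L)] :
    MulAction.IsPreprimitive Gal(L/ℚ) (F.rootSet L) := by
  obtain ⟨y, hy⟩ := block_dvd ι hn H1 H2
  apply MulAction.IsPreprimitive.of_isTrivialBlock_base y
  intro B hyB hB
  have h := hy B hyB hB
  have h3 : 0 < B.ncard := (Set.ncard_pos (Set.toFinite _)).2 ⟨y, hyB⟩
  rcases Nat.eq_zero_or_pos (B.ncard - 1) with h6 | h6
  · left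
    rw [← Set.ncard_le_one_iff_subsingleton]
    omega
  · right
    have h4 := Nat.le_of_dvd (by omega) h
    apply hB.eq_univ_of_card_lt
    rw [Nat.card_eq_fintype_card, hn]
    omega

end blocks
end AltGal

namespace AltGal

section concl
variable {L : Type} [Field L] [NumberField L]

lemma galois_iso [IsGalois ℚ L] {F : ℤ[X]} [DecidableEq (F.rootSet L)] {n : ℕ}
    (hn : Fintype.card (F.rootSet L) = n)
    (hprim : MulAction.IsPreprimitive Gal(L/ℚ) (F.rootSet L))
    (heven : ∀ σ : Gal(L/ℚ), Equiv.Perm.sign (MulAction.toPerm σ : Equiv.Perm (F.rootSet L)) = 1)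
    (hfaith : ∀ σ : Gal(L/ℚ), (∀ x : F.rootSet L, σ • x = x) → σ = 1)
    (h3 : ∃ σ : Gal(L/ℚ), (MulAction.toPerm σ : Equiv.Perm (F.rootSet L)).IsThreeCycle) :
    Nonempty ((L ≃ₐ[ℚ] L) ≃* alternatingGroup (Fin n)) := by
  let φ : Gal(L/ℚ) →* Equiv.Perm (F.rootSet L) := MulAction.toPermHom _ _
  have hinj : Function.Injective φ := by
    rw [injective_iff_map_eq_one]
    intro σ hσ
    apply hfaith
    intro x
    exact congrArg (fun f : Equiv.Perm (F.rootSet L) => f x) hσ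
  have hprim' : MulAction.IsPreprimitive φ.range (F.rootSet L) := by
    let f : F.rootSet L →ₑ[φ.rangeRestrict] F.rootSet L :=
      { toFun := id
        map_smul' := fun _ _ => rfl }
    exact MulAction.IsPreprimitive.of_surjective (f := f) Function.surjective_id
  have hrange : φ.range = alternatingGroup (F.rootSet L) := by
    apply le_antisymm
    · rintro _ ⟨σ, rfl⟩
      exact Equiv.Perm.mem_alternatingGroup.2 (heven σ)
    · obtain ⟨σ, hσ⟩ := h3
      exact Equiv.Perm.alternatingGroup_le_of_isPreprimitive_of_isThreeCycle_mem hprim' hσ ⟨σ, rfl⟩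
  exact ⟨((φ.ofInjective hinj).trans (MulEquiv.subgroupCongr hrange)).trans
    (Fintype.equivFinOfCardEq hn).altCongrHom⟩

end concl

lemma exists_splitting_aux (F : ℤ[X]) (L : Type) [Field L] [hc : CharZero L] [iA : Algebra ℚ L]
    (hfd : FiniteDimensional ℚ L) (hg : IsGalois ℚ L)
    (hs : ((F.map (algebraMap ℤ ℚ)).map (algebraMap ℚ L)).Splits)
    (hadj : Algebra.adjoin ℚ ((F.map (algebraMap ℤ ℚ)).rootSet L) = ⊤) :
    ∃ (L : Type) (_ : Field L) (_ : NumberField L),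
      IsGalois ℚ L ∧ (F.map (algebraMap ℤ L)).Splits ∧ Algebra.adjoin ℚ (F.rootSet L) = ⊤ := by
  classical
  have hF : (F.map (algebraMap ℤ ℚ)).map (algebraMap ℚ L) = F.map (algebraMap ℤ L) := by
    rw [Polynomial.map_map]
    congr 1
    exact Subsingleton.elim _ _
  have hR : (F.map (algebraMap ℤ ℚ)).rootSet L = F.rootSet L := by
    rw [rootSet_def, rootSet_def, aroots_def, aroots_def, hF]
  rw [hF] at hs
  rw [hR] at hadj
  obtain rfl : iA = (DivisionRing.toRatAlgebra : Algebra ℚ L) := Subsingleton.elim _ _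
  exact ⟨L, inferInstance, { to_charZero := hc, to_finiteDimensional := hfd }, hg, hs, hadj⟩

/-- The splitting field of an integer polynomial, with its canonical `ℚ`-algebra structure. -/
lemma exists_splitting (F : ℤ[X]) :
    ∃ (L : Type) (_ : Field L) (_ : NumberField L),
      IsGalois ℚ L ∧ (F.map (algebraMap ℤ L)).Splits ∧ Algebra.adjoin ℚ (F.rootSet L) = ⊤ := by
  have hc : CharZero (F.map (algebraMap ℤ ℚ)).SplittingField := algebraRat.charZero _
  have : Normal ℚ (F.map (algebraMap ℤ ℚ)).SplittingField := SplittingField.instNormal _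
  exact exists_splitting_aux F (F.map (algebraMap ℤ ℚ)).SplittingField inferInstance
    ⟨⟩ (SplittingField.splits _) (SplittingField.adjoin_rootSet _)

lemma criterion_aux {L : Type} [Field L] [NumberField L] [IsGalois ℚ L] {F : ℤ[X]} {n : ℕ} (hm : F.Monic) (hdeg : F.natDegree = n)
    (A B : ℤ[X]) (κ γ : ℤ) (k : ℕ)
    (hid : A * derivative F - B * F = C κ * X ^ k * (X - C γ) ^ 2)
    (a₀ q : ℤ) (ha₀ : a₀ ≠ 0)
    (hs : (F.map (algebraMap ℤ L)).Splits) (hgen : Algebra.adjoin ℚ (F.rootSet L) = ⊤)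
    (hA₀ : F.map (algebraMap ℤ L) = ∏ x : F.rootSet L, (X - C (x : L)) →
      ∏ x : F.rootSet L, aeval (x : L) A = a₀)
    (hq : (-1) ^ (n * (n - 1) / 2) * (κ ^ n * ((-1) ^ n * F.eval 0) ^ k * (F.eval γ) ^ 2)
      = a₀ * q ^ 2)
    {r : ℕ} (hr : r.Prime) (hκ : ¬ (r : ℤ) ∣ κ) (hγ : ¬ (r : ℤ) ∣ γ) (h0 : ¬ (r : ℤ) ∣ F.eval 0)
    (hA : ¬ (r : ℤ) ∣ A.eval γ) (h1 : (r : ℤ) ∣ F.eval γ) (h2 : ¬ (r : ℤ) ^ 2 ∣ F.eval γ)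
    (hprim : F.map (algebraMap ℤ L) = ∏ x : F.rootSet L, (X - C (x : L)) →
      Fintype.card (F.rootSet L) = n →
      MulAction.IsPreprimitive Gal(L/ℚ) (F.rootSet L)) :
    Nonempty ((L ≃ₐ[ℚ] L) ≃* alternatingGroup (Fin n)) := by
  classical
  have hev : ∀ (z : ℤ) (g : ℤ[X]), aeval (z : L) g = ((g.eval z : ℤ) : L) := by
    intro z g
    have := aeval_algebraMap_apply L z g
    simpa using this
  have hκ0 : κ ≠ 0 := fun h => hκ (by simp [h])
  have hγ0 : F.eval γ ≠ 0 := fun h => h2 (by simp [h])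
  have h00 : F.eval 0 ≠ 0 := fun h => h0 (by simp [h])
  have hidL : ∀ x : L, aeval x F = 0 →
      aeval x A * aeval x (derivative F) = κ * x ^ k * (x - γ) ^ 2 := by
    intro x hx
    have := congrArg (aeval x) hid
    simpa [hx] using this
  have hder : ∀ x : L, aeval x F = 0 → aeval x (derivative F) ≠ 0 := by
    intro x hx h
    have h3 := (hidL x hx).symm
    rw [h, mul_zero, mul_eq_zero, mul_eq_zero] at h3
    rcases h3 with (h3 | h3) | h3
    · exact hκ0 (by exact_mod_cast h3)
    · have h4 := eq_zero_of_pow_eq_zero h3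
      have := hev 0 F
      rw [Int.cast_zero, ← h4, hx] at this
      exact h00 (by exact_mod_cast this.symm)
    · have h4 := sub_eq_zero.1 (eq_zero_of_pow_eq_zero h3)
      have := hev γ F
      rw [← h4, hx] at this
      exact hγ0 (by exact_mod_cast this.symm)
  have hF := map_eq_prod hm hs hder
  have hcard : Fintype.card (F.rootSet L) = n := by rw [card_rootSet hF hm, hdeg]
  have hroot : ∀ x : F.rootSet L, aeval (x : L) F = 0 := fun x => (mem_rootSet.1 x.2).2
  have hcast : ∀ z : ℤ, ((F.eval z : ℤ) : L) = (-1) ^ n * ∏ x : F.rootSet L, ((x : L) - z) := by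
    intro z
    rw [← hev, aeval_eq_prod hF, ← hcard, ← Finset.card_univ, ← Finset.prod_const,
      ← Finset.prod_mul_distrib]
    exact Finset.prod_congr rfl fun x _ => by ring
  have hprodroot : ∏ x : F.rootSet L, (x : L) = (-1) ^ n * ((F.eval 0 : ℤ) : L) := by
    rw [hcast 0, ← mul_assoc, ← mul_pow]
    simp
  have hdisc : (-1) ^ (n * (n - 1) / 2) * ∏ x : F.rootSet L, aeval (x : L) (derivative F)
      = (algebraMap ℚ L (q : ℚ)) ^ 2 := by
    have ha₀' : (a₀ : L) ≠ 0 := by exact_mod_cast ha₀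
    apply mul_left_cancel₀ ha₀'
    have e0 : ∏ x : F.rootSet L, (aeval (x : L) A * aeval (x : L) (derivative F))
        = ∏ x : F.rootSet L, ((κ : L) * (x : L) ^ k * ((x : L) - γ) ^ 2) :=
      Finset.prod_congr rfl fun x _ => hidL x (hroot x)
    have e1 : (a₀ : L) * ∏ x : F.rootSet L, aeval (x : L) (derivative F)
        = κ ^ n * ((-1) ^ n * ((F.eval 0 : ℤ) : L)) ^ k * ((F.eval γ : ℤ) : L) ^ 2 := by
      rw [← hA₀ hF, ← Finset.prod_mul_distrib,
        e0, Finset.prod_mul_distrib,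
        Finset.prod_mul_distrib, Finset.prod_pow, Finset.prod_pow, hprodroot, hcast γ,
        Finset.prod_const, Finset.card_univ, hcard, mul_pow ((-1) ^ n) _ 2, ← pow_mul, mul_comm n 2,
        pow_mul]
      simp
    have e2 := congrArg (fun z : ℤ => (z : L)) hq
    push_cast at e2
    rw [mul_left_comm, e1, e2]
    simp
  have heven := sign_eq_one hF hcard (q : ℚ) hdisc
  have hfaith : ∀ σ : Gal(L/ℚ), (∀ x : F.rootSet L, σ • x = x) → σ = 1 := by
    intro σ hσ
    have h4 : (σ : L →ₐ[ℚ] L) = AlgHom.id ℚ L := by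
      apply AlgHom.ext_of_adjoin_eq_top hgen
      intro x hx
      exact congrArg Subtype.val (hσ ⟨x, hx⟩)
    ext x
    exact congrArg (fun g : L →ₐ[ℚ] L => g x) h4
  have h3 := exists_threeCycle hF hm heven hfaith A B κ γ k hid hr hκ hγ h0 hA h1 h2
  exact galois_iso hcard (hprim hF hcard) heven hfaith h3

theorem criterion {F : ℤ[X]} {n : ℕ} (hm : F.Monic) (hdeg : F.natDegree = n)
    (A B : ℤ[X]) (κ γ : ℤ) (k : ℕ)
    (hid : A * derivative F - B * F = C κ * X ^ k * (X - C γ) ^ 2)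
    (a₀ q : ℤ) (ha₀ : a₀ ≠ 0)
    (hA₀ : ∀ (L : Type) [Field L] [NumberField L],
      F.map (algebraMap ℤ L) = ∏ x : F.rootSet L, (X - C (x : L)) →
      ∏ x : F.rootSet L, aeval (x : L) A = a₀)
    (hq : (-1) ^ (n * (n - 1) / 2) * (κ ^ n * ((-1) ^ n * F.eval 0) ^ k * (F.eval γ) ^ 2)
      = a₀ * q ^ 2)
    {r : ℕ} (hr : r.Prime) (hκ : ¬ (r : ℤ) ∣ κ) (hγ : ¬ (r : ℤ) ∣ γ) (h0 : ¬ (r : ℤ) ∣ F.eval 0)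
    (hA : ¬ (r : ℤ) ∣ A.eval γ) (h1 : (r : ℤ) ∣ F.eval γ) (h2 : ¬ (r : ℤ) ^ 2 ∣ F.eval γ)
    (hprim : ∀ (L : Type) [Field L] [NumberField L] [IsGalois ℚ L],
      F.map (algebraMap ℤ L) = ∏ x : F.rootSet L, (X - C (x : L)) →
      Fintype.card (F.rootSet L) = n →
      MulAction.IsPreprimitive Gal(L/ℚ) (F.rootSet L)) :
    ∃ (M : Type) (_ : Field M) (_ : Algebra ℚ M),
      FiniteDimensional ℚ M ∧ IsGalois ℚ M ∧
        Nonempty ((M ≃ₐ[ℚ] M) ≃* alternatingGroup (Fin n)) := by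
  obtain ⟨L, _, _, hg, hs, hgen⟩ := exists_splitting F
  exact ⟨L, inferInstance, inferInstance, inferInstance, inferInstance,
    criterion_aux hm hdeg A B κ γ k hid a₀ q ha₀ hs hgen (hA₀ L) hq hr hκ hγ h0 hA h1 h2 (hprim L)⟩

end AltGal

namespace AltGal

section ultra
variable {K : Type*} [NormedField K] [IsUltrametricDist K]

lemma norm_sub_of_lt {z a : K} (h : ‖z‖ < ‖a‖) : ‖z - a‖ = ‖a‖ := by
  rw [sub_eq_add_neg, IsUltrametricDist.norm_add_eq_max_of_norm_ne_norm (by rw [norm_neg]; exact h.ne),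
    norm_neg, max_eq_right h.le]

lemma norm_sub_of_gt {z a : K} (h : ‖a‖ < ‖z‖) : ‖z - a‖ = ‖z‖ := by
  rw [norm_sub_rev, norm_sub_of_lt h]

lemma norm_step {z a u : K} {m : ℕ} {q : ℝ} (ha : ‖a‖ = 1) (h : z ^ m * (z - a) = u)
    (hlt : ‖z‖ < 1 → ‖u‖ * q = 1) (hgt : 1 < ‖z‖ → ‖u‖ < ‖z‖ ^ (m + 1)) :
    ‖z‖ ^ m * q = 1 ∨ ‖z‖ = 1 := by
  rcases lt_trichotomy ‖z‖ 1 with h1 | h1 | h1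
  · left
    rw [← hlt h1, ← h, norm_mul, norm_pow, norm_sub_of_lt (by rw [ha]; exact h1), ha, mul_one]
  · exact Or.inr h1
  · exfalso
    have := hgt h1
    rw [← h, norm_mul, norm_pow, norm_sub_of_gt (by rw [ha]; exact h1), pow_succ] at this
    exact lt_irrefl _ this

/-- Newton polygon of the even degree family. -/
lemma step_even {z a b t : K} {m : ℕ} {q : ℝ} (hq : 1 < q) (ha : ‖a‖ = 1)
    (hb : ‖b‖ * q ≤ 1) (ht : ‖t‖ * q = 1)
    (h : z ^ (m + 2) * (z - a) = -(t + b * z ^ (m + 1))) :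
    ‖z‖ ^ (m + 2) * q = 1 ∨ ‖z‖ = 1 := by
  have hq0 : 0 < q := by linarith
  have hbt : ‖b‖ ≤ ‖t‖ := by
    rw [← ht] at hb
    exact le_of_mul_le_mul_right hb hq0
  have ht0 : 0 < ‖t‖ := by
    by_contra h0
    nlinarith [norm_nonneg t]
  have ht1 : ‖t‖ < 1 := by nlinarith
  refine norm_step ha h (fun h1 => ?_) (fun h1 => ?_)
  · have h2 : ‖b * z ^ (m + 1)‖ < ‖t‖ := by
      rw [norm_mul, norm_pow]
      have : ‖z‖ ^ (m + 1) < 1 := pow_lt_one₀ (norm_nonneg _) h1 (by omega)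
      nlinarith [norm_nonneg b, pow_nonneg (norm_nonneg z) (m + 1)]
    rw [norm_neg, IsUltrametricDist.norm_add_eq_max_of_norm_ne_norm h2.ne', max_eq_left h2.le, ht]
  · rw [norm_neg]
    have e1 : (1 : ℝ) < ‖z‖ ^ (m + 2 + 1) := one_lt_pow₀ h1 (by omega)
    have e2 : ‖z‖ ^ (m + 1) < ‖z‖ ^ (m + 2 + 1) := pow_lt_pow_right₀ h1 (by omega)
    refine lt_of_le_of_lt (IsUltrametricDist.norm_add_le_max _ _) (max_lt (by linarith) ?_)
    rw [norm_mul, norm_pow]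
    nlinarith [norm_nonneg b, pow_nonneg (norm_nonneg z) (m + 1)]

/-- Newton polygon of the odd degree family at `2`. -/
lemma step_odd {z a b t : K} {m : ℕ} {q : ℝ} (hq : 1 < q) (ha : ‖a‖ = 1)
    (hb : ‖b‖ = 1) (ht : ‖t‖ * q = 1)
    (h : z ^ m * (z - a) = t * (z - b)) :
    ‖z‖ ^ m * q = 1 ∨ ‖z‖ = 1 := by
  have hq0 : 0 < q := by linarith
  have ht0 : 0 < ‖t‖ := by
    by_contra h0
    nlinarith [norm_nonneg t]
  have ht1 : ‖t‖ < 1 := by nlinarith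
  refine norm_step ha h (fun h1 => ?_) (fun h1 => ?_)
  · rw [norm_mul, norm_sub_of_lt (by rw [hb]; exact h1), hb, mul_one, ht]
  · rw [norm_mul, norm_sub_of_gt (by rw [hb]; exact h1)]
    have e2 : ‖z‖ ≤ ‖z‖ ^ (m + 1) := le_self_pow₀ h1.le (by omega)
    nlinarith

/-- Newton polygon of the odd degree family at a prime dividing the degree. -/
lemma step_odd' {z a b t : K} {m : ℕ} {q : ℝ} (hq : 1 < q) (hm : m ≠ 0) (ha : ‖a‖ * q ≤ 1)
    (hb : ‖b‖ = 1) (ht : ‖t‖ * q = 1)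
    (h : z ^ (m + 1) = a * z ^ m + t * (z - b)) :
    ‖z‖ ^ (m + 1) * q = 1 := by
  have hq0 : 0 < q := by linarith
  have ht0 : 0 < ‖t‖ := by
    by_contra h0
    nlinarith [norm_nonneg t]
  have hat : ‖a‖ ≤ ‖t‖ := by
    rw [← ht] at ha
    exact le_of_mul_le_mul_right ha hq0
  have ht1 : ‖t‖ < 1 := by nlinarith
  rcases lt_or_ge ‖z‖ 1 with h1 | h1
  · have e1 : ‖t * (z - b)‖ = ‖t‖ := by
      rw [norm_mul, norm_sub_of_lt (by rw [hb]; exact h1), hb, mul_one]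
    have h2 : ‖a * z ^ m‖ < ‖t‖ := by
      rw [norm_mul, norm_pow]
      have : ‖z‖ ^ m < 1 := pow_lt_one₀ (norm_nonneg _) h1 hm
      nlinarith [norm_nonneg a, pow_nonneg (norm_nonneg z) m]
    rw [← norm_pow, h, IsUltrametricDist.norm_add_eq_max_of_norm_ne_norm (by rw [e1]; exact h2.ne),
      e1, max_eq_right h2.le, ht]
  · exfalso
    have e0 : ‖z‖ ≤ ‖z‖ ^ m := le_self_pow₀ h1 hm
    have e4 : (1 : ℝ) ≤ ‖z‖ ^ m := one_le_pow₀ h1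
    have e1 : ‖z‖ ^ m ≤ ‖z‖ ^ (m + 1) := pow_le_pow_right₀ h1 (by omega)
    have e2 : ‖z - b‖ ≤ ‖z‖ ^ m := by
      rw [sub_eq_add_neg]
      refine (IsUltrametricDist.norm_add_le_max _ _).trans (max_le e0 ?_)
      rw [norm_neg, hb]
      exact e4
    have e3 : ‖z ^ (m + 1)‖ < ‖z ^ (m + 1)‖ := by
      conv_lhs => rw [h]
      refine lt_of_le_of_lt (IsUltrametricDist.norm_add_le_max _ _) (max_lt ?_ ?_)
      · rw [norm_mul, norm_pow, norm_pow]
        nlinarith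
      · rw [norm_mul, norm_pow]
        nlinarith [norm_nonneg (z - b)]
    exact lt_irrefl _ e3

end ultra

section padic
variable {p : ℕ} [hp : Fact p.Prime]

lemma ultra : IsUltrametricDist (PadicAlgCl p) :=
  IsUltrametricDist.isUltrametricDist_of_isNonarchimedean_norm (PadicAlgCl.isNonarchimedean p)

lemma norm_intCast (z : ℤ) : ‖(z : PadicAlgCl p)‖ = ‖(z : ℚ_[p])‖ := by
  rw [← PadicAlgCl.norm_extends p (z : ℚ_[p])]
  simp

lemma norm_unit {z : ℤ} (h : ¬ (p : ℤ) ∣ z) : ‖(z : PadicAlgCl p)‖ = 1 := by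
  rw [norm_intCast]
  apply le_antisymm (Padic.norm_int_le_one z)
  by_contra h1
  exact h (Padic.norm_intCast_lt_one_iff.1 (not_le.1 h1))

lemma norm_sq_le {z : ℤ} (h : (p : ℤ) ^ 2 ∣ z) : ‖(z : PadicAlgCl p)‖ * (p : ℝ) ^ 2 ≤ 1 := by
  have hp0 : (0 : ℝ) < p := by exact_mod_cast hp.out.pos
  have h1 := (Padic.norm_int_le_pow_iff_dvd z 2).2 (by exact_mod_cast h)
  rw [norm_intCast]
  calc _ ≤ (p : ℝ) ^ (-(2 : ℕ) : ℤ) * (p : ℝ) ^ 2 := by gcongr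
    _ = 1 := by rw [zpow_neg, zpow_natCast]; field_simp

lemma norm_sq_eq {u v : ℤ} (hu : ¬ (p : ℤ) ∣ u) (hv : ¬ (p : ℤ) ∣ v) :
    ‖((v * (p * u) ^ 2 : ℤ) : PadicAlgCl p)‖ * (p : ℝ) ^ 2 = 1 := by
  have hp0 : (0 : ℝ) < p := by exact_mod_cast hp.out.pos
  rw [Int.cast_mul, Int.cast_pow, Int.cast_mul, norm_mul, norm_pow, norm_mul, norm_unit hu,
    norm_unit hv, norm_intCast, Int.cast_natCast, Padic.norm_p]
  field_simp

variable {L : Type} [Field L] [NumberField L]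

lemma exists_embedding : Nonempty (L →ₐ[ℚ] PadicAlgCl p) := ⟨IsAlgClosed.lift⟩

lemma norm_prod_roots {F : ℤ[X]} (ι : L →ₐ[ℚ] PadicAlgCl p)
    (hF : F.map (algebraMap ℤ L) = ∏ x : F.rootSet L, (X - C (x : L))) :
    ∏ x : F.rootSet L, ‖ι x‖ = ‖((F.eval 0 : ℤ) : PadicAlgCl p)‖ := by
  have h := aeval_eq_prod hF 0
  have h0 : aeval (0 : L) F = ((F.eval 0 : ℤ) : L) := by
    have := aeval_algebraMap_apply L (0 : ℤ) F
    simpa using this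
  have h1 : ((F.eval 0 : ℤ) : PadicAlgCl p) = ι (aeval (0 : L) F) := by rw [h0]; simp
  rw [h1, h, map_prod, norm_prod]
  exact Finset.prod_congr rfl fun x _ => by simp

end padic

/-- The arithmetic choice of the parameter. -/
lemma exists_param {p : ℕ} (hp : p.Prime) (B d ε : ℤ) (hε : ε = 1 ∨ ε = -1)
    (hB : B ≠ 0) (h2B : 2 ∣ B) (hpB : (p : ℤ) ∣ B) (hd : 1 ≤ d) :
    ∃ (r : ℕ) (u : ℤ), r.Prime ∧ ¬ (r : ℤ) ∣ B ∧ ¬ (r : ℤ) ∣ 2 * p * u ∧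
      (r : ℤ) ∣ (2 * p * u) ^ 2 + ε * d ∧ ¬ (r : ℤ) ^ 2 ∣ (2 * p * u) ^ 2 + ε * d ∧
      ¬ 2 ∣ u ∧ ¬ (p : ℤ) ∣ u := by
  have hεε : ε * ε = 1 := by rcases hε with h | h <;> simp [h]
  have hB4 : 4 ≤ B ^ 2 := by
    obtain ⟨b, rfl⟩ := h2B
    have : b ≠ 0 := by rintro rfl; simp at hB
    have : 0 < b ^ 2 := by positivity
    nlinarith
  have hne : (B ^ 2 * d + ε).natAbs ≠ 1 := by
    have : 3 ≤ B ^ 2 * d + ε := by rcases hε with h | h <;> rw [h] <;> nlinarith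
    omega
  obtain ⟨r, hr, hrd⟩ := Nat.exists_prime_and_dvd hne
  have hrd : (r : ℤ) ∣ B ^ 2 * d + ε := Int.natCast_dvd.2 hrd
  have hrp : Prime (r : ℤ) := Nat.prime_iff_prime_int.1 hr
  have hr1 : ¬ (r : ℤ) ∣ ε := by
    intro h
    exact hrp.not_isUnit (isUnit_of_dvd_one (hεε ▸ h.mul_right ε))
  have hrB : ¬ (r : ℤ) ∣ B := by
    intro h
    exact hr1 ((Int.dvd_add_right ((h.pow two_ne_zero).mul_right d)).1 hrd) 
  have hrD : ¬ (r : ℤ) ∣ d := by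
    intro h
    exact hr1 ((Int.dvd_add_right (h.mul_left _)).1 hrd) 
  have hr2 : ¬ (r : ℤ) ∣ 2 := fun h => hrB (h.trans h2B)
  have hrP : ¬ (r : ℤ) ∣ p := fun h => hrB (h.trans hpB)
  have h0 : (r : ℤ) ∣ (B * d) ^ 2 + ε * d := by
    have : (B * d) ^ 2 + ε * d = (B ^ 2 * d + ε) * d := by ring
    rw [this]
    exact hrd.mul_right _
  obtain ⟨s, hs1, hs2⟩ : ∃ s : ℤ, (r : ℤ) ∣ s ^ 2 + ε * d ∧ ¬ (r : ℤ) ^ 2 ∣ s ^ 2 + ε * d := by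
    by_cases h1 : (r : ℤ) ^ 2 ∣ (B * d) ^ 2 + ε * d
    · refine ⟨B * d + r, ?_, ?_⟩
      · have : (B * d + r) ^ 2 + ε * d = ((B * d) ^ 2 + ε * d) + r * (2 * (B * d) + r) := by ring
        rw [this]
        exact dvd_add h0 (dvd_mul_right _ _)
      · intro h2
        have : (B * d + r) ^ 2 + ε * d = ((B * d) ^ 2 + ε * d) + r ^ 2 + r * (2 * (B * d)) := by ring
        rw [this] at h2
        have h3 := (Int.dvd_add_right (dvd_add h1 dvd_rfl)).1 h2
        rw [pow_two] at h3
        have h4 := (mul_dvd_mul_iff_left hrp.ne_zero).1 h3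
        rcases hrp.dvd_or_dvd h4 with h | h
        · exact hr2 h
        · rcases hrp.dvd_or_dvd h with h | h
          · exact hrB h
          · exact hrD h
    · exact ⟨_, h0, h1⟩
  have hcop : IsCoprime ((r : ℤ) ^ 2) ((2 * p) ^ 2) := by
    apply IsCoprime.pow
    refine (Prime.coprime_iff_not_dvd hrp).2 fun h => ?_
    rcases hrp.dvd_or_dvd h with h | h
    · exact hr2 h
    · exact hrP h
  obtain ⟨a, b, hab⟩ := hcop
  have hu : 2 * (p : ℤ) * (1 + 2 * p * (s * b - 2 * p * b)) = s + r ^ 2 * (2 * p * a - s * a) := by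
    linear_combination (s - 2 * p) * hab
  have hsq : (2 * (p : ℤ) * (1 + 2 * p * (s * b - 2 * p * b))) ^ 2 + ε * d = (s ^ 2 + ε * d) +
      r ^ 2 * ((2 * p * a - s * a) * (2 * s + r ^ 2 * (2 * p * a - s * a))) := by
    rw [hu]; ring
  refine ⟨r, 1 + 2 * p * (s * b - 2 * p * b), hr, hrB, ?_, ?_, ?_, ?_, ?_⟩
  · intro h
    rw [hu] at h
    have h1 : (r : ℤ) ∣ s :=
      (Int.dvd_add_left ((dvd_pow_self _ two_ne_zero).mul_right _)).1 h
    have h2 := (Int.dvd_add_right (h1.pow two_ne_zero)).1 hs1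
    rcases hrp.dvd_or_dvd h2 with h | h
    · exact hr1 h
    · exact hrD h
  · rw [hsq]
    exact dvd_add hs1 ((dvd_pow_self _ two_ne_zero).mul_right _)
  · rw [hsq]
    intro h
    exact hs2 ((Int.dvd_add_left (dvd_mul_right _ _)).1 h)
  · intro h
    rw [mul_assoc] at h
    have h1 := (Int.dvd_add_left (dvd_mul_right _ _)).1 h
    omega
  · intro h
    have h1 : (p : ℤ) ∣ 1 :=
      (Int.dvd_add_left (Dvd.dvd.mul_right (dvd_mul_left _ _) _)).1 h
    exact (Nat.prime_iff_prime_int.1 hp).not_isUnit (isUnit_of_dvd_one h1)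

end AltGal

namespace AltGal

/-- The polynomial used in even degree `2 j + 4`. -/
noncomputable def evenPoly (j : ℕ) (N T : ℤ) : ℤ[X] :=
  X ^ (2 * j + 4) + (-(C (2 * N * (N - 2)) * X ^ (2 * j + 3)) +
    C (N * (N - 1) ^ 2 * (N - 2)) * X ^ (2 * j + 2) + C T)

lemma evenPoly_natDegree (j : ℕ) (N T : ℤ) :
    (-(C (2 * N * (N - 2)) * X ^ (2 * j + 3)) +
    C (N * (N - 1) ^ 2 * (N - 2)) * X ^ (2 * j + 2) + C T).degree < ((2 * j + 4 : ℕ) : WithBot ℕ) := by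
  refine lt_of_le_of_lt (b := ((2 * j + 3 : ℕ) : WithBot ℕ)) ?_ (by norm_cast; omega)
  compute_degree
  refine max_le (max_le ?_ ?_) (Nat.cast_nonneg _)
  · exact le_of_eq (by push_cast; rfl)
  · have h : ((2 * j + 2 : ℕ) : WithBot ℕ) ≤ ((2 * j + 3 : ℕ) : WithBot ℕ) :=
      Nat.cast_le.2 (by omega)
    push_cast at h ⊢
    exact h

lemma evenPoly_monic (j : ℕ) (N T : ℤ) : (evenPoly j N T).Monic :=
  monic_X_pow_add (evenPoly_natDegree j N T)

lemma evenPoly_deg (j : ℕ) (N T : ℤ) : (evenPoly j N T).natDegree = 2 * j + 4 := by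
  apply natDegree_eq_of_degree_eq_some
  rw [evenPoly, degree_add_eq_left_of_degree_lt, degree_X_pow]
  rw [degree_X_pow]
  exact evenPoly_natDegree j N T

lemma evenPoly_derivative (j : ℕ) (T : ℤ) :
    derivative (evenPoly j (2 * j + 4) T) = C (2 * j + 4 : ℤ) * X ^ (2 * j + 1) *
      (X - C (((2 * j + 4 : ℤ) - 1) * ((2 * j + 4 : ℤ) - 2))) ^ 2 := by
  simp only [evenPoly, derivative_add, derivative_neg, derivative_C_mul, derivative_X_pow,
    derivative_C]
  rw [show 2 * j + 4 - 1 = 2 * j + 1 + 2 by omega, show 2 * j + 3 - 1 = 2 * j + 1 + 1 by omega,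
    show 2 * j + 2 - 1 = 2 * j + 1 by omega]
  simp only [Nat.cast_add, Nat.cast_mul, Nat.cast_ofNat, map_mul, map_add, map_sub, map_pow,
    map_natCast, map_ofNat, map_one]
  ring

lemma aeval_evenPoly {R : Type*} [CommRing R] (j : ℕ) (N T : ℤ) (z : R) :
    aeval z (evenPoly j N T) = z ^ (2 * j + 4) + (-((2 * N * (N - 2) : ℤ) * z ^ (2 * j + 3)) +
      ((N * (N - 1) ^ 2 * (N - 2) : ℤ) : R) * z ^ (2 * j + 2) + (T : R)) := by
  rw [evenPoly]
  generalize 2 * N * (N - 2) = a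
  generalize N * (N - 1) ^ 2 * (N - 2) = b
  simp

lemma eval_evenPoly (j : ℕ) (N T z : ℤ) :
    (evenPoly j N T).eval z = z ^ (2 * j + 2) *
      (z ^ 2 - 2 * N * (N - 2) * z + N * (N - 1) ^ 2 * (N - 2)) + T := by
  simp [evenPoly]
  ring

lemma evenPoly_noroot (j : ℕ) (N δ v : ℤ) (hN : 2 ∣ N) (hδ : δ = 1 ∨ δ = -1) (hv : ¬ 2 ∣ v) (z : ℤ) :
    (evenPoly j N (δ * (2 * v) ^ 2)).eval z ≠ 0 := by
  intro h
  rw [eval_evenPoly] at h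
  obtain ⟨N, rfl⟩ := hN
  have hz : 2 ∣ z := by
    have h1 : (2 : ℤ) ∣ z ^ (2 * j + 4) := by
      refine ⟨-(z ^ (2 * j + 2) * (-2 * N * (2 * N - 2) * z + N * (2 * N - 1) ^ 2 * (2 * N - 2))
        + δ * 2 * v ^ 2), ?_⟩
      linear_combination h
    exact Int.prime_two.dvd_of_dvd_pow h1
  obtain ⟨w, rfl⟩ := hz
  have h1 : (2 : ℤ) ∣ v ^ 2 := by
    refine ⟨-δ * (w ^ 2 * (2 * w) ^ (2 * j)) * (2 * w ^ 2 - 2 * (2 * N) * (2 * N - 2) * w +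
      N * (2 * N - 1) ^ 2 * (2 * N - 2) / 1), ?_⟩
    have hδδ : δ * δ = 1 := by rcases hδ with h | h <;> simp [h]
    have h4 : (4 : ℤ) ≠ 0 := by norm_num
    apply mul_left_cancel₀ h4
    rw [Int.ediv_one]
    linear_combination δ * h - 4 * v ^ 2 * hδδ
  exact hv (Int.prime_two.dvd_of_dvd_pow h1)

lemma evenPoly_prim (j : ℕ) (δ u : ℤ) {p : ℕ} [hp : Fact p.Prime] (hδ : δ = 1 ∨ δ = -1)
    (hpn : p ∣ 2 * j + 3) (hu2 : ¬ 2 ∣ u) (hup : ¬ (p : ℤ) ∣ u)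
    (L : Type) [Field L] [NumberField L] [IsGalois ℚ L]
    (hF : (evenPoly j (2 * j + 4) (δ * (2 * p * u) ^ 2)).map (algebraMap ℤ L) =
      ∏ x : (evenPoly j (2 * j + 4) (δ * (2 * p * u) ^ 2)).rootSet L, (X - C (x : L)))
    (hcard : Fintype.card ((evenPoly j (2 * j + 4) (δ * (2 * p * u) ^ 2)).rootSet L) = 2 * j + 4) :
    MulAction.IsPreprimitive Gal(L/ℚ) ((evenPoly j (2 * j + 4) (δ * (2 * p * u) ^ 2)).rootSet L) := by
  have hpp : Prime (p : ℤ) := Nat.prime_iff_prime_int.1 hp.out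
  have hp1 : (1 : ℝ) < p := by exact_mod_cast hp.out.one_lt
  have hpn' : (p : ℤ) ∣ 2 * j + 3 := by exact_mod_cast hpn
  have hp1' : ¬ (p : ℤ) ∣ 1 := fun h => hpp.not_isUnit (isUnit_of_dvd_one h)
  have hp2 : ¬ (p : ℤ) ∣ 2 := by
    intro h
    apply hp1'
    have h3 := Dvd.dvd.sub hpn' (h.mul_right (j + 1))
    ring_nf at h3
    exact h3
  have hδp : ¬ (p : ℤ) ∣ δ * 2 ^ 2 := by
    intro h
    rcases hpp.dvd_or_dvd h with h | h
    · rcases hδ with rfl | rfl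
      · exact hp1' h
      · exact hp1' (by simpa using h)
    · exact hp2 (hpp.dvd_of_dvd_pow h)
  have hT : ‖((δ * (2 * p * u) ^ 2 : ℤ) : PadicAlgCl p)‖ * (p : ℝ) ^ 2 = 1 := by
    rw [← norm_sq_eq hup hδp]
    congr 3
    ring
  obtain ⟨ι⟩ := exists_embedding (p := p) (L := L)
  have := ultra (p := p)
  have ha : ‖((2 * (2 * j + 4) * ((2 * j + 4) - 2) : ℤ) : PadicAlgCl p)‖ = 1 := by
    apply norm_unit
    intro h
    rcases hpp.dvd_or_dvd h with h | h
    · rcases hpp.dvd_or_dvd h with h | h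
      · exact hp2 h
      · have h3 := Dvd.dvd.sub h hpn'
        ring_nf at h3
        exact hp1' h3
    · have h3 := Dvd.dvd.sub hpn' h
      ring_nf at h3
      exact hp1' h3
  have hb : ‖(((2 * j + 4) * ((2 * j + 4) - 1) ^ 2 * ((2 * j + 4) - 2) : ℤ) : PadicAlgCl p)‖
      * (p : ℝ) ^ 2 ≤ 1 := by
    apply norm_sq_le
    refine Dvd.dvd.mul_right (Dvd.dvd.mul_left (pow_dvd_pow_of_dvd ?_ 2) _) _
    rwa [show (2 * (j : ℤ) + 4) - 1 = 2 * j + 3 by ring]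
  refine primitive_even ι (m := 2 * j + 3) (evenPoly_monic _ _ _) hcard ⟨j + 1, by ring⟩ ?_ ?_ ?_
  · intro x
    have hx : aeval (x : L) (evenPoly j (2 * j + 4) (δ * (2 * p * u) ^ 2)) = 0 :=
      (mem_rootSet.1 x.2).2
    have hx2 := congrArg ι hx
    rw [aeval_evenPoly] at hx2
    simp only [map_add, map_neg, map_mul, map_pow, map_intCast, map_zero] at hx2
    refine step_even (m := 2 * j + 1) (one_lt_pow₀ hp1 two_ne_zero) ha hb hT ?_
    linear_combination hx2
  · rw [norm_prod_roots ι hF, eval_evenPoly, zero_pow (by omega), zero_mul, zero_add, hT]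
  · intro z
    have := evenPoly_noroot j (2 * j + 4) δ (p * u) ⟨j + 2, by ring⟩ hδ ?_ z
    · rwa [← mul_assoc] at this
    · intro h
      rcases Int.prime_two.dvd_or_dvd h with h | h
      · have : 2 ∣ p := by exact_mod_cast h
        rw [Nat.prime_dvd_prime_iff_eq Nat.prime_two hp.out] at this
        exact hp2 (by rw [← this]; rfl)
      · exact hu2 h

theorem even_case (j : ℕ) :
    ∃ (M : Type) (_ : Field M) (_ : Algebra ℚ M),
      FiniteDimensional ℚ M ∧ IsGalois ℚ M ∧
        Nonempty ((M ≃ₐ[ℚ] M) ≃* alternatingGroup (Fin (2 * j + 4))) := by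
  obtain ⟨p, hp, hpn⟩ := Nat.exists_prime_and_dvd (n := 2 * j + 3) (by omega)
  have : Fact p.Prime := ⟨hp⟩
  let N : ℤ := 2 * j + 4
  have hN : N = 2 * j + 4 := rfl
  let c : ℤ := (N - 1) * (N - 2)
  have hc : 1 ≤ c := by
    have : (0 : ℤ) ≤ j := by positivity
    simp only [c, hN]
    nlinarith
  obtain ⟨δ, hδ, hδ'⟩ : ∃ δ : ℤ, (δ = 1 ∨ δ = -1) ∧ δ = (-1) ^ j :=
    ⟨_, neg_one_pow_eq_or ℤ j, rfl⟩
  have hδδ : δ * δ = 1 := by rcases hδ with h | h <;> simp [h]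
  have hpn' : (p : ℤ) ∣ N - 1 := by
    have : (p : ℤ) ∣ 2 * j + 3 := by exact_mod_cast hpn
    convert this using 1
    rw [hN]; ring
  obtain ⟨r, u, hr, hrB, hrs, h1, h2, hu2, hup⟩ := exists_param hp (2 * N * ((N - 1) * (N - 2)))
    (2 * c ^ (2 * j + 3)) δ hδ (by
      have : (0 : ℤ) ≤ j := by positivity
      have : 0 < N := by rw [hN]; positivity
      have : 0 < (N - 1) * (N - 2) := by change 0 < c; linarith
      positivity) 
    (Dvd.dvd.mul_right (dvd_mul_right _ _) _) (Dvd.dvd.mul_left (hpn'.mul_right _) _)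
    (by have := one_le_pow₀ (n := 2 * j + 3) hc; linarith)
  have hrp : Prime (r : ℤ) := Nat.prime_iff_prime_int.1 hr
  have hr1 : ¬ (r : ℤ) ∣ δ := by
    intro h
    exact hrp.not_isUnit (isUnit_of_dvd_one (hδδ ▸ h.mul_right δ))
  let S : ℤ := 2 * p * u
  have hFc : (evenPoly j N (δ * S ^ 2)).eval c = δ * (S ^ 2 + δ * (2 * c ^ (2 * j + 3))) := by
    rw [eval_evenPoly]
    simp only [c]
    linear_combination (-(2 * ((N - 1) * (N - 2)) ^ (2 * j + 3))) * hδδ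
  have hF0 : (evenPoly j N (δ * S ^ 2)).eval 0 = δ * S ^ 2 := by
    rw [eval_evenPoly, zero_pow (by omega), zero_mul, zero_add]
  refine criterion (F := evenPoly j N (δ * S ^ 2)) (evenPoly_monic _ _ _) (evenPoly_deg _ _ _)
    1 0 N c (2 * j + 1) ?_ 1 (N ^ (j + 2) * S ^ (2 * j + 1) * (evenPoly j N (δ * S ^ 2)).eval c)
    one_ne_zero ?_ ?_ hr ?_ ?_ ?_ ?_ ?_ ?_ ?_
  · rw [one_mul, zero_mul, sub_zero]
    exact evenPoly_derivative j _
  · intro L _ _ _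
    simp
  · rw [hF0]
    have e1 : (2 * j + 4) * (2 * j + 4 - 1) / 2 = 2 * ((j + 2) * (j + 1) + 1) + j := by
      rw [show 2 * j + 4 - 1 = 2 * j + 3 by omega, show (2 * j + 4) * (2 * j + 3)
        = (2 * ((j + 2) * (j + 1) + 1) + j) * 2 by ring, Nat.mul_div_cancel _ two_pos]
    rw [e1, pow_add, pow_mul, neg_one_sq, one_pow, one_mul, ← hδ',
      show 2 * j + 4 = 2 * (j + 2) by ring, pow_mul (-1 : ℤ), neg_one_sq, one_pow, one_mul]
    have e2 : δ ^ (2 * j + 1) = δ := by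
      rw [pow_succ, pow_mul, pow_two, hδδ, one_pow, one_mul]
    rw [mul_pow δ, e2]
    generalize eval c _ = V
    clear_value N S
    linear_combination (N ^ (2 * (j + 2)) * (S ^ 2) ^ (2 * j + 1) * V ^ 2) * hδδ
  · exact fun h => hrB (Dvd.dvd.mul_right (h.mul_left _) _)
  · exact fun h => hrB (h.mul_left _)
  · rw [hF0]
    intro h
    rcases hrp.dvd_or_dvd h with h | h
    · exact hr1 h
    · exact hrs (hrp.dvd_of_dvd_pow h)
  · rw [eval_one]
    exact fun h => hrp.not_isUnit (isUnit_of_dvd_one h)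
  · rw [hFc]
    exact h1.mul_left _
  · rw [hFc]
    intro h
    apply h2
    have := h.mul_left δ
    rwa [← mul_assoc, hδδ, one_mul] at this
  · intro L _ _ _ hF hcard
    exact evenPoly_prim j δ u hδ hpn hu2 hup L hF hcard

end AltGal

namespace AltGal

/-- The polynomial used in odd degree `2 j + 3`. -/
noncomputable def oddPoly (j : ℕ) (N T : ℤ) : ℤ[X] :=
  X ^ (2 * j + 3) + (-(C (N ^ 2) * X ^ (2 * j + 2)) - C T * (X - C ((N - 2) ^ 2)))

lemma oddPoly_natDegree (j : ℕ) (N T : ℤ) :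
    (-(C (N ^ 2) * X ^ (2 * j + 2)) - C T * (X - C ((N - 2) ^ 2))).degree
      < ((2 * j + 3 : ℕ) : WithBot ℕ) := by
  refine lt_of_le_of_lt (b := ((2 * j + 2 : ℕ) : WithBot ℕ)) ?_ (by norm_cast; omega)
  have h : ((1 : ℕ) : WithBot ℕ) ≤ ((2 * j + 2 : ℕ) : WithBot ℕ) := Nat.cast_le.2 (by omega)
  refine (degree_sub_le _ _).trans (max_le ?_ (le_trans ?_ h))
  · rw [degree_neg]
    exact degree_C_mul_X_pow_le _ _
  · compute_degree!

lemma oddPoly_monic (j : ℕ) (N T : ℤ) : (oddPoly j N T).Monic :=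
  monic_X_pow_add (oddPoly_natDegree j N T)

lemma oddPoly_deg (j : ℕ) (N T : ℤ) : (oddPoly j N T).natDegree = 2 * j + 3 := by
  apply natDegree_eq_of_degree_eq_some
  rw [oddPoly, degree_add_eq_left_of_degree_lt, degree_X_pow]
  rw [degree_X_pow]
  exact oddPoly_natDegree j N T

lemma oddPoly_derivative (j : ℕ) (T : ℤ) :
    (X - C (((2 * j + 3 : ℤ) - 2) ^ 2)) * derivative (oddPoly j (2 * j + 3) T)
      - 1 * oddPoly j (2 * j + 3) T
      = C ((2 * j + 3 : ℤ) - 1) * X ^ (2 * j + 1) *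
      (X - C ((2 * j + 3 : ℤ) * ((2 * j + 3 : ℤ) - 2))) ^ 2 := by
  simp only [oddPoly, derivative_add, derivative_sub, derivative_neg, derivative_C_mul,
    derivative_X_pow, derivative_C, derivative_X]
  rw [show 2 * j + 3 - 1 = 2 * j + 1 + 1 by omega, show 2 * j + 2 - 1 = 2 * j + 1 by omega]
  simp only [Nat.cast_add, Nat.cast_mul, Nat.cast_ofNat, map_mul, map_add, map_sub, map_pow,
    map_natCast, map_ofNat, map_one]
  ring

lemma aeval_oddPoly {R : Type*} [CommRing R] (j : ℕ) (N T : ℤ) (z : R) :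
    aeval z (oddPoly j N T) = z ^ (2 * j + 3) + (-((N ^ 2 : ℤ) * z ^ (2 * j + 2)) -
      (T : R) * (z - (((N - 2) ^ 2 : ℤ) : R))) := by
  rw [oddPoly]
  generalize N ^ 2 = a
  generalize (N - 2) ^ 2 = b
  simp

lemma eval_oddPoly (j : ℕ) (N T z : ℤ) :
    (oddPoly j N T).eval z = z ^ (2 * j + 2) * (z - N ^ 2) - T * (z - (N - 2) ^ 2) := by
  simp [oddPoly]
  ring

lemma oddPoly_prim (j : ℕ) (ε u : ℤ) {p : ℕ} [hp : Fact p.Prime] (hε : ε = 1 ∨ ε = -1)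
    (hpn : p ∣ 2 * j + 3) (hu2 : ¬ 2 ∣ u) (hup : ¬ (p : ℤ) ∣ u)
    (L : Type) [Field L] [NumberField L] [IsGalois ℚ L]
    (hF : (oddPoly j (2 * j + 3) (ε * (2 * p * u) ^ 2)).map (algebraMap ℤ L) =
      ∏ x : (oddPoly j (2 * j + 3) (ε * (2 * p * u) ^ 2)).rootSet L, (X - C (x : L)))
    (hcard : Fintype.card ((oddPoly j (2 * j + 3) (ε * (2 * p * u) ^ 2)).rootSet L) = 2 * j + 3) :
    MulAction.IsPreprimitive Gal(L/ℚ) ((oddPoly j (2 * j + 3) (ε * (2 * p * u) ^ 2)).rootSet L) := by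
  have hpp : Prime (p : ℤ) := Nat.prime_iff_prime_int.1 hp.out
  have hp1 : (1 : ℝ) < p := by exact_mod_cast hp.out.one_lt
  have hpn' : (p : ℤ) ∣ 2 * j + 3 := by exact_mod_cast hpn
  have hp1' : ¬ (p : ℤ) ∣ 1 := fun h => hpp.not_isUnit (isUnit_of_dvd_one h)
  have hp2 : ¬ (p : ℤ) ∣ 2 := by
    intro h
    apply hp1'
    have h3 := Dvd.dvd.sub hpn' (h.mul_right (j + 1))
    ring_nf at h3
    exact h3
  have h2p : ¬ (2 : ℤ) ∣ p := by
    intro h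
    have : 2 ∣ p := by exact_mod_cast h
    rw [Nat.prime_dvd_prime_iff_eq Nat.prime_two hp.out] at this
    exact hp2 (by rw [← this]; rfl)
  have hεp : ¬ (p : ℤ) ∣ ε * 2 ^ 2 := by
    intro h
    rcases hpp.dvd_or_dvd h with h | h
    · rcases hε with rfl | rfl
      · exact hp1' h
      · exact hp1' (by simpa using h)
    · exact hp2 (hpp.dvd_of_dvd_pow h)
  have hT : ‖((ε * (2 * p * u) ^ 2 : ℤ) : PadicAlgCl p)‖ * (p : ℝ) ^ 2 = 1 := by
    rw [← norm_sq_eq hup hεp]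
    congr 3
    ring
  have htrans : MulAction.IsPretransitive Gal(L/ℚ)
      ((oddPoly j (2 * j + 3) (ε * (2 * p * u) ^ 2)).rootSet L) := by
    obtain ⟨ι⟩ := exists_embedding (p := p) (L := L)
    have := ultra (p := p)
    have ha : ‖((((2 * j + 3) ^ 2 : ℤ)) : PadicAlgCl p)‖ * (p : ℝ) ^ 2 ≤ 1 :=
      norm_sq_le (pow_dvd_pow_of_dvd hpn' 2)
    have hb : ‖(((2 * j + 3 - 2) ^ 2 : ℤ) : PadicAlgCl p)‖ = 1 := by
      apply norm_unit
      intro h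
      have h3 := Dvd.dvd.sub hpn' (hpp.dvd_of_dvd_pow h)
      ring_nf at h3
      exact hp2 h3
    refine pretransitive_of_norm ι hcard ⟨j + 1, by ring⟩ fun x => ?_
    have hx : aeval (x : L) (oddPoly j (2 * j + 3) (ε * (2 * p * u) ^ 2)) = 0 :=
      (mem_rootSet.1 x.2).2
    have hx2 := congrArg ι hx
    rw [aeval_oddPoly] at hx2
    simp only [map_add, map_sub, map_neg, map_mul, map_pow, map_intCast, map_zero] at hx2
    refine step_odd' (m := 2 * j + 2) (one_lt_pow₀ hp1 two_ne_zero) (by omega) ha hb hT ?_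
    linear_combination hx2
  have h2 : Fact (Nat.Prime 2) := ⟨Nat.prime_two⟩
  have hpu : ¬ ((2 : ℕ) : ℤ) ∣ p * u := by
    intro h
    rcases Int.prime_two.dvd_or_dvd h with h | h
    · exact h2p h
    · exact hu2 h
  have hε2 : ¬ ((2 : ℕ) : ℤ) ∣ ε := by
    rcases hε with rfl | rfl <;> norm_num
  have ha' : ¬ ((2 : ℕ) : ℤ) ∣ (2 * j + 3) ^ 2 := by
    intro h
    have := Int.prime_two.dvd_of_dvd_pow h
    omega
  have hb' : ¬ ((2 : ℕ) : ℤ) ∣ (2 * j + 3 - 2) ^ 2 := by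
    intro h
    have := Int.prime_two.dvd_of_dvd_pow h
    omega
  have hT2 : ‖((ε * (2 * p * u) ^ 2 : ℤ) : PadicAlgCl 2)‖ * ((2 : ℕ) : ℝ) ^ 2 = 1 := by
    rw [← norm_sq_eq hpu hε2]
    congr 3
    push_cast
    ring
  obtain ⟨ι⟩ := exists_embedding (p := 2) (L := L)
  have := ultra (p := 2)
  refine primitive_odd ι (m := 2 * j + 2) hcard ?_ ?_
  · intro x
    have hx : aeval (x : L) (oddPoly j (2 * j + 3) (ε * (2 * p * u) ^ 2)) = 0 :=
      (mem_rootSet.1 x.2).2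
    have hx2 := congrArg ι hx
    rw [aeval_oddPoly] at hx2
    simp only [map_add, map_sub, map_neg, map_mul, map_pow, map_intCast, map_zero] at hx2
    refine step_odd (m := 2 * j + 2) (one_lt_pow₀ (by norm_num) two_ne_zero)
      (norm_unit ha') (norm_unit hb') hT2 ?_
    linear_combination hx2
  · rw [norm_prod_roots ι hF, eval_oddPoly, zero_pow (by omega), zero_mul, zero_sub, zero_sub,
      mul_neg, neg_neg, Int.cast_mul, norm_mul, norm_unit hb', mul_one, hT2]

theorem odd_case (j : ℕ) :
    ∃ (M : Type) (_ : Field M) (_ : Algebra ℚ M),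
      FiniteDimensional ℚ M ∧ IsGalois ℚ M ∧
        Nonempty ((M ≃ₐ[ℚ] M) ≃* alternatingGroup (Fin (2 * j + 3))) := by
  obtain ⟨p, hp, hpn⟩ := Nat.exists_prime_and_dvd (n := 2 * j + 3) (by omega)
  have : Fact p.Prime := ⟨hp⟩
  let N : ℤ := 2 * j + 3
  have hN : N = 2 * j + 3 := rfl
  have hN3 : 3 ≤ N := by omega
  let γ : ℤ := N * (N - 2)
  have hγ : γ = N * (N - 2) := rfl
  let d : ℤ := N ^ (2 * j + 3) * (N - 2) ^ (2 * j + 1)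
  have hd' : d = N ^ (2 * j + 3) * (N - 2) ^ (2 * j + 1) := rfl
  have hd : 1 ≤ d := by
    have e1 : 0 < N := by linarith
    have e2 : 0 < N - 2 := by linarith
    have : 0 < d := by rw [hd']; positivity
    linarith
  obtain ⟨ε, hε, hε'⟩ : ∃ ε : ℤ, (ε = 1 ∨ ε = -1) ∧ ε = (-1) ^ j :=
    ⟨_, neg_one_pow_eq_or ℤ j, rfl⟩
  have hεε : ε * ε = 1 := by rcases hε with h | h <;> simp [h]
  have hpn' : (p : ℤ) ∣ N := by rw [hN]; exact_mod_cast hpn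
  obtain ⟨r, u, hr, hrB, hrs, h1, h2, hu2, hup⟩ := exists_param hp (2 * N * ((N - 1) * (N - 2)))
    d ε hε (by
      have : 0 < N := by linarith
      have : 0 < N - 1 := by linarith
      have : 0 < N - 2 := by linarith
      positivity)
    (Dvd.dvd.mul_right (dvd_mul_right _ _) _) (Dvd.dvd.mul_right (hpn'.mul_left _) _) hd
  have hrp : Prime (r : ℤ) := Nat.prime_iff_prime_int.1 hr
  have hr1 : ¬ (r : ℤ) ∣ ε := by
    intro h
    exact hrp.not_isUnit (isUnit_of_dvd_one (hεε ▸ h.mul_right ε))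
  have hr2 : ¬ (r : ℤ) ∣ 2 := fun h => hrB (Dvd.dvd.mul_right (h.mul_right _) _)
  have hrN : ¬ (r : ℤ) ∣ N := fun h => hrB (Dvd.dvd.mul_right (h.mul_left _) _)
  have hrN1 : ¬ (r : ℤ) ∣ N - 1 := fun h => hrB (Dvd.dvd.mul_left (h.mul_right _) _)
  have hrN2 : ¬ (r : ℤ) ∣ N - 2 := fun h => hrB (Dvd.dvd.mul_left (h.mul_left _) _)
  have hr22 : ¬ (r : ℤ) ∣ 2 * (N - 2) := fun h => (hrp.dvd_or_dvd h).elim hr2 hrN2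
  let S : ℤ := 2 * p * u
  let V : ℤ := S ^ 2 + ε * d
  have hV : V = S ^ 2 + ε * d := rfl
  have hFγ : (oddPoly j N (ε * S ^ 2)).eval γ = -(2 * (N - 2) * ε) * V := by
    rw [eval_oddPoly, hγ, hV, hd', mul_pow]
    clear_value S N
    linear_combination (2 * (N - 2) * (N ^ (2 * j + 3) * (N - 2) ^ (2 * j + 1))) * hεε
  have hF0 : (oddPoly j N (ε * S ^ 2)).eval 0 = ε * S ^ 2 * (N - 2) ^ 2 := by
    rw [eval_oddPoly, zero_pow (by omega), zero_mul]
    ring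
  have hFβ : (oddPoly j N (ε * S ^ 2)).eval ((N - 2) ^ 2)
      = -(4 * (N - 1) * ((N - 2) ^ 2) ^ (2 * j + 2)) := by
    rw [eval_oddPoly]
    ring
  have hr3 : ¬ (r : ℤ) ∣ -(2 * (N - 2) * ε) := by
    rw [dvd_neg]
    exact fun h => (hrp.dvd_or_dvd h).elim hr22 hr1
  refine criterion (F := oddPoly j N (ε * S ^ 2)) (oddPoly_monic _ _ _) (oddPoly_deg _ _ _)
    (X - C ((N - 2) ^ 2)) 1 (N - 1) γ (2 * j + 1) ?_ (4 * (N - 1) * ((N - 2) ^ 2) ^ (2 * j + 2))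
    ((N - 1) ^ (j + 1) * S ^ (2 * j + 1) * V)
    ?_ ?_ ?_ hr ?_ ?_ ?_ ?_ ?_ ?_ ?_
  · exact oddPoly_derivative j _
  · have : 0 < N - 1 := by linarith
    have : 0 < N - 2 := by linarith
    positivity
  · intro L _ _ hF
    have hcard := card_rootSet hF (oddPoly_monic _ _ _)
    rw [oddPoly_deg] at hcard
    have e1 := aeval_eq_prod hF (((N - 2) ^ 2 : ℤ) : L)
    have e2 : aeval (((N - 2) ^ 2 : ℤ) : L) (oddPoly j N (ε * S ^ 2))
        = (((oddPoly j N (ε * S ^ 2)).eval ((N - 2) ^ 2) : ℤ) : L) := by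
      have := aeval_algebraMap_apply L ((N - 2) ^ 2) (oddPoly j N (ε * S ^ 2))
      simpa using this
    rw [e2, hFβ] at e1
    have e3 : ∏ x : (oddPoly j N (ε * S ^ 2)).rootSet L, aeval (x : L) (X - C ((N - 2) ^ 2))
        = ∏ x : (oddPoly j N (ε * S ^ 2)).rootSet L, (-1) * ((((N - 2) ^ 2 : ℤ) : L) - x) := by
      refine Finset.prod_congr rfl fun x _ => ?_
      generalize (N - 2) ^ 2 = b
      simp
    rw [e3, Finset.prod_mul_distrib, Finset.prod_const, Finset.card_univ, hcard, ← e1,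
      Odd.neg_one_pow ⟨j + 1, by ring⟩, Int.cast_neg]
    ring
  · rw [hF0, hFγ]
    have e1 : (2 * j + 3) * (2 * j + 3 - 1) / 2 = 2 * ((j + 1) * (j + 1)) + (j + 1) := by
      rw [show 2 * j + 3 - 1 = 2 * j + 2 by omega, show (2 * j + 3) * (2 * j + 2)
        = (2 * ((j + 1) * (j + 1)) + (j + 1)) * 2 by ring, Nat.mul_div_cancel _ two_pos]
    rw [e1, pow_add, pow_mul, neg_one_sq, one_pow, one_mul, pow_succ, ← hε',
      Odd.neg_one_pow (n := 2 * j + 3) ⟨j + 1, by ring⟩]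
    have e2 : ε ^ (2 * j + 1) = ε := by
      rw [pow_succ, pow_mul, pow_two, hεε, one_pow, one_mul]
    have e3 : (-1 * (ε * S ^ 2 * (N - 2) ^ 2)) ^ (2 * j + 1)
        = -ε * (S ^ (2 * j + 1)) ^ 2 * ((N - 2) ^ 2) ^ (2 * j + 1) := by
      rw [mul_pow, mul_pow, mul_pow, e2, Odd.neg_one_pow ⟨j, rfl⟩, ← pow_mul, ← pow_mul S (2 * j + 1), mul_comm 2 (2 * j + 1)]
      ring
    rw [e3]
    clear_value V N S
    generalize S ^ (2 * j + 1) = W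
    linear_combination (4 * (N - 1) ^ (2 * j + 3) * W ^ 2 * ((N - 2) ^ 2) ^ (2 * j + 2) * V ^ 2
      * (ε * ε + 1)) * hεε
  · exact hrN1
  · exact fun h => (hrp.dvd_or_dvd h).elim hrN hrN2
  · rw [hF0]
    intro h
    rcases hrp.dvd_or_dvd h with h | h
    · rcases hrp.dvd_or_dvd h with h | h
      · exact hr1 h
      · exact hrs (hrp.dvd_of_dvd_pow h)
    · exact hrN2 (hrp.dvd_of_dvd_pow h)
  · have : (X - C ((N - 2) ^ 2) : ℤ[X]).eval γ = 2 * (N - 2) := by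
      rw [eval_sub, eval_X, eval_C, hγ]
      ring
    rw [this]
    exact hr22
  · rw [hFγ]
    exact h1.mul_left _
  · rw [hFγ]
    intro h
    exact h2 (hrp.pow_dvd_of_dvd_mul_left 2 hr3 h)
  · intro L _ _ _ hF hcard
    exact oddPoly_prim j ε u hε hpn hu2 hup L hF hcard

theorem small_case (n : ℕ) (hn : n ≤ 2) :
    ∃ (M : Type) (_ : Field M) (_ : Algebra ℚ M),
      FiniteDimensional ℚ M ∧ IsGalois ℚ M ∧
        Nonempty ((M ≃ₐ[ℚ] M) ≃* alternatingGroup (Fin n)) := by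
  have h : Subsingleton (alternatingGroup (Fin n)) := by
    interval_cases n <;> exact Fintype.card_le_one_iff_subsingleton.1 (by decide)
  have h2 : Subsingleton (ℚ ≃ₐ[ℚ] ℚ) :=
    ⟨fun f g => AlgEquiv.ext fun x => (f.commutes x).trans (g.commutes x).symm⟩
  have i1 : Unique (alternatingGroup (Fin n)) := ⟨⟨1⟩, fun _ => Subsingleton.elim _ _⟩
  have i2 : Unique (ℚ ≃ₐ[ℚ] ℚ) := Unique.mk' _
  exact ⟨ℚ, inferInstance, inferInstance, inferInstance, inferInstance, ⟨MulEquiv.ofUnique⟩⟩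

end AltGal

/-- **Hilbert.** For every natural number `n ≥ 1`, the alternating group `Aₙ` occurs as a
Galois group over `ℚ`. -/
theorem alternatingGroup_occurs_as_galoisGroup_over_rat (n : ℕ) (hn : 1 ≤ n) :
    ∃ (M : Type) (_ : Field M) (_ : Algebra ℚ M),
      FiniteDimensional ℚ M ∧ IsGalois ℚ M ∧
        Nonempty ((M ≃ₐ[ℚ] M) ≃* alternatingGroup (Fin n)) := by
  by_cases h : n ≤ 2
  · exact AltGal.small_case n h
  rcases Nat.even_or_odd' n with ⟨k, rfl | rfl⟩
  · obtain ⟨j, rfl⟩ : ∃ j, k = j + 2 := ⟨k - 2, by omega⟩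
    exact AltGal.even_case j
  · obtain ⟨j, rfl⟩ : ∃ j, k = j + 1 := ⟨k - 1, by omega⟩
    exact AltGal.odd_case j
end

section
/- Let f(t, X) ∈ ℚ[t][X] be a polynomial in X with coefficients in ℚ[t] which has degree at least 1 in X and is irreducible as a polynomial in X over the rational function field ℚ(t). Then the set of rational numbers a ∈ ℚ such that the specialized polynomial f(a, X) ∈ ℚ[X] has the same degree in X and is irreducible over ℚ is infinite. (This is the Hilbert Irreducibility Theorem: ℚ is Hilbertian.) -/
open Polynomial Filter Topology

namespace HIT

/-- all points of the cube based at `s` with sides `hs` satisfy `P`. -/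
def AllCube (P : ℕ → Prop) : List ℕ → ℕ → Prop
  | [], s => P s
  | h :: hs, s => AllCube P hs s ∧ AllCube P hs (s + h)

/-- iterated differences -/
def TT (z : ℕ → ℂ) : List ℕ → ℕ → ℂ
  | [], s => z s
  | h :: hs, s => TT z hs (s + h) - TT z hs s

theorem AllCube.mono {P Q : ℕ → Prop} (h : ∀ s, P s → Q s) :
    ∀ (hs : List ℕ) (s : ℕ), AllCube P hs s → AllCube Q hs s
  | [], s, hP => h s hP
  | _ :: hs, _, hP => ⟨AllCube.mono h hs _ hP.1, AllCube.mono h hs _ hP.2⟩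

theorem AllCube.shift {P : ℕ → Prop} (j : ℕ) :
    ∀ (hs : List ℕ) (s : ℕ), AllCube (fun x => P (x + j)) hs s → AllCube P hs (s + j)
  | [], _, hP => hP
  | h :: hs, s, hP => ⟨AllCube.shift j hs s hP.1, by
      have := AllCube.shift j hs (s + h) hP.2
      rwa [show s + h + j = s + j + h by omega] at this⟩

theorem AllCube.base {P : ℕ → Prop} :
    ∀ (hs : List ℕ) (s : ℕ), AllCube P hs s → P s
  | [], _, hP => hP
  | _ :: hs, s, hP => AllCube.base hs s hP.1

/-- Hilbert's cube lemma. -/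
theorem cube_lemma (k : ℕ) : ∀ (κ : Type) [Finite κ] (c : ℕ → κ),
    ∃ hs : List ℕ, hs.length = k ∧ (∀ h ∈ hs, 0 < h) ∧
      ∃ a : κ, ∃ᶠ s in atTop, AllCube (fun x => c x = a) hs s := by
  induction k with
  | zero =>
    intro κ _ c
    refine ⟨[], rfl, by simp, ?_⟩
    obtain ⟨a, ha⟩ := Finite.exists_infinite_fiber c
    refine ⟨a, ?_⟩
    rw [Nat.frequently_atTop_iff_infinite]
    exact Set.infinite_coe_iff.mp ha
  | succ k ih =>
    intro κ _ c
    obtain ⟨hs, hl, hpos, p, hp⟩ := ih (Fin (Nat.card κ + 1) → κ) (fun s j => c (s + j))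
    have : ∃ i j : Fin (Nat.card κ + 1), i ≠ j ∧ p i = p j := by
      by_contra hcon
      push Not at hcon
      have hinj : Function.Injective p := fun i j hij => by
        by_contra hne; exact hcon i j hne hij
      have := Nat.card_le_card_of_injective p hinj
      simp at this
    have : ∃ i j : Fin (Nat.card κ + 1), i < j ∧ p i = p j := by
      obtain ⟨i, j, hij, h⟩ := this
      rcases lt_or_gt_of_ne hij with h1 | h1
      · exact ⟨i, j, h1, h⟩
      · exact ⟨j, i, h1, h.symm⟩
    obtain ⟨i, j, hij, hpij⟩ := this
    have hij' : (i : ℕ) < j := hij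
    refine ⟨(j - i) :: hs, by simp [hl], ?_, p i, ?_⟩
    · intro h hh
      rcases List.mem_cons.mp hh with rfl | hh
      · omega
      · exact hpos h hh
    · rw [frequently_atTop] at hp ⊢
      intro a
      obtain ⟨b, hb, hc⟩ := hp a
      refine ⟨b + i, by omega, ?_, ?_⟩
      · exact AllCube.shift (P := fun x => c x = p i) i hs b
          (AllCube.mono (fun s hs => congrFun hs i) hs b hc)
      · rw [show b + i + (j - i) = b + j by omega]
        exact AllCube.shift (P := fun x => c x = p i) j hs b
          (AllCube.mono (fun s hs => (congrFun hs j).trans hpij.symm) hs b hc)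

theorem TT_int {z : ℕ → ℂ} :
    ∀ (hs : List ℕ) (s : ℕ), AllCube (fun x => ∃ n : ℤ, z x = n) hs s → ∃ n : ℤ, TT z hs s = n
  | [], _, hP => hP
  | h :: hs, s, hP => by
    obtain ⟨a, ha⟩ := TT_int hs s hP.1
    obtain ⟨b, hb⟩ := TT_int hs (s + h) hP.2
    exact ⟨b - a, by simp [TT, ha, hb]⟩

theorem TT_add (y z : ℕ → ℂ) : ∀ (hs : List ℕ) (s : ℕ), TT (y + z) hs s = TT y hs s + TT z hs s
  | [], _ => rfl
  | h :: hs, s => by simp only [TT, TT_add y z hs]; ring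

theorem TT_congr {y z : ℕ → ℂ} {N : ℕ} (hyz : ∀ s ≥ N, y s = z s) :
    ∀ (hs : List ℕ) (s : ℕ), N ≤ s → TT y hs s = TT z hs s
  | [], s, h => hyz s h
  | h :: hs, s, hN => by
    simp only [TT]; rw [TT_congr hyz hs s hN, TT_congr hyz hs (s + h) (by omega)]

theorem TT_tendsto {y : ℕ → ℂ} (hy : Tendsto y atTop (𝓝 0)) :
    ∀ (hs : List ℕ), Tendsto (TT y hs) atTop (𝓝 0)
  | [] => hy
  | h :: hs => by
    have h1 := TT_tendsto hy hs
    have h2 := h1.comp (tendsto_add_atTop_nat h)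
    have h3 := h2.sub h1
    rw [sub_zero] at h3
    exact h3

theorem TT_eq_zero {y : ℕ → ℂ} (hy : Tendsto y atTop (𝓝 0)) :
    ∀ (hs : List ℕ), (∀ h ∈ hs, 0 < h) → (∀ᶠ s in atTop, TT y hs s = 0) →
      ∀ᶠ s in atTop, y s = 0
  | [], _, h0 => h0
  | h :: hs, hpos, h0 => by
    refine TT_eq_zero hy hs (fun x hx => hpos x (by simp [hx])) ?_
    have hh : 0 < h := hpos h (by simp)
    have ht := TT_tendsto hy hs
    obtain ⟨N, hN⟩ := eventually_atTop.mp h0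
    refine eventually_atTop.mpr ⟨N, fun s hs' => ?_⟩
    have hper : ∀ k : ℕ, TT y hs (s + k * h) = TT y hs s := by
      intro k
      induction k with
      | zero => simp
      | succ k ih =>
        have := hN (s + k * h) (by nlinarith [Nat.zero_le (k * h)])
        simp only [TT] at this
        rw [← ih, ← sub_eq_zero.mp this]
        congr 1; ring
    have ht2 : Tendsto (fun k : ℕ => TT y hs (s + k * h)) atTop (𝓝 0) := by
      refine ht.comp (tendsto_atTop_mono (fun k => ?_) tendsto_id)
      simp only [id]; nlinarith
    simp only [hper] at ht2
    exact tendsto_nhds_unique tendsto_const_nhds ht2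

/-- finite differences kill polynomials -/
theorem TT_poly : ∀ (hs : List ℕ) (P : ℂ[X]),  
    ∃ Q : ℂ[X], (∀ s, TT (fun s => P.eval (s : ℂ)) hs s = Q.eval (s : ℂ)) ∧
      (Q = 0 ∨ Q.natDegree + hs.length ≤ P.natDegree)
  | [], P => ⟨P, fun _ => rfl, Or.inr (by simp)⟩
  | h :: hs, P => by
    obtain ⟨Q, hQ, hd⟩ := TT_poly hs P
    refine ⟨Q.comp (X + C (h : ℂ)) - Q, fun s => ?_, ?_⟩
    · simp [TT, hQ]
    · rcases hd with rfl | hd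
      · simp
      by_cases h0 : Q.comp (X + C (h : ℂ)) - Q = 0
      · exact Or.inl h0
      right
      have hnd : (Q.comp (X + C (h : ℂ))).natDegree = Q.natDegree := by
        rw [natDegree_comp, natDegree_X_add_C, mul_one]
      have hlt : (Q.comp (X + C (h : ℂ)) - Q).natDegree < Q.natDegree := by
        by_cases hq : Q.natDegree = 0
        · exfalso; apply h0
          rw [eq_C_of_natDegree_eq_zero hq]; simp
        have : (Q.comp (X + C (h : ℂ)) - Q).degree < (Q.comp (X + C (h : ℂ))).degree := by
          have hQ0 : Q ≠ 0 := by rintro rfl; simp at hq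
          have hQ1 : (Q.comp (X + C (h : ℂ))) ≠ 0 := by
            intro h; rw [h] at hnd; simp at hnd; omega
          apply degree_sub_lt_left
          · rw [degree_eq_natDegree hQ0, degree_eq_natDegree hQ1, hnd]
          · exact hQ1
          · rw [leadingCoeff_comp (by rw [natDegree_X_add_C]; simp), leadingCoeff_X_add_C]; simp
        have := natDegree_lt_natDegree h0 this
        omega
      simp only [List.length_cons]; omega

/-- The tail: `G(1/s)` -/
theorem TT_analytic {G : ℂ → ℂ} (hG : AnalyticAt ℂ G 0) :
    ∀ (hs : List ℕ), ∃ W : ℂ → ℂ, AnalyticAt ℂ W 0 ∧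
      ∀ s : ℕ, 0 < s → TT (fun s => G ((s : ℂ)⁻¹)) hs s = W ((s : ℂ)⁻¹)
  | [] => ⟨G, hG, fun _ _ => rfl⟩
  | h :: hs => by
    obtain ⟨W, hW, hW'⟩ := TT_analytic hG hs
    refine ⟨fun u => W (u / (1 + h * u)) - W u, ?_, fun s hs => ?_⟩
    · refine AnalyticAt.sub ?_ hW
      have : AnalyticAt ℂ (fun u : ℂ => u / (1 + h * u)) 0 := by
        refine AnalyticAt.div (by fun_prop) (by fun_prop) (by simp)
      refine AnalyticAt.fun_comp (f := fun u : ℂ => u / (1 + h * u)) ?_ this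
      simpa using hW
    · simp only [TT]
      rw [hW' s hs, hW' (s + h) (by omega)]
      congr 2
      have : (s : ℂ) ≠ 0 := by exact_mod_cast hs.ne'
      have : (s : ℂ) + h ≠ 0 := by norm_cast; omega
      push_cast
      field_simp

theorem tendsto_inv_nat : Tendsto (fun s : ℕ => ((s : ℂ))⁻¹) atTop (𝓝 0) := by
  exact tendsto_inv_atTop_nhds_zero_nat

theorem tendsto_inv_nat_ne : Tendsto (fun s : ℕ => ((s : ℂ))⁻¹) atTop (𝓝[≠] 0) := by
  refine tendsto_nhdsWithin_iff.mpr ⟨tendsto_inv_nat, ?_⟩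
  filter_upwards [eventually_gt_atTop 0] with s hs
  simp; omega

/-- functions meromorphic at infinity -/
def Lau (z : ℕ → ℂ) : Prop :=
  ∃ (m : ℕ) (F : ℂ → ℂ), AnalyticAt ℂ F 0 ∧ ∀ᶠ s : ℕ in atTop, z s = s ^ m * F ((s : ℂ)⁻¹)

theorem Lau.mul {y z : ℕ → ℂ} (hy : Lau y) (hz : Lau z) : Lau (y * z) := by
  obtain ⟨m, F, hF, h⟩ := hy
  obtain ⟨n, G, hG, h'⟩ := hz
  refine ⟨m + n, F * G, hF.mul hG, ?_⟩
  filter_upwards [h, h'] with s h1 h2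
  simp [h1, h2]; ring

theorem Lau.add {y z : ℕ → ℂ} (hy : Lau y) (hz : Lau z) : Lau (y + z) := by
  obtain ⟨m, F, hF, h⟩ := hy
  obtain ⟨n, G, hG, h'⟩ := hz
  refine ⟨m + n, fun u => u ^ n * F u + u ^ m * G u, by fun_prop, ?_⟩
  filter_upwards [h, h', eventually_gt_atTop 0] with s h1 h2 h3
  have : (s : ℂ) ≠ 0 := by exact_mod_cast h3.ne'
  simp [h1, h2]; field_simp; ring

theorem Lau.const (c : ℂ) : Lau (fun _ => c) := ⟨0, fun _ => c, by fun_prop, by simp⟩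

theorem Lau.id : Lau (fun s => (s : ℂ)) := ⟨1, fun _ => 1, by fun_prop, by simp⟩

/-- the subring of such functions -/
def LauRing : Subring (ℕ → ℂ) where
  carrier := {z | Lau z}
  mul_mem' := Lau.mul
  add_mem' := Lau.add
  one_mem' := Lau.const 1
  zero_mem' := Lau.const 0
  neg_mem' {x} hx := by
    have := (Lau.const (-1)).mul hx
    have h2 : -x = (fun _ => (-1 : ℂ)) * x := by ext; simp
    rw [h2]; exact this

theorem analytic_split {F : ℂ → ℂ} (hF : AnalyticAt ℂ F 0) :
    ∃ G : ℂ → ℂ, AnalyticAt ℂ G 0 ∧ ∀ u, F u = F 0 + u * G u := by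
  obtain ⟨p, hp⟩ := hF
  refine ⟨dslope F 0, ⟨_, hp.has_fpower_series_dslope_fslope⟩, fun u => ?_⟩
  have := sub_smul_dslope F 0 u
  simp at this
  rw [this]; ring

theorem analytic_split_m (m : ℕ) : ∀ {F : ℂ → ℂ} (_ : AnalyticAt ℂ F 0),
    ∃ (P : ℂ[X]) (G : ℂ → ℂ), AnalyticAt ℂ G 0 ∧ G 0 = 0 ∧
      ∀ s : ℕ, 0 < s → (s : ℂ) ^ m * F ((s : ℂ)⁻¹) = P.eval (s : ℂ) + G ((s : ℂ)⁻¹) := by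
  induction m with
  | zero =>
    intro F hF
    exact ⟨C (F 0), fun u => F u - F 0, by fun_prop, by simp, fun s _ => by simp⟩
  | succ m ih =>
    intro F hF
    obtain ⟨F1, hF1, h1⟩ := analytic_split hF
    obtain ⟨P, G, hG, hG0, h2⟩ := ih hF1
    refine ⟨P + C (F 0) * X ^ (m + 1), G, hG, hG0, fun s hs => ?_⟩
    have h3 := h2 s hs
    rw [h1]
    have : (s : ℂ) ≠ 0 := by exact_mod_cast hs.ne'
    have h4 : (s : ℂ) ^ (m + 1) * ((s : ℂ)⁻¹ * F1 ((s : ℂ)⁻¹)) = s ^ m * F1 ((s : ℂ)⁻¹) := by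
      field_simp; ring
    rw [mul_add, h4, h3]
    simp; ring

theorem rat_poly {P : ℂ[X]} (hP : ∃ᶠ s : ℕ in atTop, ∃ n : ℤ, P.eval (s : ℂ) = n) :
    ∃ Q : ℚ[X], Q.map (algebraMap ℚ ℂ) = P := by
  rw [Nat.frequently_atTop_iff_infinite] at hP
  obtain ⟨t, ht, hc⟩ := hP.exists_subset_card_eq (P.natDegree + 1)
  have h : ∀ s : ℕ, ∃ n : ℤ, s ∈ t → P.eval (s : ℂ) = n := by
    intro s
    by_cases hs : s ∈ t
    · obtain ⟨n, hn⟩ := ht hs; exact ⟨n, fun _ => hn⟩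
    · exact ⟨0, fun h => absurd h hs⟩
  choose n hn using h
  have hinj : Set.InjOn (fun s : ℕ => (s : ℚ)) t := fun a _ b _ hab => by simpa using hab
  have hinj' : Set.InjOn (fun s : ℕ => (s : ℂ)) t := fun a _ b _ hab => by simpa using hab
  refine ⟨Lagrange.interpolate t (fun s : ℕ => (s : ℚ)) (fun s => (n s : ℚ)), ?_⟩
  refine Polynomial.eq_of_degrees_lt_of_eval_index_eq (v := fun s : ℕ => (s : ℂ)) t hinj' ?_ ?_ ?_
  · rw [degree_map]
    exact Lagrange.degree_interpolate_lt _ hinj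
  · rw [hc]
    exact lt_of_le_of_lt degree_le_natDegree (by exact_mod_cast Nat.lt_succ_self _)
  · intro s hs
    have := Lagrange.eval_interpolate_at_node (v := fun s : ℕ => (s : ℚ)) (fun s => (n s : ℚ)) hinj hs
    rw [hn s hs]
    have h2 : ((s : ℕ) : ℂ) = algebraMap ℚ ℂ (s : ℚ) := by simp
    simp only [h2]
    rw [eval_map_apply]
    rw [this]; simp

theorem key {z : ℕ → ℂ} (hz : Lau z) : ∀ᶠ k in atTop, ∀ hs : List ℕ, hs.length = k →
    (∀ h ∈ hs, 0 < h) → (∃ᶠ s in atTop, AllCube (fun x => ∃ n : ℤ, z x = n) hs s) →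
    ∃ Q : ℚ[X], ∀ᶠ s : ℕ in atTop, z s = (Q.map (algebraMap ℚ ℂ)).eval (s : ℂ) := by
  obtain ⟨m, F, hF, hzF⟩ := hz
  obtain ⟨P, G, hG, hG0, hPG⟩ := analytic_split_m m hF
  have hz : ∀ᶠ s : ℕ in atTop, z s = P.eval (s : ℂ) + G ((s : ℂ)⁻¹) := by
    filter_upwards [hzF, eventually_gt_atTop 0] with s h1 h2
    rw [h1, hPG s h2]
  filter_upwards [eventually_gt_atTop P.natDegree] with k hk hs hl hpos hfreq
  set y : ℕ → ℂ := fun s => G ((s : ℂ)⁻¹) with hy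
  have hy0 : Tendsto y atTop (𝓝 0) := by
    have := hG.continuousAt.tendsto.comp tendsto_inv_nat
    rwa [hG0] at this
  obtain ⟨N, hN⟩ := eventually_atTop.mp hz
  have hT : ∀ s ≥ N, TT z hs s = TT y hs s := by
    intro s hsN
    rw [TT_congr (z := (fun s : ℕ => P.eval (s : ℂ)) + y) hN hs s hsN, TT_add]
    obtain ⟨Q, hQ, hd⟩ := TT_poly hs P
    rcases hd with rfl | hd
    · rw [hQ]; simp
    · omega
  obtain ⟨W, hW, hWT⟩ := TT_analytic hG hs
  have hsmall : ∀ᶠ s in atTop, ‖TT y hs s‖ < 1 := by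
    have := (TT_tendsto hy0 hs).norm
    rw [norm_zero] at this
    exact this.eventually_lt_const one_pos
  have hf0 : ∃ᶠ s in atTop, TT y hs s = 0 := by
    refine (hfreq.and_eventually (hsmall.and (eventually_ge_atTop N))).mono ?_
    rintro s ⟨hc, hlt, hsN⟩
    obtain ⟨n, hn⟩ := TT_int hs s hc
    rw [hT s hsN] at hn
    rw [hn] at hlt ⊢
    have : |n| < 1 := by
      have h : ‖(n : ℂ)‖ = ((|n| : ℤ) : ℝ) := by simp
      rw [h] at hlt; exact_mod_cast hlt
    simp [Int.abs_lt_one_iff.mp this]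
  have hev : ∀ᶠ s in atTop, TT y hs s = 0 := by
    rcases hW.eventually_eq_zero_or_eventually_ne_zero with h | h
    · filter_upwards [tendsto_inv_nat.eventually h, eventually_gt_atTop 0] with s h1 h2
      rw [hWT s h2, h1]
    · exfalso
      refine hf0 ?_
      filter_upwards [tendsto_inv_nat_ne.eventually h, eventually_gt_atTop 0] with s h1 h2
      rw [hWT s h2]; exact h1
  have hyz := TT_eq_zero hy0 hs hpos hev
  have hzP : ∀ᶠ s : ℕ in atTop, z s = P.eval (s : ℂ) := by
    filter_upwards [hyz, hz] with s h1 h2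
    rw [h2]; simp only [hy] at h1; rw [h1, add_zero]
  obtain ⟨Q, rfl⟩ := rat_poly (P := P) (by
    refine (hfreq.and_eventually hzP).mono ?_
    rintro s ⟨h1, h2⟩
    rw [← h2]; exact AllCube.base hs s h1)
  exact ⟨Q, hzP⟩

end HIT

namespace HIT

theorem AllCube.and_ge {P : ℕ → Prop} {N : ℕ} : ∀ (hs : List ℕ) (s : ℕ), N ≤ s → AllCube P hs s →
    AllCube (fun x => P x ∧ N ≤ x) hs s
  | [], _, hN, hP => ⟨hP, hN⟩
  | h :: hs, s, hN, hP =>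
    ⟨AllCube.and_ge hs s hN hP.1, AllCube.and_ge hs (s + h) (by omega) hP.2⟩

theorem exists_subset_prod {ι : Type} [DecidableEq ι] (a : ι → ℂ) (s : Finset ι) :
    ∀ p : ℂ[X], p.Monic → p ∣ ∏ i ∈ s, (X - C (a i)) → ∃ t ⊆ s, p = ∏ i ∈ t, (X - C (a i)) := by
  induction s using Finset.induction_on with
  | empty =>
    intro p hp hd
    refine ⟨∅, by simp, ?_⟩
    simp only [Finset.prod_empty] at hd ⊢
    exact hp.eq_one_of_isUnit (isUnit_of_dvd_one hd)
  | insert i s hi ih =>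
    intro p hp hd
    rw [Finset.prod_insert hi] at hd
    by_cases hr : p.IsRoot (a i)
    · obtain ⟨q, rfl⟩ := dvd_iff_isRoot.mpr hr
      have hq : q.Monic := (monic_X_sub_C (a i)).of_mul_monic_left hp
      have hqd := (mul_dvd_mul_iff_left (X_sub_C_ne_zero (a i))).mp hd
      obtain ⟨t, ht, rfl⟩ := ih q hq hqd
      refine ⟨insert i t, Finset.insert_subset_insert i ht, ?_⟩
      rw [Finset.prod_insert (fun h => hi (ht h))]
    · have hc : IsCoprime p (X - C (a i)) := by
        rw [isCoprime_comm]
        refine (irreducible_X_sub_C (a i)).coprime_iff_not_dvd.mpr ?_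
        rwa [dvd_iff_isRoot]
      obtain ⟨t, ht, h⟩ := ih p hp (hc.dvd_of_dvd_mul_left hd)
      exact ⟨t, ht.trans (Finset.subset_insert i s), h⟩

/-- evaluation of the inner variable -/
noncomputable abbrev evZ {K : Type} [Field K] (σ : K) : ℤ[X] →+* K :=
  eval₂RingHom (Int.castRingHom K) σ

/-- evaluation of the inner variable -/
noncomputable abbrev evQ {K : Type} [Field K] [Algebra ℚ K] (σ : K) : ℚ[X] →+* K :=
  eval₂RingHom (algebraMap ℚ K) σ

theorem evQ_eq {p q : ℚ[X]} (h : ∀ᶠ s : ℕ in atTop, evQ (s : ℂ) p = evQ (s : ℂ) q) : p = q := by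
  apply Polynomial.map_injective (algebraMap ℚ ℂ) (algebraMap ℚ ℂ).injective
  apply eq_of_infinite_eval_eq
  have h1 : {s : ℕ | evQ (s : ℂ) p = evQ (s : ℂ) q}.Infinite :=
    Nat.frequently_atTop_iff_infinite.mp h.frequently
  refine (h1.image (f := fun s : ℕ => (s : ℂ)) (fun a _ b _ hab => by simpa using hab)).mono ?_
  rintro _ ⟨s, hs, rfl⟩
  simpa [eval_map] using hs

theorem coeff_lau {ι : Type} (y : ι → ℕ → ℂ) (hy : ∀ i, Lau (y i)) (ω : Finset ι) (j : ℕ) :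
    Lau (fun s => (∏ i ∈ ω, (X - C (y i s))).coeff j) := by
  have h1 : (∏ i ∈ ω, (X - C (⟨y i, hy i⟩ : LauRing))).map LauRing.subtype
      = ∏ i ∈ ω, (X - C (y i)) := by
    simp [Polynomial.map_prod]
  have h2 : Lau ((∏ i ∈ ω, (X - C (y i))).coeff j) := by
    rw [← h1, coeff_map]
    exact ((∏ i ∈ ω, (X - C (⟨y i, hy i⟩ : LauRing))).coeff j).2
  have h3 : ((∏ i ∈ ω, (X - C (y i))).coeff j) =
      (fun s => (∏ i ∈ ω, (X - C (y i s))).coeff j) := by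
    ext s
    have : (∏ i ∈ ω, (X - C (y i s))) = (∏ i ∈ ω, (X - C (y i))).map (Pi.evalRingHom _ s) := by
      simp [Polynomial.map_prod]
    rw [this, coeff_map]; rfl
  rwa [h3] at h2

theorem poly_of {p : ℕ → ℂ[X]} {n : ℕ} (hp : ∀ s, (p s).Monic) (hn : ∀ s, (p s).natDegree = n)
    (h : ∀ j < n, ∃ Q : ℚ[X], ∀ᶠ s : ℕ in atTop,
      (p s).coeff j = (Q.map (algebraMap ℚ ℂ)).eval (s : ℂ)) :
    ∃ G : ℚ[X][X], G.Monic ∧ G.natDegree = n ∧ ∀ᶠ s : ℕ in atTop, G.map (evQ (s : ℂ)) = p s := by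
  have h' : ∀ j, ∃ Q : ℚ[X], j < n → ∀ᶠ s : ℕ in atTop,
      (p s).coeff j = (Q.map (algebraMap ℚ ℂ)).eval (s : ℂ) := by
    intro j
    by_cases hj : j < n
    · obtain ⟨Q, hQ⟩ := h j hj; exact ⟨Q, fun _ => hQ⟩
    · exact ⟨0, fun h => absurd h hj⟩
  choose Q hQ using h'
  have hdeg : (∑ j ∈ Finset.range n, C (Q j) * X ^ j : ℚ[X][X]).degree < n := by
    rw [degree_lt_iff_coeff_zero]
    intro m hm
    rw [finsetSum_coeff]
    apply Finset.sum_eq_zero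
    intro j hj
    rw [Finset.mem_range] at hj
    rw [coeff_C_mul_X_pow, if_neg (by omega)]
  refine ⟨X ^ n + ∑ j ∈ Finset.range n, C (Q j) * X ^ j, monic_X_pow_add hdeg, ?_, ?_⟩
  · apply natDegree_eq_of_degree_eq_some
    rw [degree_add_eq_left_of_degree_lt] <;> rw [degree_X_pow]
    exact hdeg
  · have : ∀ᶠ s : ℕ in atTop, ∀ j ∈ Finset.range n,
        (p s).coeff j = ((Q j).map (algebraMap ℚ ℂ)).eval (s : ℂ) := by
      rw [Filter.eventually_all_finset]
      intro j hj
      exact hQ j (Finset.mem_range.mp hj)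
    filter_upwards [this] with s hs
    rw [(hp s).as_sum, hn]
    simp only [Polynomial.map_add, Polynomial.map_pow, map_X, Polynomial.map_sum,
      Polynomial.map_mul, map_C]
    congr 1
    refine Finset.sum_congr rfl fun j hj => ?_
    rw [hs j hj, eval_map]; rfl

theorem core (F : ℤ[X][X]) (hF : F.Monic) (hF1 : 1 ≤ F.natDegree) {d : ℕ} (y : Fin d → ℕ → ℂ)
    (hy : ∀ i, Lau (y i))
    (hprod : ∀ᶠ s : ℕ in atTop, F.map (evZ (s : ℂ)) = ∏ i, (X - C (y i s)))
    (hno : ∀ G H : ℚ[X][X], G.Monic → H.Monic → G * H = F.map (mapRingHom (Int.castRingHom ℚ)) →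
      G.natDegree = 0 ∨ H.natDegree = 0) :
    ∃ᶠ s : ℕ in atTop, Irreducible (F.map (evalRingHom (s : ℤ))) := by
  intro hcon
  obtain ⟨N, hN⟩ := eventually_atTop.mp (hcon.and hprod)
  set w : Finset (Fin d) → ℕ → ℂ[X] := fun ω s => ∏ i ∈ ω, (X - C (y i s)) with hw
  have hcol : ∀ s, ∃ ω : Finset (Fin d), N ≤ s → (ω.card ≠ 0 ∧ ωᶜ.card ≠ 0 ∧
      (∀ j, ∃ n : ℤ, (w ω s).coeff j = n) ∧ (∀ j, ∃ n : ℤ, (w ωᶜ s).coeff j = n)) := by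
    intro s
    by_cases hs : N ≤ s
    swap
    · exact ⟨∅, fun h => absurd h hs⟩
    obtain ⟨h1, h2⟩ := hN s hs
    have hmon : (F.map (evalRingHom (s : ℤ))).Monic := hF.map _
    beta_reduce at h1
    rw [hmon.irreducible_iff_natDegree] at h1
    have hne : F.map (evalRingHom (s : ℤ)) ≠ 1 := by
      intro h
      have := hF.natDegree_map (evalRingHom (s : ℤ))
      rw [h, natDegree_one] at this
      omega
    push Not at h1
    obtain ⟨g, h, hg, hh, hgh, hg0, hh0⟩ := h1 hne
    have hmap : g.map (Int.castRingHom ℂ) * h.map (Int.castRingHom ℂ) = ∏ i, (X - C (y i s)) := by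
      rw [← h2, ← Polynomial.map_mul, hgh, Polynomial.map_map]
      congr 1
      ext <;> simp
    obtain ⟨ω, -, hω⟩ := exists_subset_prod (fun i => y i s) Finset.univ (g.map (Int.castRingHom ℂ))
      (hg.map _) (Dvd.intro _ hmap)
    have hω' : h.map (Int.castRingHom ℂ) = ∏ i ∈ ωᶜ, (X - C (y i s)) := by
      rw [hω, ← Finset.prod_mul_prod_compl ω] at hmap
      refine mul_left_cancel₀ ?_ hmap
      exact (monic_prod_X_sub_C _ _).ne_zero
    refine ⟨ω, fun _ => ⟨?_, ?_, ?_, ?_⟩⟩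
    · intro hc
      apply hg0
      rw [← hg.natDegree_map (Int.castRingHom ℂ), hω, natDegree_prod_of_monic _ _
        (fun i _ => monic_X_sub_C _)]
      simp [Finset.card_eq_zero.mp hc]
    · intro hc
      apply hh0
      rw [← hh.natDegree_map (Int.castRingHom ℂ), hω', natDegree_prod_of_monic _ _
        (fun i _ => monic_X_sub_C _)]
      simp [Finset.card_eq_zero.mp hc]
    · intro j
      exact ⟨g.coeff j, by simp only [hw]; rw [← hω]; simp⟩
    · intro j
      exact ⟨h.coeff j, by simp only [hw]; rw [← hω']; simp⟩
  choose c hc using hcol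
  have hk : ∀ᶠ k in atTop, ∀ ω : Finset (Fin d), ∀ j : Fin (d + 1), ∀ hs : List ℕ, hs.length = k →
    (∀ h ∈ hs, 0 < h) → (∃ᶠ s in atTop, AllCube (fun x => ∃ n : ℤ, (w ω x).coeff j = n) hs s) →
    ∃ Q : ℚ[X], ∀ᶠ s : ℕ in atTop, (w ω s).coeff j = (Q.map (algebraMap ℚ ℂ)).eval (s : ℂ) := by
    rw [Filter.eventually_all]
    intro ω
    rw [Filter.eventually_all]
    intro j
    exact key (coeff_lau y hy ω j)
  obtain ⟨k, hk⟩ := hk.exists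
  obtain ⟨hs, hl, hpos, ω, hfreq⟩ := cube_lemma k (Finset (Fin d)) c
  have hfreq2 : ∃ᶠ s in atTop, AllCube (fun x => c x = ω ∧ N ≤ x) hs s :=
    (hfreq.and_eventually (eventually_ge_atTop N)).mono fun s hss => AllCube.and_ge hs s hss.2 hss.1
  obtain ⟨s0, hs0⟩ := hfreq2.exists
  have hs0 := AllCube.base hs s0 hs0
  have hmon : ∀ (ω : Finset (Fin d)) s, (w ω s).Monic := fun ω s => monic_prod_X_sub_C _ _
  have hnd : ∀ (ω : Finset (Fin d)) s, (w ω s).natDegree = ω.card := fun ω s => by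
    simp only [hw]; rw [natDegree_prod_of_monic _ _ (fun i _ => monic_X_sub_C _)]
    simp
  have hcard : ∀ ω : Finset (Fin d), ω.card ≤ d := fun ω => by
    simpa using Finset.card_le_univ ω
  obtain ⟨G, hG, hGd, hGs⟩ := poly_of (hmon ω) (hnd ω) (by
    intro j hj
    refine hk ω ⟨j, by have := hcard ω; omega⟩ hs hl hpos ?_
    refine hfreq2.mono fun s => AllCube.mono ?_ hs s
    rintro x ⟨rfl, hx⟩
    exact (hc x hx).2.2.1 j)
  obtain ⟨H, hH, hHd, hHs⟩ := poly_of (hmon ωᶜ) (hnd ωᶜ) (by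
    intro j hj
    refine hk ωᶜ ⟨j, by have := hcard ωᶜ; omega⟩ hs hl hpos ?_
    refine hfreq2.mono fun s => AllCube.mono ?_ hs s
    rintro x ⟨rfl, hx⟩
    exact (hc x hx).2.2.2 j)
  have hGH : G * H = F.map (mapRingHom (Int.castRingHom ℚ)) := by
    ext1 j
    apply evQ_eq
    filter_upwards [hGs, hHs, hprod] with s h1 h2 h3
    have : (G * H).map (evQ (s : ℂ)) =
        (F.map (mapRingHom (Int.castRingHom ℚ))).map (evQ (s : ℂ)) := by
      rw [Polynomial.map_mul, h1, h2, Polynomial.map_map]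
      simp only [hw]
      rw [Finset.prod_mul_prod_compl, ← h3]
      congr 1
      ext <;> simp
    have := congrArg (fun q => q.coeff j) this
    simpa only [coeff_map] using this
  have := hc s0 hs0.2
  rw [hs0.1] at this
  rcases hno G H hG hH hGH with h | h
  · exact this.1 (hGd ▸ h)
  · exact this.2.1 (hHd ▸ h)

end HIT

namespace HIT

theorem analytic_root (f : ℚ[X][X]) (t0 x : ℂ) (h0 : (f.map (evQ t0)).eval x = 0)
    (h1 : (derivative (f.map (evQ t0))).eval x ≠ 0) :
    ∃ ξ : ℂ → ℂ, AnalyticAt ℂ ξ 0 ∧ ξ 0 = x ∧ ∀ᶠ u in 𝓝 0, (f.map (evQ (t0 + u))).eval (ξ u) = 0 := by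
  set Φ : ℂ × ℂ → ℂ := fun v => (f.map (evQ (t0 + v.1))).eval v.2 with hΦ
  have hcd : ContDiff ℂ ⊤ Φ := by
    have : Φ = fun v : ℂ × ℂ => ∑ i ∈ Finset.range (f.natDegree + 1),
        ((f.coeff i).map (algebraMap ℚ ℂ)).eval (t0 + v.1) * v.2 ^ i := by
      ext v
      simp only [hΦ]
      rw [eval_map, eval₂_eq_sum_range]
      simp [eval_map]
    rw [this]
    refine ContDiff.sum fun i _ => ContDiff.mul ?_ (by fun_prop)
    have : (fun v : ℂ × ℂ => ((f.coeff i).map (algebraMap ℚ ℂ)).eval (t0 + v.1)) =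
        fun v : ℂ × ℂ => ∑ j ∈ Finset.range (((f.coeff i).map (algebraMap ℚ ℂ)).natDegree + 1),
          ((f.coeff i).map (algebraMap ℚ ℂ)).coeff j * (t0 + v.1) ^ j := by
      ext v; rw [eval_eq_sum_range]
    rw [this]
    exact ContDiff.sum fun j _ => by fun_prop
  have hca : ContDiffAt ℂ ⊤ Φ (0, x) := hcd.contDiffAt
  have hderiv : fderiv ℂ Φ (0, x) ∘L .inr ℂ ℂ ℂ =
      (ContinuousLinearEquiv.unitsEquivAut ℂ (Units.mk0 _ h1) : ℂ →L[ℂ] ℂ) := by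
    have hd : HasFDerivAt Φ (fderiv ℂ Φ (0, x)) (0, x) :=
      (hcd.differentiable (by simp)).differentiableAt.hasFDerivAt
    have h2 : HasFDerivAt (fun t : ℂ => ((0 : ℂ), t)) (.inr ℂ ℂ ℂ) x :=
      hasFDerivAt_prodMk_right (0 : ℂ) x
    have h3 : HasFDerivAt (fun t : ℂ => Φ (0, t)) (fderiv ℂ Φ (0, x) ∘L .inr ℂ ℂ ℂ) x :=
      HasFDerivAt.comp x hd h2
    have h4 := (f.map (evQ t0)).hasDerivAt x
    have h5 : (fun t : ℂ => Φ (0, t)) = fun t => (f.map (evQ t0)).eval t := by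
      ext t; simp [hΦ]
    rw [h5] at h3
    have h6 := h3.unique h4.hasFDerivAt
    rw [h6]
    ext; simp
  have hinv : (fderiv ℂ Φ (0, x) ∘L .inr ℂ ℂ ℂ).IsInvertible := ⟨_, hderiv.symm⟩
  refine ⟨hca.implicitFunction (by simp) hinv, ?_, ?_, ?_⟩
  · exact (hca.contDiffAt_implicitFunction (by simp) hinv).analyticAt
  · exact hca.implicitFunction_apply_self (by simp) hinv
  · have := hca.eventually_apply_implicitFunction (by simp) hinv
    filter_upwards [this] with u hu
    have h7 : Φ (0, x) = 0 := by simpa [hΦ] using h0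
    rw [h7] at hu
    exact hu

/-- clearing denominators -/
def Clear (t0 : ℚ) (f : ℚ[X][X]) : Prop :=
  ∃ (N : ℕ) (M : ℤ) (F : ℤ[X][X]), M ≠ 0 ∧ ∀ (K : Type) [Field K] [Algebra ℚ K] (σ : K), σ ≠ 0 →
    F.map (evZ σ) = C ((M : K) * σ ^ N) * f.map (evQ (algebraMap ℚ K t0 + σ⁻¹))

theorem Clear.mul {t0 : ℚ} {f g : ℚ[X][X]} (hf : Clear t0 f) (hg : Clear t0 g) :
    Clear t0 (f * g) := by
  obtain ⟨N, M, F, hM, hF⟩ := hf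
  obtain ⟨N', M', F', hM', hF'⟩ := hg
  refine ⟨N + N', M * M', F * F', mul_ne_zero hM hM', fun K _ _ σ hσ => ?_⟩
  rw [Polynomial.map_mul, Polynomial.map_mul, hF K σ hσ, hF' K σ hσ]
  simp only [C_mul, pow_add, Int.cast_mul]; ring

theorem Clear.add {t0 : ℚ} {f g : ℚ[X][X]} (hf : Clear t0 f) (hg : Clear t0 g) :
    Clear t0 (f + g) := by
  obtain ⟨N, M, F, hM, hF⟩ := hf
  obtain ⟨N', M', F', hM', hF'⟩ := hg
  refine ⟨N + N', M * M', C (C M' * X ^ N') * F + C (C M * X ^ N) * F', mul_ne_zero hM hM',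
    fun K _ _ σ hσ => ?_⟩
  rw [Polynomial.map_add, Polynomial.map_add, Polynomial.map_mul, Polynomial.map_mul,
    hF K σ hσ, hF' K σ hσ]
  simp only [map_C, coe_eval₂RingHom, eval₂_mul, eval₂_C, eval₂_pow, eval₂_X]
  simp only [C_mul, pow_add, Int.cast_mul, Int.coe_castRingHom]; ring

theorem Clear.X (t0 : ℚ) : Clear t0 X :=
  ⟨0, 1, Polynomial.X, one_ne_zero, fun K _ _ σ hσ => by simp⟩

theorem Clear.CC (t0 a : ℚ) : Clear t0 (C (C a)) := by
  refine ⟨0, a.den, C (C a.num), by simp, fun K _ _ σ hσ => ?_⟩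
  simp only [map_C, coe_eval₂RingHom, eval₂_C, pow_zero, mul_one, ← C_mul]
  congr 1
  have h : (a.num : ℚ) = a.den * a := by rw [mul_comm]; exact (Rat.mul_den_eq_num a).symm
  have := congrArg (algebraMap ℚ K) h
  simp only [map_intCast, map_mul, map_natCast] at this
  rw [eq_intCast, this, Int.cast_natCast]

theorem Clear.CX (t0 : ℚ) : Clear t0 (C Polynomial.X) := by
  refine ⟨1, t0.den, C (C t0.num * Polynomial.X + C (t0.den : ℤ)), by simp, fun K _ _ σ hσ => ?_⟩
  simp only [map_C, coe_eval₂RingHom, eval₂_C, eval₂_add, eval₂_mul, eval₂_X, ← C_mul]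
  congr 1
  have h : (t0.num : ℚ) = t0.den * t0 := by rw [mul_comm]; exact (Rat.mul_den_eq_num t0).symm
  have := congrArg (algebraMap ℚ K) h
  simp only [map_intCast, map_mul, map_natCast] at this
  simp [this]
  field_simp

theorem Clear.all (t0 : ℚ) (f : ℚ[X][X]) : Clear t0 f := by
  have hC : ∀ p : ℚ[X], Clear t0 (C p) := by
    intro p
    induction p using Polynomial.induction_on with
    | C a => exact Clear.CC t0 a
    | add p q hp hq => rw [C_add]; exact hp.add hq
    | monomial n a h =>
      rw [pow_succ, ← mul_assoc, C_mul]; exact h.mul (Clear.CX t0)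
  induction f using Polynomial.induction_on with
  | C a => exact hC a
  | add p q hp hq => exact hp.add hq
  | monomial n a h =>
    rw [pow_succ, ← mul_assoc]; exact h.mul (Clear.X t0)

theorem bezout (f : ℚ[X][X]) (hirr : Irreducible (f.map (algebraMap ℚ[X] (RatFunc ℚ)))) :
    ∃ (A B : ℚ[X][X]) (D : ℚ[X]), D ≠ 0 ∧ A * f + B * derivative f = C D := by
  have hsep := hirr.separable
  obtain ⟨a, b, hab⟩ := hsep
  obtain ⟨b1, hb1, h1⟩ := IsLocalization.integerNormalization_spec (nonZeroDivisors ℚ[X]) a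
  obtain ⟨b2, hb2, h2⟩ := IsLocalization.integerNormalization_spec (nonZeroDivisors ℚ[X]) b
  set A := IsLocalization.integerNormalization (nonZeroDivisors ℚ[X]) a
  set B := IsLocalization.integerNormalization (nonZeroDivisors ℚ[X]) b
  refine ⟨C b2 * A, C b1 * B, b1 * b2,
    mul_ne_zero (nonZeroDivisors.ne_zero hb1) (nonZeroDivisors.ne_zero hb2), ?_⟩
  apply Polynomial.map_injective (algebraMap ℚ[X] (RatFunc ℚ))
    (IsFractionRing.injective ℚ[X] (RatFunc ℚ))
  simp only [Polynomial.map_add, Polynomial.map_mul, map_C, h1, h2, ← derivative_map, map_mul]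
  rw [← IsScalarTower.algebraMap_smul (RatFunc ℚ) b1 a,
    ← IsScalarTower.algebraMap_smul (RatFunc ℚ) b2 b, smul_eq_C_mul, smul_eq_C_mul]
  linear_combination (C (algebraMap ℚ[X] (RatFunc ℚ) b1) * C (algebraMap ℚ[X] (RatFunc ℚ) b2)) * hab

theorem eventually_ne {q : ℤ[X]} (hq : q ≠ 0) : ∀ᶠ s : ℕ in atTop, q.eval (s : ℤ) ≠ 0 := by
  by_contra h
  have h1 : ∃ᶠ s : ℕ in atTop, q.eval (s : ℤ) = 0 := by
    simpa [Filter.Frequently] using h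
  rw [Nat.frequently_atTop_iff_infinite] at h1
  apply hq
  apply eq_zero_of_infinite_isRoot
  refine (h1.image (f := fun s : ℕ => (s : ℤ)) (fun a _ b _ hab => by simpa using hab)).mono ?_
  rintro _ ⟨s, hs, rfl⟩
  exact hs

theorem evZ_nat {K : Type} [Field K] (q : ℤ[X]) (s : ℕ) :
    evZ (s : K) q = ((q.eval (s : ℤ) : ℤ) : K) := by
  have : (evZ (s : K)) = (Int.castRingHom K).comp (evalRingHom (s : ℤ)) := by
    ext <;> simp
  rw [this]; simp

theorem lau_evZ (q : ℤ[X]) : Lau (fun s => evZ (s : ℂ) q) := by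
  induction q using Polynomial.induction_on with
  | C a => simpa using Lau.const (a : ℂ)
  | add p q hp hq => simp only [map_add]; exact hp.add hq
  | monomial n a h =>
    simp only [pow_succ, ← mul_assoc]
    simp only [map_mul _ (C a * X ^ n) X]
    have := h.mul Lau.id
    simpa [Pi.mul_def] using this

theorem irreducible_comp {p : ℚ[X]} {c : ℚ} (hc : c ≠ 0) (hp : Irreducible p) :
    Irreducible (p.comp (C c * X)) := by
  have : Invertible c := invertibleOfNonzero hc
  have h := (MulEquiv.irreducible_iff (algEquivCMulXAddC c 0) (x := p)).mpr hp
  simpa [algEquivCMulXAddC, aeval_def, comp] using h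

theorem natDegree_comp_CX {K : Type} [Field K] (p : K[X]) {c : K} (hc : c ≠ 0) :
    (p.comp (C c * X)).natDegree = p.natDegree := by
  rw [natDegree_comp, natDegree_C_mul_X c hc, mul_one]

end HIT

namespace HIT

theorem exists_roots (f : ℚ[X][X]) (hirr : Irreducible (f.map (algebraMap ℚ[X] (RatFunc ℚ)))) :
    ∃ (t0 : ℚ) (ξ : Fin f.natDegree → ℂ → ℂ), (∀ i, AnalyticAt ℂ (ξ i) 0) ∧
      (∀ᶠ u in 𝓝 0, Function.Injective fun i => ξ i u) ∧
      ∀ i, ∀ᶠ u in 𝓝 0, (f.map (evQ (algebraMap ℚ ℂ t0 + u))).eval (ξ i u) = 0 := by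
  obtain ⟨A, B, D, hD, hAB⟩ := bezout f hirr
  have hf0 : f ≠ 0 := by
    rintro rfl; simp at hirr
  have hlc : D * f.leadingCoeff ≠ 0 := mul_ne_zero hD (leadingCoeff_ne_zero.mpr hf0)
  obtain ⟨t0, ht0⟩ : ∃ t0 : ℚ, (D * f.leadingCoeff).eval t0 ≠ 0 := by
    by_contra h
    push Not at h
    exact hlc (Polynomial.funext fun r => by rw [h r, eval_zero])
  have hev : ∀ p : ℚ[X], evQ (algebraMap ℚ ℂ t0) p = algebraMap ℚ ℂ (p.eval t0) := by
    intro p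
    simp only [coe_eval₂RingHom]
    exact eval₂_at_apply (algebraMap ℚ ℂ) t0
  rw [eval_mul] at ht0
  have hD0 : evQ (algebraMap ℚ ℂ t0) D ≠ 0 := by
    rw [hev, _root_.map_ne_zero]; exact left_ne_zero_of_mul ht0
  have hl0 : evQ (algebraMap ℚ ℂ t0) f.leadingCoeff ≠ 0 := by
    rw [hev, _root_.map_ne_zero]; exact right_ne_zero_of_mul ht0
  set p := f.map (evQ (algebraMap ℚ ℂ t0)) with hp
  have hnd : p.natDegree = f.natDegree := natDegree_map_of_leadingCoeff_ne_zero _ hl0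
  have hsep : ∀ x, p.eval x = 0 → (derivative p).eval x ≠ 0 := by
    intro x hx hx'
    have := congrArg (fun q => (q.map (evQ (algebraMap ℚ ℂ t0))).eval x) hAB
    simp only [Polynomial.map_add, Polynomial.map_mul, map_C, eval_add, eval_mul, eval_C,
      ← derivative_map] at this
    rw [← hp, hx, hx'] at this
    apply hD0
    rw [← this]; simp
  have hp0 : p ≠ 0 := by
    intro h
    have := hsep 0 (by rw [h]; simp)
    rw [h] at this; simp at this
  have hnodup : p.roots.Nodup := by
    rw [Multiset.nodup_iff_count_le_one]
    intro x
    rw [count_roots]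
    by_contra hlt
    push Not at hlt
    obtain ⟨h1, h2⟩ := (one_lt_rootMultiplicity_iff_isRoot hp0).mp hlt
    exact hsep x h1 h2
  have hcard : p.roots.toFinset.card = f.natDegree := by
    rw [Multiset.toFinset_card_of_nodup hnodup, ← hnd]
    exact (IsAlgClosed.splits p).natDegree_eq_card_roots.symm
  let e := (Finset.equivFinOfCardEq hcard).symm
  have hroot : ∀ i, p.eval (e i : ℂ) = 0 := by
    intro i
    have := (e i).2
    rw [Multiset.mem_toFinset, mem_roots hp0] at this
    exact this
  choose ξ hξ hξ0 hξr using fun i => analytic_root f (algebraMap ℚ ℂ t0) (e i : ℂ) (hroot i)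
    (hsep _ (hroot i))
  refine ⟨t0, ξ, hξ, ?_, hξr⟩
  have : ∀ᶠ u in 𝓝 (0 : ℂ), ∀ i j, i ≠ j → ξ i u ≠ ξ j u := by
    rw [Filter.eventually_all]; intro i
    rw [Filter.eventually_all]; intro j
    by_cases hij : i = j
    · simp [hij]
    have hne : ξ i 0 ≠ ξ j 0 := by
      rw [hξ0, hξ0]
      intro h
      exact hij (e.injective (Subtype.ext h))
    have hc := ((hξ i).sub (hξ j)).continuousAt.tendsto.eventually_ne (sub_ne_zero.mpr hne)
    filter_upwards [hc] with u hu _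
    exact sub_ne_zero.mp hu
  filter_upwards [this] with u hu i j hij
  by_contra hne
  exact hu i j hne hij

theorem eq_prod {d : ℕ} {p : ℂ[X]} (hp : p.Monic) (hd : p.natDegree = d) (y : Fin d → ℂ)
    (hy : Function.Injective y) (hr : ∀ i, p.eval (y i) = 0) : p = ∏ i, (X - C (y i)) := by
  refine eq_of_monic_of_dvd_of_natDegree_le (monic_prod_X_sub_C y Finset.univ) hp ?_ ?_
  · refine Finset.prod_dvd_of_coprime ?_ ?_
    · intro i _ j _ hij
      exact pairwise_coprime_X_sub_C hy hij
    · intro i _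
      exact dvd_iff_isRoot.mpr (hr i)
  · rw [natDegree_prod_of_monic _ _ (fun i _ => monic_X_sub_C _)]
    simp [hd]

end HIT

/-- **Hilbert Irreducibility Theorem: `ℚ` is Hilbertian.** Let `f ∈ ℚ[t][X]` have degree
at least `1` in `X` and be irreducible as a polynomial in `X` over `ℚ(t)`. Then there are
infinitely many `a ∈ ℚ` such that the specialization `f(a, X) ∈ ℚ[X]` has the same degree
in `X` and is irreducible over `ℚ`. -/
theorem hilbert_irreducibility (f : Polynomial (Polynomial ℚ))
    (hdeg : 1 ≤ f.natDegree)
    (hirr : Irreducible (f.map (algebraMap (Polynomial ℚ) (RatFunc ℚ)))) :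
    {a : ℚ | (f.map (Polynomial.evalRingHom a)).natDegree = f.natDegree ∧
      Irreducible (f.map (Polynomial.evalRingHom a))}.Infinite := by
  open HIT in
  obtain ⟨t0, ξ, hξ, hinj, hroot⟩ := exists_roots f hirr
  obtain ⟨N, M, F1, hM, hF1⟩ := Clear.all t0 f
  have hf0 : f ≠ 0 := by
    rintro rfl; simp at hirr
  -- the generic point
  set σ : RatFunc ℚ := (RatFunc.X - algebraMap ℚ (RatFunc ℚ) t0)⁻¹ with hσ
  have hσ0 : σ ≠ 0 := by
    rw [hσ]
    apply inv_ne_zero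
    rw [← RatFunc.algebraMap_X, IsScalarTower.algebraMap_apply ℚ ℚ[X] (RatFunc ℚ), ← map_sub]
    rw [map_ne_zero_iff _ (IsFractionRing.injective ℚ[X] (RatFunc ℚ))]
    exact X_sub_C_ne_zero t0
  have hgen : evQ (algebraMap ℚ (RatFunc ℚ) t0 + σ⁻¹) = algebraMap ℚ[X] (RatFunc ℚ) := by
    rw [hσ, inv_inv, add_sub_cancel]
    ext
    · simp
    · simp
  have hFσ := hF1 (RatFunc ℚ) σ hσ0
  rw [hgen] at hFσ
  have hnd : F1.natDegree = f.natDegree := by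
    apply le_antisymm
    · rw [natDegree_le_iff_coeff_eq_zero]
      intro j hj
      by_contra hne
      obtain ⟨s, hs, hs0⟩ := ((eventually_ne hne).and (eventually_gt_atTop 0)).exists
      have h1 := hF1 ℚ (s : ℚ) (by exact_mod_cast hs0.ne')
      have h2 := congrArg (fun q => q.coeff j) h1
      simp only [coeff_map, coeff_C_mul, coeff_eq_zero_of_natDegree_lt hj, map_zero, mul_zero] at h2
      rw [evZ_nat] at h2
      exact hs (by exact_mod_cast h2)
    · apply le_natDegree_of_ne_zero
      intro h
      have h2 := congrArg (fun q => q.coeff f.natDegree) hFσ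
      simp only [coeff_map, coeff_C_mul, h, map_zero] at h2
      have h3 : algebraMap ℚ[X] (RatFunc ℚ) (f.coeff f.natDegree) ≠ 0 := by
        rw [map_ne_zero_iff _ (IsFractionRing.injective ℚ[X] (RatFunc ℚ))]
        exact leadingCoeff_ne_zero.mpr hf0
      have h4 : (M : RatFunc ℚ) * σ ^ N ≠ 0 :=
        mul_ne_zero (by exact_mod_cast hM) (pow_ne_zero _ hσ0)
      exact mul_ne_zero h4 h3 h2.symm
  have hF10 : F1 ≠ 0 := by
    rintro rfl; simp at hnd; omega
  set F := F1.integralNormalization with hFdef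
  have hFmon : F.Monic := monic_integralNormalization hF10
  have hFnd : F.natDegree = f.natDegree := by rw [hFdef, natDegree_integralNormalization, hnd]
  have hcomp : ∀ (K : Type) [Field K] [Algebra ℚ K] (τ : K), τ ≠ 0 →
      (F.map (evZ τ)).comp (C (evZ τ F1.leadingCoeff) * X) =
        C ((evZ τ F1.leadingCoeff) ^ (F1.natDegree - 1) * ((M : K) * τ ^ N)) *
          f.map (evQ (algebraMap ℚ K t0 + τ⁻¹)) := by
    intro K _ _ τ hτ
    rw [C_mul, mul_assoc, ← hF1 K τ hτ]
    ext j
    rw [comp_C_mul_X_coeff, coeff_map, coeff_C_mul, coeff_map, ← map_pow, ← map_mul, hFdef,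
      integralNormalization_coeff_mul_leadingCoeff_pow j (by omega), map_mul, map_pow]
    ring
  have hlc0 : F1.leadingCoeff ≠ 0 := leadingCoeff_ne_zero.mpr hF10
  have hlcσ : evZ σ F1.leadingCoeff ≠ 0 := by
    have h2 := congrArg (fun q => q.coeff f.natDegree) hFσ
    simp only [coeff_map, coeff_C_mul] at h2
    rw [leadingCoeff, hnd, h2]
    refine mul_ne_zero (mul_ne_zero (by exact_mod_cast hM) (pow_ne_zero _ hσ0)) ?_
    rw [map_ne_zero_iff _ (IsFractionRing.injective ℚ[X] (RatFunc ℚ))]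
    exact leadingCoeff_ne_zero.mpr hf0
  have hcore := core F hFmon (by omega)
    (fun i s => evZ (s : ℂ) F1.leadingCoeff * ξ i ((s : ℂ)⁻¹))
    (fun i => (lau_evZ F1.leadingCoeff).mul ⟨0, ξ i, hξ i, by simp⟩)
    (by
      have hroot' := Filter.eventually_all.mpr hroot
      filter_upwards [tendsto_inv_nat.eventually hroot', tendsto_inv_nat.eventually hinj,
        eventually_gt_atTop 0, eventually_ne hlc0] with s h1 h2 h3 h4
      have hs0 : (s : ℂ) ≠ 0 := by exact_mod_cast h3.ne'
      have hc0 : evZ (s : ℂ) F1.leadingCoeff ≠ 0 := by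
        rw [evZ_nat]; exact_mod_cast h4
      refine eq_prod (hFmon.map _) (by rw [hFmon.natDegree_map, hFnd]) _ ?_ ?_
      · intro i j hij
        exact h2 (mul_left_cancel₀ hc0 hij)
      · intro i
        have h5 := congrArg (fun q => q.eval (ξ i ((s : ℂ)⁻¹))) (hcomp ℂ (s : ℂ) hs0)
        simp only [eval_comp, eval_mul, eval_C, eval_X] at h5
        rw [h5, h1 i, mul_zero])
    (by
      intro G H hG hH hGH
      have h1 := hcomp (RatFunc ℚ) σ hσ0
      rw [hgen] at h1
      have h2 : F.map (evZ σ) = G.map (evQ σ) * H.map (evQ σ) := by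
        rw [← Polynomial.map_mul, hGH, Polynomial.map_map]
        congr 1
        ext <;> simp
      rw [h2, mul_comp] at h1
      set u := (evZ σ) F1.leadingCoeff ^ (F1.natDegree - 1) * ((M : RatFunc ℚ) * σ ^ N) with hu
      have hu0 : u ≠ 0 := mul_ne_zero (pow_ne_zero _ hlcσ)
        (mul_ne_zero (by exact_mod_cast hM) (pow_ne_zero _ hσ0))
      have hirr2 : Irreducible (C u * f.map (algebraMap ℚ[X] (RatFunc ℚ))) :=
        (irreducible_isUnit_mul (isUnit_C.mpr hu0.isUnit)).mpr hirr
      rcases hirr2.isUnit_or_isUnit h1.symm with h | h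
      · left
        have := natDegree_eq_zero_of_isUnit h
        rwa [natDegree_comp_CX _ hlcσ, hG.natDegree_map] at this
      · right
        have := natDegree_eq_zero_of_isUnit h
        rwa [natDegree_comp_CX _ hlcσ, hH.natDegree_map] at this)
  have hfin := hcore.and_eventually ((eventually_gt_atTop 0).and (eventually_ne hlc0))
  rw [Nat.frequently_atTop_iff_infinite] at hfin
  refine (hfin.image (f := fun s : ℕ => t0 + (s : ℚ)⁻¹)
    (fun a _ b _ hab => by simpa using hab)).mono ?_
  rintro _ ⟨s, ⟨h1, h2, h3⟩, rfl⟩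
  have hs0 : (s : ℚ) ≠ 0 := by exact_mod_cast h2.ne'
  have hc0 : evZ (s : ℚ) F1.leadingCoeff ≠ 0 := by
    rw [evZ_nat]; exact_mod_cast h3
  have h4 := hcomp ℚ (s : ℚ) hs0
  have h5 : evQ (algebraMap ℚ ℚ t0 + (s : ℚ)⁻¹) = evalRingHom (t0 + (s : ℚ)⁻¹) := by
    ext <;> simp
  rw [h5] at h4
  set u := (evZ (s : ℚ)) F1.leadingCoeff ^ (F1.natDegree - 1) * ((M : ℚ) * (s : ℚ) ^ N) with hu
  have hu0 : u ≠ 0 := mul_ne_zero (pow_ne_zero _ hc0)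
    (mul_ne_zero (by exact_mod_cast hM) (pow_ne_zero _ hs0))
  have h6 : Irreducible (F.map (evZ (s : ℚ))) := by
    have h7 := ((hFmon.map (evalRingHom (s : ℤ))).irreducible_iff_irreducible_map_fraction_map
      (K := ℚ)).mp h1
    rw [Polynomial.map_map] at h7
    convert h7 using 2
    ext <;> simp
  constructor
  · have h8 := congrArg natDegree h4
    rw [natDegree_comp_CX _ hc0, hFmon.natDegree_map, natDegree_C_mul hu0, hFnd] at h8
    exact h8.symm
  · have h9 := irreducible_comp hc0 h6
    rw [h4] at h9
    exact (irreducible_isUnit_mul (isUnit_C.mpr hu0.isUnit)).mp h9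
end

section
/- Let f(t, X) ∈ ℚ[t][X] be a polynomial in X with coefficients in ℚ[t], of degree at least 1 in X, such that f, regarded as a polynomial in X over the rational function field ℚ(t), has no root in ℚ(t). Then there exists a ∈ ℚ such that the specialized polynomial f(a, X) ∈ ℚ[X] has no root in ℚ. -/
open Polynomial

lemma aux_pigeon (p m : ℕ) (hp : 2 ≤ p) (Y : ℤ[X]) :
    ∃ A B : ℤ[X], (A ≠ 0 ∨ B ≠ 0) ∧
      (∀ u, |A.coeff u| ≤ (p : ℤ) ^ (2 * m + 3 - u)) ∧ (∀ u, 2 * m + 3 ≤ u → A.coeff u = 0) ∧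
      (∀ u, |B.coeff u| ≤ (p : ℤ) ^ (m + 3 - u)) ∧ (∀ u, m + 3 ≤ u → B.coeff u = 0) ∧
      ∀ l < 2 * m + 4, (p : ℤ) ^ (2 * m + 4 - l) ∣ (A + B * Y).coeff l := by
  classical
  have : NeZero p := ⟨by omega⟩
  let Dom := (∀ u : Fin (2 * m + 3), Fin (p ^ (2 * m + 3 - (u : ℕ)))) ×
    (∀ u : Fin (m + 3), Fin (p ^ (m + 3 - (u : ℕ))))
  let Cod := ∀ l : Fin (2 * m + 4), ZMod (p ^ (2 * m + 4 - (l : ℕ)))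
  have inst : ∀ l : Fin (2 * m + 4), NeZero (p ^ (2 * m + 4 - (l : ℕ))) := fun l => inferInstance
  let PA : Dom → ℤ[X] := fun d => ofFn (2 * m + 3) (fun u => ((d.1 u : ℕ) : ℤ))
  let PB : Dom → ℤ[X] := fun d => ofFn (m + 3) (fun u => ((d.2 u : ℕ) : ℤ))
  let F : Dom → Cod := fun d l => (((PA d + PB d * Y).coeff l : ℤ) : ZMod _)
  have sumf : ∀ n : ℕ, 2 * ∑ u : Fin n, (n - (u : ℕ)) = n * (n + 1) := by
    intro n
    rw [Fin.sum_univ_eq_sum_range (fun u => n - u) n]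
    have := Finset.sum_range_reflect (fun u => u + 1) n
    have h2 : ∑ u ∈ Finset.range n, (n - u) = ∑ u ∈ Finset.range n, (u + 1) := by
      rw [← this]
      apply Finset.sum_congr rfl
      intro u hu
      have := Finset.mem_range.1 hu
      omega
    rw [h2]
    clear this h2
    induction n with
    | zero => simp
    | succ k ih => rw [Finset.sum_range_succ, mul_add, ih]; ring
  have hcard : Fintype.card Cod < Fintype.card Dom := by
    simp only [Dom, Cod, Fintype.card_prod, Fintype.card_pi, ZMod.card, Fintype.card_fin,
      Finset.prod_pow_eq_pow_sum]
    rw [← pow_add]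
    apply Nat.pow_lt_pow_right (by omega)
    have h1 := sumf (2 * m + 3)
    have h2 := sumf (m + 3)
    have h3 := sumf (2 * m + 4)
    nlinarith
  obtain ⟨d, e, hne, heq⟩ := Fintype.exists_ne_map_eq_of_card_lt F hcard
  have cA : ∀ d u (h : u < 2 * m + 3), (PA d).coeff u = ((d.1 ⟨u, h⟩ : ℕ) : ℤ) := by
    intro d u h
    exact ofFn_coeff_eq_val_of_lt _ h
  have cA0 : ∀ d u, 2 * m + 3 ≤ u → (PA d).coeff u = 0 := by
    intro d u h
    exact ofFn_coeff_eq_zero_of_ge _ h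
  have cB : ∀ d u (h : u < m + 3), (PB d).coeff u = ((d.2 ⟨u, h⟩ : ℕ) : ℤ) := by
    intro d u h
    exact ofFn_coeff_eq_val_of_lt _ h
  have cB0 : ∀ d u, m + 3 ≤ u → (PB d).coeff u = 0 := by
    intro d u h
    exact ofFn_coeff_eq_zero_of_ge _ h
  refine ⟨PA d - PA e, PB d - PB e, ?_, ?_, ?_, ?_, ?_, ?_⟩
  · by_contra! hcon
    apply hne
    obtain ⟨h1, h2⟩ := hcon
    refine Prod.ext ?_ ?_
    · ext ⟨u, hu⟩
      have := congrArg (fun P => P.coeff u) h1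
      simp only [coeff_sub, cA _ _ hu, coeff_zero] at this
      omega
    · ext ⟨u, hu⟩
      have := congrArg (fun P => P.coeff u) h2
      simp only [coeff_sub, cB _ _ hu, coeff_zero] at this
      omega
  · intro u
    by_cases hu : u < 2 * m + 3
    · rw [coeff_sub, cA _ _ hu, cA _ _ hu, abs_le]
      have h1 := (d.1 ⟨u, hu⟩).2
      have h2 := (e.1 ⟨u, hu⟩).2
      zify at h1 h2
      constructor <;> linarith [Int.natCast_nonneg (d.1 ⟨u, hu⟩ : ℕ), Int.natCast_nonneg (e.1 ⟨u, hu⟩ : ℕ)]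
    · rw [coeff_sub, cA0 _ _ (by omega), cA0 _ _ (by omega)]; simp
  · intro u hu
    rw [coeff_sub, cA0 _ _ hu, cA0 _ _ hu, sub_zero]
  · intro u
    by_cases hu : u < m + 3
    · rw [coeff_sub, cB _ _ hu, cB _ _ hu, abs_le]
      have h1 := (d.2 ⟨u, hu⟩).2
      have h2 := (e.2 ⟨u, hu⟩).2
      zify at h1 h2
      constructor <;> linarith [Int.natCast_nonneg (d.2 ⟨u, hu⟩ : ℕ), Int.natCast_nonneg (e.2 ⟨u, hu⟩ : ℕ)]
    · rw [coeff_sub, cB0 _ _ (by omega), cB0 _ _ (by omega)]; simp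
  · intro u hu
    rw [coeff_sub, cB0 _ _ hu, cB0 _ _ hu, sub_zero]
  · intro l hl
    have h := congrFun heq ⟨l, hl⟩
    simp only [F] at h
    rw [ZMod.intCast_eq_intCast_iff_dvd_sub] at h
    have h' := (dvd_neg (α := ℤ)).2 h
    push_cast at h'
    have e1 : (PA d - PA e + (PB d - PB e) * Y).coeff l
        = -((PA e + PB e * Y).coeff l - (PA d + PB d * Y).coeff l) := by
      rw [← coeff_sub, ← coeff_neg]
      congr 1
      ring
    rw [e1]
    exact h'

lemma aux_newton (G : ℤ[X][X]) (q a0 b0 v : ℤ)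
    (hv : q ∣ 1 - v * (derivative G).evalEval a0 b0) (k : ℕ) :
    ∃ Y : ℤ[X], ∀ t b : ℤ, q ∣ b - b0 → G.evalEval (a0 + q * t) b = 0 →
      q ^ (k + 1) ∣ Y.eval (q * t) - b := by
  induction k with
  | zero =>
    refine ⟨C b0, fun t b hb _ => ?_⟩
    rw [zero_add, pow_one, eval_C, dvd_sub_comm]
    exact hb
  | succ k ih =>
    obtain ⟨Y, hY⟩ := ih
    refine ⟨Y - C v * (G.map (compRingHom (C a0 + X))).eval Y, fun t b hb hG => ?_⟩
    have hd := hY t b hb hG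
    have e1 : ((G.map (compRingHom (C a0 + X))).eval Y).eval (q * t)
        = (G.map (evalRingHom (a0 + q * t))).eval (Y.eval (q * t)) := by
      rw [eval_map, eval_map, ← coe_evalRingHom, hom_eval₂]
      congr 1
      ext x <;> simp
    rw [← map_evalRingHom_eval] at hG
    set P := G.map (evalRingHom (a0 + q * t)) with hP
    obtain ⟨c, hc⟩ := binomExpansion P b (Y.eval (q * t) - b)
    rw [add_sub_cancel, hG] at hc
    rw [eval_sub, eval_mul, eval_C, e1, hc]
    set δ := Y.eval (q * t) - b with hδ
    have hqδ : q ∣ δ := (dvd_pow_self q (by omega)).trans hd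
    have e2 : P.derivative.eval b = (derivative G).evalEval (a0 + q * t) b := by
      rw [← map_evalRingHom_eval, hP, derivative_map]
    have e3 : q ∣ P.derivative.eval b - (derivative G).evalEval a0 b0 := by
      have h1 : q ∣ P.derivative.eval b - P.derivative.eval b0 :=
        hb.trans (sub_dvd_eval_sub _ _ _)
      have h2 : q ∣ P.derivative.eval b0 - (derivative G).evalEval a0 b0 := by
        rw [hP, derivative_map, map_evalRingHom_eval]
        refine Dvd.dvd.trans ?_ (sub_dvd_eval_sub _ _ _)
        simp
      have := dvd_add h1 h2
      simpa using this
    have e4 : q ∣ 1 - v * P.derivative.eval b - v * c * δ := by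
      obtain ⟨x, hx⟩ := hv
      obtain ⟨y, hy⟩ := e3
      obtain ⟨z, hz⟩ := hqδ
      refine ⟨x - v * y - v * c * z, ?_⟩
      rw [hz]
      linear_combination hx - v * hy
    have : Y.eval (q * t) - v * (0 + P.derivative.eval b * δ + c * δ ^ 2) - b
        = δ * (1 - v * P.derivative.eval b - v * c * δ) := by
      rw [hδ]; ring
    rw [this, pow_succ]
    exact mul_dvd_mul hd e4

lemma aux_size (P : ℤ[X]) : ∃ c : ℕ, ∀ m, P.natDegree ≤ m → ∀ a : ℤ, |P.eval a| ≤ c * (1 + |a|) ^ m := by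
  refine ⟨∑ i ∈ Finset.range (P.natDegree + 1), (P.coeff i).natAbs, fun m hm a => ?_⟩
  rw [eval_eq_sum_range]
  refine (Finset.abs_sum_le_sum_abs _ _).trans ?_
  push_cast
  rw [Finset.sum_mul]
  apply Finset.sum_le_sum
  intro i hi
  rw [abs_mul, abs_pow]
  apply mul_le_mul_of_nonneg_left _ (abs_nonneg _)
  have h0 := abs_nonneg a
  calc |a| ^ i ≤ (1 + |a|) ^ i := by gcongr; linarith
    _ ≤ (1 + |a|) ^ m := by
      apply pow_le_pow_right₀ (by linarith)
      have := Finset.mem_range.1 hi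
      omega

lemma aux_root_size (G : ℤ[X][X]) (hG : G.Monic) : ∃ m c : ℕ, ∀ a b : ℤ, G.evalEval a b = 0 →
    |b| ≤ c * (1 + |a|) ^ m := by
  choose c hc using aux_size
  let m := ∑ i ∈ Finset.range G.natDegree, (G.coeff i).natDegree
  refine ⟨m, ∑ i ∈ Finset.range G.natDegree, c (G.coeff i), fun a b h => ?_⟩
  have h1 : b ^ G.natDegree + ∑ i ∈ Finset.range G.natDegree, (G.coeff i).eval a * b ^ i = 0 := by
    conv at h => 
      enter [1]
      rw [hG.as_sum]
    simpa [evalEval, eval_finsetSum] using h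
  have hpos : (0:ℤ) ≤ (∑ i ∈ Finset.range G.natDegree, c (G.coeff i) : ℕ) * (1 + |a|) ^ m := by positivity
  rcases eq_or_ne b 0 with rfl | hb
  · simpa using hpos
  have hb1 : 1 ≤ |b| := Int.one_le_abs hb
  have hn : G.natDegree ≠ 0 := by
    intro h0
    rw [h0] at h1
    simp at h1
  obtain ⟨n, hn⟩ := Nat.exists_eq_succ_of_ne_zero hn
  have h2 : |b| ^ n * |b| ≤ |b| ^ n * ((∑ i ∈ Finset.range G.natDegree, c (G.coeff i) : ℕ) * (1 + |a|) ^ m) := by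
    calc |b| ^ n * |b| = |∑ i ∈ Finset.range G.natDegree, (G.coeff i).eval a * b ^ i| := by
          rw [← pow_succ, ← Nat.succ_eq_add_one, ← hn, ← abs_pow, eq_neg_of_add_eq_zero_left h1, abs_neg]
      _ ≤ ∑ i ∈ Finset.range G.natDegree, |(G.coeff i).eval a * b ^ i| := Finset.abs_sum_le_sum_abs _ _
      _ ≤ ∑ i ∈ Finset.range G.natDegree, (c (G.coeff i) * (1 + |a|) ^ m) * |b| ^ n := by
          apply Finset.sum_le_sum
          intro i hi
          rw [abs_mul, abs_pow]
          apply mul_le_mul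
          · apply hc
            exact Finset.single_le_sum (f := fun i => (G.coeff i).natDegree) (fun _ _ => Nat.zero_le _) hi
          · apply pow_le_pow_right₀ hb1
            have := Finset.mem_range.1 hi
            omega
          · positivity
          · positivity
      _ = _ := by
        rw [← Finset.sum_mul, ← Finset.sum_mul]; push_cast; ring
  exact le_of_mul_le_mul_left h2 (by positivity)

lemma aux_small (P : ℤ[X]) (w R p : ℕ) (hw : 0 < w) (hP : ∀ u, |P.coeff u| ≤ (p : ℤ) ^ (w - u))
    (hP0 : ∀ u, w ≤ u → P.coeff u = 0) (t : ℕ) (ht : t ≤ R) :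
    |P.eval ((p : ℤ) * t)| ≤ (p : ℤ) ^ w * ∑ u ∈ Finset.range w, (R : ℤ) ^ u := by
  have hdeg : P.natDegree < w := by
    by_contra! h
    have := hP0 _ h
    rw [coeff_natDegree, leadingCoeff_eq_zero] at this
    subst this
    simp at h
    omega
  rw [eval_eq_sum_range' hdeg, Finset.mul_sum]
  refine (Finset.abs_sum_le_sum_abs _ _).trans (Finset.sum_le_sum fun u hu => ?_)
  have hu' := Finset.mem_range.1 hu
  rw [abs_mul, abs_of_nonneg (a := ((p : ℤ) * t) ^ u) (by positivity), mul_pow]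
  have : (p : ℤ) ^ w = p ^ (w - u) * p ^ u := by rw [← pow_add]; congr 1; omega
  rw [this, mul_assoc]
  gcongr
  · exact hP u

lemma aux_eval_dvd (Q : ℤ[X]) (q : ℤ) (k : ℕ) (h : ∀ l < k, q ^ (k - l) ∣ Q.coeff l) (t : ℤ) :
    q ^ k ∣ Q.eval (q * t) := by
  rw [eval_eq_sum_range]
  apply Finset.dvd_sum
  intro l _
  rw [mul_pow, ← mul_assoc]
  apply Dvd.dvd.mul_right
  by_cases hl : l < k
  · have : q ^ k = q ^ (k - l) * q ^ l := by rw [← pow_add]; congr 1; omega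
    rw [this]
    exact mul_dvd_mul_right (h l hl) _
  · exact (pow_dvd_pow q (by omega)).mul_left _

lemma aux_degree (G : ℤ[X][X]) : ∃ S : ℕ, ∀ w : ℕ, ∀ A B : ℤ[X], A.natDegree ≤ w → B.natDegree ≤ w →
    (eval A (G.scaleRoots B)).natDegree ≤ S + G.natDegree * w := by
  refine ⟨∑ i ∈ Finset.range (G.natDegree + 1), (G.coeff i).natDegree, fun w A B hA hB => ?_⟩
  rw [eval_eq_sum_range, natDegree_scaleRoots]
  apply natDegree_sum_le_of_forall_le
  intro i hi
  rw [coeff_scaleRoots]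
  have h1 : (G.coeff i).natDegree ≤ ∑ i ∈ Finset.range (G.natDegree + 1), (G.coeff i).natDegree :=
    Finset.single_le_sum (f := fun i => (G.coeff i).natDegree) (fun _ _ => Nat.zero_le _) hi
  have hi' := Finset.mem_range.1 hi
  have h2 : (B ^ (G.natDegree - i)).natDegree ≤ (G.natDegree - i) * w :=
    natDegree_pow_le.trans (Nat.mul_le_mul_left _ hB)
  have h3 : (A ^ i).natDegree ≤ i * w := natDegree_pow_le.trans (Nat.mul_le_mul_left _ hA)
  have h4 : (G.natDegree - i) * w + i * w = G.natDegree * w := by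
    rw [← add_mul]; congr 1; omega
  refine natDegree_mul_le.trans ?_
  have := natDegree_mul_le (p := G.coeff i) (q := B ^ (G.natDegree - i))
  omega

lemma aux_core (G : ℤ[X][X]) (hG : G.Monic) (U V : ℤ[X][X]) (D : ℤ[X]) (hD : D ≠ 0)
    (hUV : U * G + V * derivative G = C D)
    (hroot : ∀ A B : ℤ[X], B ≠ 0 → eval A (G.scaleRoots B) ≠ 0)
    (hall : ∀ a : ℤ, ∃ b : ℤ, G.evalEval a b = 0) (a0 : ℤ) (ha0 : D.eval a0 ≠ 0) : False := by
  classical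
  choose b hb using hall
  obtain ⟨m, c, hc⟩ := aux_root_size G hG
  obtain ⟨S, hS⟩ := aux_degree G
  set n := G.natDegree with hn
  set w := 2 * m + 3 with hw
  set D1 := S + n * w + w with hD1
  set R := n * D1 + 1 with hR
  set K1 := ∑ u ∈ Finset.range w, R ^ u with hK1
  set K2 := ∑ u ∈ Finset.range (m + 3), R ^ u with hK2
  set M := 1 + a0.natAbs + R with hM
  set K := K1 + K2 * (c * M ^ m) with hK
  obtain ⟨p, hple, hp⟩ := Nat.exists_infinite_primes (K + (D.eval a0).natAbs + 1)
  have : Fact p.Prime := ⟨hp⟩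
  have hpD : ¬ (p : ℤ) ∣ D.eval a0 := by
    intro h
    have := Nat.le_of_dvd (Int.natAbs_pos.2 ha0) (Int.natCast_dvd.1 h)
    omega
  have hp1 : (1 : ℤ) ≤ p := by exact_mod_cast hp.one_le
  let bb : ℕ → ℤ := fun t => b (a0 + p * t)
  have hbb : ∀ t : ℕ, G.evalEval (a0 + p * t) (bb t) = 0 := fun t => hb _
  have hmod : ∀ t : ℕ, (p : ℤ) ∣ G.evalEval a0 (bb t) := by
    intro t
    have h : (a0 + p * t) - a0 ∣ G.evalEval (a0 + p * t) (bb t) - G.evalEval a0 (bb t) :=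
      sub_dvd_eval_sub _ _ _
    rw [hbb, zero_sub, dvd_neg, add_sub_cancel_left] at h
    exact (dvd_mul_right _ _).trans h
  let g : (ZMod p)[X] := (G.map (evalRingHom a0)).map (Int.castRingHom (ZMod p))
  have hgm : g.Monic := (hG.map _).map _
  have hgdeg : g.natDegree = n := by
    rw [(hG.map _).natDegree_map, hG.natDegree_map]
  have hmaps : ∀ t ∈ Finset.range R, ((bb t : ℤ) : ZMod p) ∈ g.roots.toFinset := by
    intro t _
    rw [Multiset.mem_toFinset, mem_roots hgm.ne_zero, IsRoot.def]
    have h : g.eval ((Int.castRingHom (ZMod p)) (bb t)) = _ := eval_map_apply _ _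
    rw [map_evalRingHom_eval] at h
    rw [eq_intCast, eq_intCast] at h
    rw [h, ZMod.intCast_zmod_eq_zero_iff_dvd]
    exact hmod t
  have hcardr : g.roots.toFinset.card ≤ n :=
    (Multiset.toFinset_card_le _).trans ((card_roots' g).trans hgdeg.le)
  obtain ⟨y, -, hy⟩ := Finset.exists_lt_card_fiber_of_mul_lt_card_of_maps_to (n := D1) hmaps (by
    rw [Finset.card_range]
    calc _ ≤ n * D1 := Nat.mul_le_mul_right _ hcardr
      _ < R := by omega)
  set T := (Finset.range R).filter (fun t => ((bb t : ℤ) : ZMod p) = y) with hT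
  obtain ⟨t0, ht0⟩ : T.Nonempty := Finset.card_pos.1 (by omega)
  have ht0' := (Finset.mem_filter.1 ht0).2
  have hcong : ∀ t ∈ T, (p : ℤ) ∣ bb t - bb t0 := by
    intro t ht
    have := (Finset.mem_filter.1 ht).2
    rw [← ZMod.intCast_eq_intCast_iff_dvd_sub, this, ht0']
  have hder : ¬ (p : ℤ) ∣ (derivative G).evalEval a0 (bb t0) := by
    intro h
    apply hpD
    have e := congrArg (fun P => P.evalEval a0 (bb t0)) hUV
    simp only [evalEval_add, evalEval_mul, evalEval_C] at e
    rw [← e]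
    exact dvd_add ((hmod t0).mul_left _) (h.mul_left _)
  obtain ⟨v, hv⟩ : ∃ v : ℤ, (p : ℤ) ∣ 1 - v * (derivative G).evalEval a0 (bb t0) := by
    obtain ⟨x, z, hxz⟩ := ((Nat.prime_iff_prime_int.1 hp).irreducible.coprime_iff_not_dvd).2 hder
    exact ⟨z, x, by linear_combination -hxz⟩
  obtain ⟨Y, hY⟩ := aux_newton G p a0 (bb t0) v hv (2 * m + 3)
  obtain ⟨A, B, hAB, hA, hA0, hB, hB0, hdiv⟩ := aux_pigeon p m hp.two_le Y
  have hzero : ∀ t ∈ T, A.eval ((p : ℤ) * t) + B.eval ((p : ℤ) * t) * bb t = 0 := by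
    intro t ht
    have htR : t ≤ R := (Finset.mem_range.1 (Finset.mem_filter.1 ht).1).le
    have d1 := aux_eval_dvd _ (p : ℤ) _ hdiv t
    have d2 := (hY t (bb t) (hcong t ht) (hbb t)).mul_left (B.eval ((p : ℤ) * t))
    have d3 := dvd_sub d1 d2
    have e3 : (A + B * Y).eval ((p : ℤ) * t) - B.eval ((p : ℤ) * t) * (Y.eval ((p : ℤ) * t) - bb t)
        = A.eval ((p : ℤ) * t) + B.eval ((p : ℤ) * t) * bb t := by
      rw [eval_add, eval_mul]; ring
    rw [e3] at d3
    apply Int.eq_zero_of_abs_lt_dvd d3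
    have s1 := aux_small A w R p (by omega) hA hA0 t htR
    have s2 := aux_small B (m + 3) R p (by omega) hB hB0 t htR
    have s3 := hc _ _ (hbb t)
    have s4 : 1 + |a0 + p * t| ≤ (M : ℤ) * p := by
      have h1 : |a0 + p * t| ≤ |a0| + p * t := by
        refine (abs_add_le _ _).trans ?_
        rw [abs_of_nonneg (a := (p : ℤ) * t) (by positivity)]
      have h2 : (t : ℤ) ≤ R := by exact_mod_cast htR
      rw [hM]
      push_cast
      nlinarith [abs_nonneg a0]
    have s5 : |bb t| ≤ c * ((M : ℤ) * p) ^ m := by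
      refine s3.trans ?_
      gcongr
    calc |A.eval ((p : ℤ) * t) + B.eval ((p : ℤ) * t) * bb t|
        ≤ |A.eval ((p : ℤ) * t)| + |B.eval ((p : ℤ) * t)| * |bb t| := by
          rw [← abs_mul]; exact abs_add_le _ _
      _ ≤ (p : ℤ) ^ w * ∑ u ∈ Finset.range w, (R : ℤ) ^ u +
          ((p : ℤ) ^ (m + 3) * ∑ u ∈ Finset.range (m + 3), (R : ℤ) ^ u) * (c * ((M : ℤ) * p) ^ m) := by
          gcongr
      _ = (p : ℤ) ^ w * K := by
          rw [hK, hK1, hK2, hw]; push_cast; ring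
      _ < (p : ℤ) ^ w * p := by
          have : (K : ℤ) < p := by exact_mod_cast (by omega)
          gcongr
      _ = (p : ℤ) ^ (2 * m + 3 + 1) := by rw [hw]; ring
  set A' := -(A.comp (X - C a0)) with hA'
  set B' := B.comp (X - C a0) with hB'
  let T' : Finset ℤ := T.image (fun t : ℕ => a0 + (p : ℤ) * t)
  have hT'card : T'.card = T.card := by
    apply Finset.card_image_of_injective
    intro x z hxz
    have h0 : p ≠ 0 := hp.ne_zero
    simpa [h0] using hxz
  have hz' : ∀ a ∈ T', ∃ β, G.evalEval a β = 0 ∧ A'.eval a = B'.eval a * β := by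
    intro a ha
    obtain ⟨t, ht, rfl⟩ := Finset.mem_image.1 ha
    refine ⟨bb t, hbb t, ?_⟩
    have := hzero t ht
    simp only [hA', hB', eval_neg, eval_comp, eval_sub, eval_X, eval_C, add_sub_cancel_left]
    linarith
  have degA : A.natDegree ≤ w := natDegree_le_iff_coeff_eq_zero.2 fun u hu => hA0 u hu.le
  have degB : B.natDegree ≤ w := natDegree_le_iff_coeff_eq_zero.2 fun u hu => hB0 u (by omega)
  have degA' : A'.natDegree ≤ w := by
    rw [hA', natDegree_neg, natDegree_comp, natDegree_X_sub_C, mul_one]; exact degA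
  have degB' : B'.natDegree ≤ w := by
    rw [hB', natDegree_comp, natDegree_X_sub_C, mul_one]; exact degB
  have compz : ∀ P : ℤ[X], P.comp (X - C a0) = 0 → P = 0 := by
    intro P h
    have := congrArg (fun Q => Q.comp (X + C a0)) h
    simpa [comp_assoc] using this
  have hB'0 : B' ≠ 0 := by
    intro h
    have hA'z : A' = 0 := by
      apply eq_zero_of_natDegree_lt_card_of_eval_eq_zero' A' T'
      · intro a ha
        obtain ⟨β, -, h2⟩ := hz' a ha
        rw [h2, h]; simp
      · omega
    rcases hAB with h1 | h1
    · exact h1 (compz A (by simpa [hA'] using hA'z))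
    · exact h1 (compz B h)
  apply hroot A' B' hB'0
  apply eq_zero_of_natDegree_lt_card_of_eval_eq_zero' _ T'
  · intro a ha
    obtain ⟨β, h1, h2⟩ := hz' a ha
    have h3 := scaleRoots_eval₂_mul (p := G) (evalRingHom a) β B'
    rw [← eval_map (evalRingHom a) (p := G), map_evalRingHom_eval, h1, mul_zero, coe_evalRingHom, ← h2] at h3
    rw [← h3, ← coe_evalRingHom, ← eval₂_id, hom_eval₂]
    simp
  · have := hS w A' B' degA' degB'
    omega

lemma aux_frac : ∃ alg : Algebra ℤ[X] (RatFunc ℚ), 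
    (@algebraMap _ _ _ _ alg = (algebraMap ℚ[X] (RatFunc ℚ)).comp (mapRingHom (Int.castRingHom ℚ))) ∧
    @IsFractionRing ℤ[X] _ (RatFunc ℚ) _ alg := by
  let alg : Algebra ℤ[X] (RatFunc ℚ) :=
    ((algebraMap ℚ[X] (RatFunc ℚ)).comp (mapRingHom (Int.castRingHom ℚ))).toAlgebra
  have e : algebraMap ℤ[X] (RatFunc ℚ) = (algebraMap ℚ[X] (RatFunc ℚ)).comp (mapRingHom (Int.castRingHom ℚ)) := rfl
  have inj : Function.Injective (algebraMap ℤ[X] (RatFunc ℚ)) := by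
    rw [e]
    exact (RatFunc.algebraMap_injective ℚ).comp (map_injective _ Int.cast_injective)
  have : FaithfulSMul ℤ[X] (RatFunc ℚ) := (faithfulSMul_iff_algebraMap_injective _ _).2 inj
  refine ⟨alg, e, ?_⟩
  have clear : ∀ P : ℚ[X], ∃ (d : ℤ) (Q : ℤ[X]), d ≠ 0 ∧ Q.map (Int.castRingHom ℚ) = C (d : ℚ) * P := by
    intro P
    obtain ⟨d, hd, h⟩ := IsLocalization.integerNormalization_spec (nonZeroDivisors ℤ) P
    refine ⟨d, _, nonZeroDivisors.ne_zero hd, h.trans ?_⟩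
    rw [← smul_eq_C_mul]
    ext i
    simp
  apply IsFractionRing.of_field
  intro z
  obtain ⟨P, Q, hQ, rfl⟩ := IsFractionRing.div_surjective (A := ℚ[X]) z
  obtain ⟨d1, P1, hd1, h1⟩ := clear P
  obtain ⟨d2, Q1, hd2, h2⟩ := clear Q
  refine ⟨C d2 * P1, C d1 * Q1, ?_⟩
  rw [e]
  simp only [RingHom.comp_apply, coe_mapRingHom, Polynomial.map_mul, h1, h2, map_C, Int.coe_castRingHom]
  have hQ' : algebraMap ℚ[X] (RatFunc ℚ) Q ≠ 0 := by
    simpa using nonZeroDivisors.ne_zero hQ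
  have hC : ∀ d : ℤ, d ≠ 0 → algebraMap ℚ[X] (RatFunc ℚ) (C (d : ℚ)) ≠ 0 := by
    intro d hd
    simpa using hd
  have c1 := hC d1 hd1
  have c2 := hC d2 hd2
  simp only [map_mul]
  field_simp

theorem hilbertian_no_root_specialization (f : Polynomial (Polynomial ℚ))
    (hdeg : 1 ≤ f.natDegree)
    (hroot : ∀ r : RatFunc ℚ,
      ¬ (f.map (algebraMap (Polynomial ℚ) (RatFunc ℚ))).IsRoot r) :
    ∃ a : ℚ, ∀ x : ℚ, ¬ (f.map (Polynomial.evalRingHom a)).IsRoot x := by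
  classical
  by_contra! hcon
  obtain ⟨alg, e, hfrac⟩ := aux_frac
  set ι := algebraMap ℚ[X] (RatFunc ℚ) with hι
  set μ : ℤ[X] →+* ℚ[X] := mapRingHom (Int.castRingHom ℚ) with hμ
  set κ := algebraMap ℤ[X] (RatFunc ℚ) with hκ
  have ιinj : Function.Injective ι := RatFunc.algebraMap_injective ℚ
  have κinj : Function.Injective κ := IsFractionRing.injective _ _
  have μinj : Function.Injective μ := map_injective _ Int.cast_injective
  have clear : ∀ P : (RatFunc ℚ)[X], ∃ (d : ℤ[X]) (Q : ℤ[X][X]), d ≠ 0 ∧ Q.map κ = C (κ d) * P := by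
    intro P
    obtain ⟨d, hd, h⟩ := IsLocalization.integerNormalization_spec (nonZeroDivisors ℤ[X]) P
    refine ⟨d, _, nonZeroDivisors.ne_zero hd, h.trans ?_⟩
    rw [← smul_eq_C_mul]
    ext i
    rw [coeff_smul, coeff_smul, Algebra.smul_def, smul_eq_mul]
  obtain ⟨d, f1, hd, hf1⟩ := clear (f.map ι)
  have hf1' : f1.map μ = C (μ d) * f := by
    apply map_injective ι ιinj
    rw [map_map, ← e, hf1, Polynomial.map_mul, map_C, e]
    rfl
  have hμd : μ d ≠ 0 := (map_ne_zero_iff μ μinj).2 hd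
  have hf1deg : 1 ≤ f1.natDegree := by
    rw [← natDegree_map_eq_of_injective μinj f1, hf1', natDegree_C_mul hμd]
    exact hdeg
  have hf10 : f1 ≠ 0 := by
    rintro rfl
    simp at hf1deg
  set g0 := integralNormalization f1 with hg0
  have g0m : g0.Monic := monic_integralNormalization hf10
  have hκlc : κ f1.leadingCoeff ≠ 0 := by
    rw [map_ne_zero_iff κ κinj]; exact leadingCoeff_ne_zero.2 hf10
  have g0root : ∀ z, eval₂ κ z g0 ≠ 0 := by
    intro z hz
    have h := integralNormalization_eval₂_leadingCoeff_mul hf1deg κ (z / κ f1.leadingCoeff)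
    rw [mul_div_cancel₀ _ hκlc, ← hg0, hz] at h
    have h2 : eval₂ κ (z / κ f1.leadingCoeff) f1 = 0 := by
      rcases mul_eq_zero.1 h.symm with h | h
      · exact absurd h (pow_ne_zero _ hκlc)
      · exact h
    rw [← eval_map, hf1, eval_mul, eval_C, mul_eq_zero] at h2
    rcases h2 with h2 | h2
    · exact hd ((map_eq_zero_iff κ κinj).1 h2)
    · exact hroot _ h2
  have g0spec : ∀ a : ℤ, ∃ x : ℚ, eval₂ ((evalRingHom (a : ℚ)).comp μ) x g0 = 0 := by
    intro a
    obtain ⟨x, hx⟩ := hcon a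
    refine ⟨((evalRingHom (a : ℚ)).comp μ) f1.leadingCoeff * x, ?_⟩
    rw [hg0, integralNormalization_eval₂_leadingCoeff_mul hf1deg, ← eval_map, ← map_map, hf1',
      Polynomial.map_mul, eval_mul, IsRoot.def.1 hx, mul_zero, mul_zero]
  have g0map0 : g0.map κ ≠ 0 := (g0m.map κ).ne_zero
  set r := UniqueFactorizationMonoid.radical (g0.map κ) with hr
  have hrd : r ∣ g0.map κ := UniqueFactorizationMonoid.radical_dvd_self
  have hrsq : Squarefree r := UniqueFactorizationMonoid.squarefree_radical
  have hr0 : r ≠ 0 := hrsq.ne_zero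
  obtain ⟨N, hN⟩ := UniqueFactorizationMonoid.exists_dvd_radical_self_pow g0map0
  rw [← hr] at hN
  obtain ⟨G, hGr⟩ := IsIntegrallyClosed.eq_map_mul_C_of_dvd (RatFunc ℚ) g0m hrd
  rw [← hκ] at hGr
  have hlc : r.leadingCoeff ≠ 0 := leadingCoeff_ne_zero.2 hr0
  have hGκm : (G.map κ).Monic := by
    have := congrArg leadingCoeff hGr
    rw [leadingCoeff_mul, leadingCoeff_C] at this
    exact mul_right_cancel₀ hlc (this.trans (one_mul _).symm)
  have hGm : G.Monic := monic_of_injective κinj hGκm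
  have hassoc : Associated (G.map κ) r := by
    refine ⟨(isUnit_C.2 (isUnit_iff_ne_zero.2 hlc)).unit, ?_⟩
    simpa using hGr
  have hGdvd : G.map κ ∣ g0.map κ := hassoc.dvd.trans hrd
  have hg0G : g0 ∣ G ^ N := by
    rw [← map_dvd_map κ κinj g0m, Polynomial.map_pow]
    exact hN.trans (hassoc.symm.pow_pow).dvd
  have hsep : (G.map κ).Separable :=
    PerfectField.separable_iff_squarefree.2 (hrsq.squarefree_of_dvd hassoc.dvd)
  obtain ⟨U, V, hUV⟩ := hsep
  obtain ⟨d1, U1, hd1, hU1⟩ := clear U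
  obtain ⟨d2, V1, hd2, hV1⟩ := clear V
  have hD : d1 * d2 ≠ 0 := mul_ne_zero hd1 hd2
  obtain ⟨a0, ha0⟩ : ∃ a0 : ℤ, (d1 * d2).eval a0 ≠ 0 := by
    by_contra! h
    exact hD (Polynomial.funext (by simpa using h))
  refine aux_core G hGm (C d2 * U1) (C d1 * V1) (d1 * d2) hD ?_ ?_ ?_ a0 ha0
  · apply map_injective κ κinj
    rw [Polynomial.map_add, Polynomial.map_mul, Polynomial.map_mul, Polynomial.map_mul,
      Polynomial.map_mul, hU1, hV1, map_C, map_C, map_C, ← derivative_map, map_mul, C_mul]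
    linear_combination (C (κ d1) * C (κ d2)) * hUV
  · intro A B hB h
    have hκB : κ B ≠ 0 := (map_ne_zero_iff κ κinj).2 hB
    have h1 := scaleRoots_eval₂_mul (p := G) κ (κ A / κ B) B
    rw [mul_div_cancel₀ _ hκB] at h1
    have h2 : eval₂ κ (κ A) (G.scaleRoots B) = 0 := by
      rw [eval₂_at_apply, h, map_zero]
    rw [h2] at h1
    rcases mul_eq_zero.1 h1.symm with h3 | h3
    · exact pow_ne_zero _ hκB h3
    · apply g0root (κ A / κ B)
      rw [← eval_map] at h3 ⊢
      exact eval_eq_zero_of_dvd_of_eval_eq_zero hGdvd h3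
  · intro a
    obtain ⟨x, hx⟩ := g0spec a
    set φ := (evalRingHom (a : ℚ)).comp μ with hφ
    have hφ' : φ = (Int.castRingHom ℚ).comp (evalRingHom a) := by
      ext <;> simp [hφ, hμ]
    have h1 : eval₂ φ x G = 0 := by
      have h2 := eval₂_eq_zero_of_dvd_of_eval₂_eq_zero φ x hg0G hx
      rw [eval₂_pow] at h2
      exact eq_zero_of_pow_eq_zero h2
    rw [hφ', ← eval_map, ← map_map] at h1
    have h2 : aeval x (G.map (evalRingHom a)) = 0 := by
      rw [aeval_def, ← eval_map]
      exact h1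
    obtain ⟨b, hb⟩ := isInteger_of_is_root_of_monic (hGm.map _) h2
    refine ⟨b, ?_⟩
    rw [← map_evalRingHom_eval]
    rw [← hb] at h1
    have h3 := eval_map_apply (f := Int.castRingHom ℚ) (p := G.map (evalRingHom a)) b
    have h4 : (Int.castRingHom ℚ) ((G.map (evalRingHom a)).eval b) = 0 := h3.symm.trans h1
    simpa using h4
end
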